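/- Suppose B₀ satisfies the vanishing-field assumption and b:(0,∞)→(0,∞) satisfies κ·b(κ)→∞ and b(κ)→0 as κ→∞. Then, as κ→∞, ∫_Ω g( b(κ) κ |B₀(x)| ) dx = κ^{-1} ∫_Γ ( b(κ)|∇B₀(x)| )^{1/3} E( b(κ)|∇B₀(x)| ) ds(x) + o( b(κ)^{-1} κ^{-1} ); that is, b(κ)·κ times the difference of the two sides tends to 0 as κ→∞. -/

import Mathlib

open MeasureTheory Real Set Filter Topology

noncomputable section

/-- The open square `Q_r = (-r/2, r/2) × (-r/2, r/2)`. -/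
def Qsq (r : ℝ) : Set (ℝ × ℝ) := Ioo (-r/2) (r/2) ×ˢ Ioo (-r/2) (r/2)

/-- The vertical strip `S_R = (-R/2, R/2) × ℝ`. -/
def Strip (R : ℝ) : Set (ℝ × ℝ) := Ioo (-R/2) (R/2) ×ˢ (univ : Set ℝ)

/-- The magnetic potential `A₀(x) = (-x₂/2, x₁/2)` of the constant unit magnetic field. -/
def A₀ (x : ℝ × ℝ) : ℝ × ℝ := (-x.2 / 2, x.1 / 2)

/-- The magnetic potential `A_van(x) = (-x₂²/2, 0)` generating the field `B(x) = x₂`. -/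
def Avan (x : ℝ × ℝ) : ℝ × ℝ := (-x.2 ^ 2 / 2, 0)

/-- The magnetic gradient energy density `|(∇ - iA)u|²` at `x`. -/
def magGradSq (A : ℝ × ℝ → ℝ × ℝ) (u : ℝ × ℝ → ℂ) (x : ℝ × ℝ) : ℝ :=
  ‖fderiv ℝ u x (1, 0) - Complex.I * ((A x).1 : ℂ) * u x‖ ^ 2 +
  ‖fderiv ℝ u x (0, 1) - Complex.I * ((A x).2 : ℂ) * u x‖ ^ 2

/-- The Ginzburg–Landau functional `F_{b,Q_r}` on the square `Q_r`. -/
def Fsq (b r : ℝ) (u : ℝ × ℝ → ℂ) : ℝ :=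
  ∫ x in Qsq r, (b * magGradSq A₀ u x - ‖u x‖ ^ 2 + ‖u x‖ ^ 4 / 2)

/-- (Smooth surrogate of) membership in `H¹(Q_r; ℂ)`. -/
def MemH1sq (u : ℝ × ℝ → ℂ) : Prop := ContDiff ℝ 1 u

/-- (Smooth surrogate of) membership in `H¹₀(Q_r; ℂ)`: vanishing on the boundary. -/
def MemH10sq (r : ℝ) (u : ℝ × ℝ → ℂ) : Prop :=
  ContDiff ℝ 1 u ∧ ∀ x ∈ frontier (Qsq r), u x = 0

/-- The Dirichlet ground-state energy `e_D(b, r)`. -/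
def eD (b r : ℝ) : ℝ := sInf (Fsq b r '' {u | MemH10sq r u})

/-- The Neumann ground-state energy `e_N(b, r)`. -/
def eN (b r : ℝ) : ℝ := sInf (Fsq b r '' {u | MemH1sq u})

/-- The energy density of the strip functional `𝓔_{L,R}` at `x`. -/
def stripDensity (L : ℝ) (u : ℝ × ℝ → ℂ) (x : ℝ × ℝ) : ℝ :=
  magGradSq Avan u x - L ^ (-(2:ℝ)/3) * ‖u x‖ ^ 2 + (L ^ (-(2:ℝ)/3) / 2) * ‖u x‖ ^ 4

/-- The strip functional `𝓔_{L,R}`. -/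
def Estrip (L R : ℝ) (u : ℝ × ℝ → ℂ) : ℝ := ∫ x in Strip R, stripDensity L u x

/-- (Surrogate of) membership in the space `H¹_{mag,0}(S_R)`. -/
def MemH1mag0 (R : ℝ) (u : ℝ × ℝ → ℂ) : Prop :=
  ContDiff ℝ 1 u ∧
  IntegrableOn (fun x => ‖u x‖ ^ 2) (Strip R) ∧
  IntegrableOn (magGradSq Avan u) (Strip R) ∧
  IntegrableOn (fun x => ‖u x‖ ^ 4) (Strip R) ∧
  ∀ x ∈ frontier (Strip R), u x = 0

/-- The ground-state energy `e_gs(L; R)` of the strip functional. -/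
def egs (L R : ℝ) : ℝ := sInf (Estrip L R '' {u | MemH1mag0 R u})

/-- `g : (0,∞) → ℝ` is the thermodynamic limit of the Dirichlet square energies. -/
def IsLimitG (g : ℝ → ℝ) : Prop :=
  ∀ b > 0, Tendsto (fun r => eD b r / r ^ 2) atTop (nhds (g b))

/-- `E : (0,∞) → ℝ` is the large-`R` limit of the strip energies. -/
def IsLimitE (E : ℝ → ℝ) : Prop :=
  ∀ L > 0, Tendsto (fun R => egs L R / R) atTop (nhds (E L))

/-- The Euclidean plane. -/
abbrev E2 := EuclideanSpace ℝ (Fin 2)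

/-- The magnetic gradient energy density `|(∇ - iA)ψ|²` at `x`. -/
def magGradSqE (A : E2 → E2) (ψ : E2 → ℂ) (x : E2) : ℝ :=
  ∑ i : Fin 2, ‖fderiv ℝ ψ x (EuclideanSpace.single i 1) - Complex.I * ((A x i : ℝ) : ℂ) * ψ x‖ ^ 2

/-- The two-dimensional curl `curl A = ∂₁A₂ - ∂₂A₁`. -/
def curl2 (A : E2 → E2) (x : E2) : ℝ :=
  fderiv ℝ A x (EuclideanSpace.single 0 1) 1 - fderiv ℝ A x (EuclideanSpace.single 1 1) 0

/-- The assumption on the magnetic field profile `B₀` (Assumption 1.1):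
`B₀` is smooth, `|B₀| + |∇B₀| ≥ c > 0` on the closure of `Ω`,
`Γ = {B₀ = 0} ∩ closure Ω` is a nonempty finite union of smooth curves,
and `Γ ∩ ∂Ω` is finite. -/
structure VanishingFieldAssumption (Ω : Set E2) (B₀ : E2 → ℝ) (Γ : Set E2) : Prop where
  smooth : ContDiff ℝ (⊤ : ℕ∞) B₀
  nondeg : ∃ c > (0:ℝ), ∀ x ∈ closure Ω, c ≤ |B₀ x| + ‖fderiv ℝ B₀ x‖
  zeroSet : Γ = {x ∈ closure Ω | B₀ x = 0}
  nonempty : Γ.Nonempty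
  curves : ∃ (n : ℕ) (γ : Fin n → ℝ → E2), 0 < n ∧ (∀ i, ContDiff ℝ (⊤ : ℕ∞) (γ i)) ∧
    Γ = ⋃ i, γ i '' Icc 0 1
  finiteBoundary : (Γ ∩ frontier Ω).Finite

/-!
Extend `g` by `-1/2` to `t ≤ 0` and put `G = ∫ g(|t|) dt`. Both terms of the comparison, multiplied
by `b(κ)κ`, converge to `G ∫_Γ ds / |∇B₀|`.

For the bulk term, with `t = b(κ)κ → ∞`, the measures `t g(t |B₀(x)|) dx` concentrate on `Γ`: near a
point of `Γ` the implicit function theorem turns `B₀` into a coordinate `s`, and the substitution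
`s ↦ s / t` produces `G` times the measure `ds / |∇B₀|`.

For the line term it suffices that `L^{4/3} E(L) → G` as `L → 0`. After rescaling, the strip energy
is a Ginzburg–Landau energy in a slowly varying field, which on a fixed square is nearly constant.
Cutting a strip state off with a window and averaging over the position of the window bounds its
energy from below by constant-field energies, hence by `G`; gluing Dirichlet states of squares
gives an upper bound by a Riemann sum of the constant-field energies, which tends to `G`.
-/

/-! ### Ginzburg–Landau energies of compactly supported functions -/

/-- The Ginzburg–Landau energy density `α|(∇-iA)u|² - μ|u|² + ν|u|⁴`; the parameters `α`, `μ`, `ν`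
are kept free so that the functionals on squares and on strips, and all their rescalings, are
instances of one family. -/
def glDensity (A : ℝ × ℝ → ℝ × ℝ) (α μ ν : ℝ) (u : ℝ × ℝ → ℂ) (x : ℝ × ℝ) : ℝ :=
  α * magGradSq A u x - μ * ‖u x‖ ^ 2 + ν * ‖u x‖ ^ 4

/-- The Ginzburg–Landau energy of `u` over the whole plane. -/
def glEnergy (A : ℝ × ℝ → ℝ × ℝ) (α μ ν : ℝ) (u : ℝ × ℝ → ℂ) : ℝ :=
  ∫ x, glDensity A α μ ν u x

/-- The trial functions of a Ginzburg–Landau problem with Dirichlet condition on `U`: `C¹` functions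
with compact support inside `U`. -/
structure IsAdmissible (U : Set (ℝ × ℝ)) (u : ℝ × ℝ → ℂ) : Prop where
  contDiff : ContDiff ℝ 1 u
  hasCompactSupport : HasCompactSupport u
  tsupport_subset : tsupport u ⊆ U

/-- The set of energies of the trial functions on `U`. -/
def admissibleEnergies (A : ℝ × ℝ → ℝ × ℝ) (α μ ν : ℝ) (U : Set (ℝ × ℝ)) : Set ℝ :=
  glEnergy A α μ ν '' {u | IsAdmissible U u}

/-- The Dirichlet ground state energy on `U` (`0` if the energies are unbounded below). -/
def groundEnergy (A : ℝ × ℝ → ℝ × ℝ) (α μ ν : ℝ) (U : Set (ℝ × ℝ)) : ℝ :=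
  sInf (admissibleEnergies A α μ ν U)

section Density

variable {A : ℝ × ℝ → ℝ × ℝ} {α μ ν : ℝ} {u v : ℝ × ℝ → ℂ} {x : ℝ × ℝ}

lemma magGradSq_nonneg (A : ℝ × ℝ → ℝ × ℝ) (u : ℝ × ℝ → ℂ) (x : ℝ × ℝ) : 0 ≤ magGradSq A u x := by
  unfold magGradSq
  positivity

lemma continuous_magGradSq (hA : Continuous A) (hu : ContDiff ℝ 1 u) :
    Continuous (magGradSq A u) := by
  have : Continuous (fderiv ℝ u) := hu.continuous_fderiv one_ne_zero
  have hcu : Continuous u := hu.continuous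
  unfold magGradSq
  fun_prop

lemma continuous_glDensity (hA : Continuous A) (hu : ContDiff ℝ 1 u) (α μ ν : ℝ) :
    Continuous (glDensity A α μ ν u) := by
  have hgrad := continuous_magGradSq hA hu
  have hcu : Continuous u := hu.continuous
  unfold glDensity
  fun_prop

lemma magGradSq_congr (h : u =ᶠ[𝓝 x] v) : magGradSq A u x = magGradSq A v x := by
  simp only [magGradSq, h.fderiv_eq, h.eq_of_nhds]

lemma glDensity_congr (h : u =ᶠ[𝓝 x] v) : glDensity A α μ ν u x = glDensity A α μ ν v x := by
  simp only [glDensity, magGradSq_congr h, h.eq_of_nhds]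

lemma magGradSq_zero : magGradSq A 0 x = 0 := by
  simp [magGradSq]

lemma glDensity_zero : glDensity A α μ ν 0 x = 0 := by
  simp [glDensity, magGradSq_zero]

lemma magGradSq_of_notMem_tsupport (hx : x ∉ tsupport u) : magGradSq A u x = 0 :=
  (magGradSq_congr (notMem_tsupport_iff_eventuallyEq.1 hx)).trans magGradSq_zero

lemma glDensity_of_notMem_tsupport (hx : x ∉ tsupport u) : glDensity A α μ ν u x = 0 :=
  (glDensity_congr (notMem_tsupport_iff_eventuallyEq.1 hx)).trans glDensity_zero

lemma integrable_glDensity (hA : Continuous A) (hu : ContDiff ℝ 1 u) (hc : HasCompactSupport u)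
    (α μ ν : ℝ) : Integrable (glDensity A α μ ν u) :=
  (continuous_glDensity hA hu α μ ν).integrable_of_hasCompactSupport <|
    .intro hc fun _ ↦ glDensity_of_notMem_tsupport

lemma integrable_magGradSq (hA : Continuous A) (hu : ContDiff ℝ 1 u) (hc : HasCompactSupport u) :
    Integrable (magGradSq A u) :=
  (continuous_magGradSq hA hu).integrable_of_hasCompactSupport <|
    .intro hc fun _ ↦ magGradSq_of_notMem_tsupport

lemma setIntegral_glDensity {U : Set (ℝ × ℝ)} (hU : tsupport u ⊆ U) (α μ ν : ℝ) :
    ∫ x in U, glDensity A α μ ν u x = glEnergy A α μ ν u :=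
  setIntegral_eq_integral_of_forall_compl_eq_zero fun _ hx ↦
    glDensity_of_notMem_tsupport fun h ↦ hx (hU h)

lemma glDensity_mono_left {α' : ℝ} (h : α ≤ α') :
    glDensity A α μ ν u x ≤ glDensity A α' μ ν u x := by
  unfold glDensity
  gcongr
  exact magGradSq_nonneg A u x

lemma neg_sq_div_le_glDensity (hα : 0 ≤ α) (hν : 0 < ν) :
    -(μ ^ 2 / (4 * ν)) ≤ glDensity A α μ ν u x := by
  have hsquare : -(μ ^ 2 / (4 * ν)) + ν * (‖u x‖ ^ 2 - μ / (2 * ν)) ^ 2 =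
      -μ * ‖u x‖ ^ 2 + ν * ‖u x‖ ^ 4 := by
    field_simp
    ring
  have hgrad := mul_nonneg hα (magGradSq_nonneg A u x)
  have := mul_nonneg hν.le (sq_nonneg (‖u x‖ ^ 2 - μ / (2 * ν)))
  unfold glDensity
  linarith

lemma neg_mul_measure_le_glEnergy {U : Set (ℝ × ℝ)} (hUm : MeasurableSet U)
    (hU : volume U ≠ ⊤) (hα : 0 ≤ α) (hν : 0 < ν)
    (hA : Continuous A) (hu : IsAdmissible U u) :
    -(μ ^ 2 / (4 * ν)) * volume.real U ≤ glEnergy A α μ ν u := by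
  rw [← setIntegral_glDensity hu.tsupport_subset]
  exact setIntegral_ge_of_const_le_real hUm hU (fun _ _ ↦ neg_sq_div_le_glDensity hα hν)
    (integrable_glDensity hA hu.contDiff hu.hasCompactSupport α μ ν).integrableOn

lemma glEnergy_mono_left {α' : ℝ} (hA : Continuous A) (hu : ContDiff ℝ 1 u)
    (hc : HasCompactSupport u) (h : α ≤ α') : glEnergy A α μ ν u ≤ glEnergy A α' μ ν u :=
  integral_mono (integrable_glDensity hA hu hc α μ ν) (integrable_glDensity hA hu hc α' μ ν)
    fun _ ↦ glDensity_mono_left h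

lemma glEnergy_add_of_disjoint_tsupport (hA : Continuous A) (hu : ContDiff ℝ 1 u)
    (huc : HasCompactSupport u) (hv : ContDiff ℝ 1 v) (hvc : HasCompactSupport v)
    (h : Disjoint (tsupport u) (tsupport v)) :
    glEnergy A α μ ν (u + v) = glEnergy A α μ ν u + glEnergy A α μ ν v := by
  unfold glEnergy
  rw [← integral_add (integrable_glDensity hA hu huc α μ ν) (integrable_glDensity hA hv hvc α μ ν)]
  refine integral_congr_ae (.of_forall fun x ↦ ?_)
  by_cases hx : x ∈ tsupport u
  · have hxv := h.notMem_of_mem_left hx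
    have hsum : u + v =ᶠ[𝓝 x] u := by
      simpa using (EventuallyEq.refl _ u).add (notMem_tsupport_iff_eventuallyEq.1 hxv)
    simp only [glDensity_congr hsum, glDensity_of_notMem_tsupport hxv, add_zero]
  · have hsum : u + v =ᶠ[𝓝 x] v := by
      simpa using (notMem_tsupport_iff_eventuallyEq.1 hx).add (EventuallyEq.refl _ v)
    simp only [glDensity_congr hsum, glDensity_of_notMem_tsupport hx, zero_add]

end Density

namespace IsAdmissible

variable {U V : Set (ℝ × ℝ)} {u v : ℝ × ℝ → ℂ}

lemma zero (U : Set (ℝ × ℝ)) : IsAdmissible U 0 where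
  contDiff := contDiff_const
  hasCompactSupport := .zero
  tsupport_subset := by simp

lemma mono (h : IsAdmissible V u) (hVU : V ⊆ U) : IsAdmissible U u :=
  ⟨h.contDiff, h.hasCompactSupport, h.tsupport_subset.trans hVU⟩

lemma add (hu : IsAdmissible U u) (hv : IsAdmissible U v) : IsAdmissible U (u + v) where
  contDiff := hu.contDiff.add hv.contDiff
  hasCompactSupport := hu.hasCompactSupport.add hv.hasCompactSupport
  tsupport_subset := tsupport_add u v |>.trans <| union_subset hu.tsupport_subset hv.tsupport_subset

end IsAdmissible

section GroundEnergy

variable {A : ℝ × ℝ → ℝ × ℝ} {α μ ν : ℝ} {U V W : Set (ℝ × ℝ)}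

lemma zero_mem_admissibleEnergies : (0 : ℝ) ∈ admissibleEnergies A α μ ν U :=
  ⟨0, .zero U, by simp [glEnergy, glDensity_zero]⟩

lemma admissibleEnergies_mono (h : V ⊆ U) :
    admissibleEnergies A α μ ν V ⊆ admissibleEnergies A α μ ν U :=
  image_mono fun _ hu ↦ hu.mono h

lemma bddBelow_admissibleEnergies (hUm : MeasurableSet U) (hU : volume U ≠ ⊤)
    (hα : 0 ≤ α) (hν : 0 < ν) (hA : Continuous A) : BddBelow (admissibleEnergies A α μ ν U) :=
  ⟨_, forall_mem_image.2 fun _ hu ↦ neg_mul_measure_le_glEnergy hUm hU hα hν hA hu⟩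

lemma groundEnergy_le (hb : BddBelow (admissibleEnergies A α μ ν U)) {u : ℝ × ℝ → ℂ}
    (hu : IsAdmissible U u) : groundEnergy A α μ ν U ≤ glEnergy A α μ ν u :=
  csInf_le hb ⟨u, hu, rfl⟩

lemma groundEnergy_nonpos : groundEnergy A α μ ν U ≤ 0 :=
  sInf_nonpos' ⟨_, zero_mem_admissibleEnergies, le_rfl⟩

lemma le_groundEnergy {c : ℝ} (h : ∀ u, IsAdmissible U u → c ≤ glEnergy A α μ ν u) :
    c ≤ groundEnergy A α μ ν U :=
  le_csInf ⟨0, zero_mem_admissibleEnergies⟩ (forall_mem_image.2 h)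

lemma neg_mul_measure_le_groundEnergy (hUm : MeasurableSet U) (hU : volume U ≠ ⊤)
    (hα : 0 ≤ α) (hν : 0 < ν) (hA : Continuous A) :
    -(μ ^ 2 / (4 * ν)) * volume.real U ≤ groundEnergy A α μ ν U :=
  le_groundEnergy fun _ hu ↦ neg_mul_measure_le_glEnergy hUm hU hα hν hA hu

lemma groundEnergy_mono_left {α' : ℝ} (hb : BddBelow (admissibleEnergies A α μ ν U))
    (hA : Continuous A) (h : α ≤ α') : groundEnergy A α μ ν U ≤ groundEnergy A α' μ ν U :=
  le_groundEnergy fun _ hu ↦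
    (groundEnergy_le hb hu).trans (glEnergy_mono_left hA hu.contDiff hu.hasCompactSupport h)

lemma groundEnergy_le_add_of_disjoint (hA : Continuous A)
    (hb : BddBelow (admissibleEnergies A α μ ν U)) (hV : V ⊆ U) (hW : W ⊆ U)
    (hd : Disjoint V W) :
    groundEnergy A α μ ν U ≤ groundEnergy A α μ ν V + groundEnergy A α μ ν W := by
  rw [← sub_le_iff_le_add]
  refine le_groundEnergy fun u hu ↦ ?_
  rw [sub_le_comm]
  refine le_groundEnergy fun v hv ↦ ?_
  have hsum := glEnergy_add_of_disjoint_tsupport (α := α) (μ := μ) (ν := ν) hA hu.contDiff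
    hu.hasCompactSupport hv.contDiff hv.hasCompactSupport
    (hd.mono hu.tsupport_subset hv.tsupport_subset)
  linarith [groundEnergy_le hb ((hu.mono hV).add (hv.mono hW))]

lemma groundEnergy_le_sum_of_pairwiseDisjoint {ι : Type*} (hA : Continuous A) {s : Finset ι}
    {V : ι → Set (ℝ × ℝ)} (hb : BddBelow (admissibleEnergies A α μ ν U))
    (hd : (s : Set ι).PairwiseDisjoint V) (hV : ∀ i ∈ s, V i ⊆ U) :
    groundEnergy A α μ ν U ≤ ∑ i ∈ s, groundEnergy A α μ ν (V i) := by
  classical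
  induction s using Finset.induction_on generalizing U with
  | empty => simpa using groundEnergy_nonpos
  | insert i s hi ih =>
    rw [Finset.coe_insert, pairwiseDisjoint_insert_of_notMem (by simpa using hi)] at hd
    rw [Finset.forall_mem_insert] at hV
    have hrest : ⋃ j ∈ s, V j ⊆ U := iUnion₂_subset hV.2
    rw [Finset.sum_insert hi]
    calc groundEnergy A α μ ν U
        ≤ groundEnergy A α μ ν (V i) + groundEnergy A α μ ν (⋃ j ∈ s, V j) :=
          groundEnergy_le_add_of_disjoint hA hb hV.1 hrest
            (disjoint_iUnion₂_right.2 fun j hj ↦ hd.2 j hj)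
      _ ≤ _ := by
          gcongr
          exact ih (hb.mono (admissibleEnergies_mono hrest)) hd.1
            fun j hj ↦ subset_biUnion_of_mem (u := V) hj

end GroundEnergy

/-! ### Invariances of the ground state energy -/

section Invariance

variable {A A' : ℝ × ℝ → ℝ × ℝ} {α μ ν : ℝ} {U : Set (ℝ × ℝ)} {u : ℝ × ℝ → ℂ}

open scoped Pointwise in
lemma groundEnergy_eq_mul {α' μ' ν' c : ℝ} {V : Set (ℝ × ℝ)} (hc : 0 ≤ c)
    (hVU : ∀ v, IsAdmissible V v →
      ∃ u, IsAdmissible U u ∧ glEnergy A' α' μ' ν' v = c * glEnergy A α μ ν u)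
    (hUV : ∀ u, IsAdmissible U u →
      ∃ v, IsAdmissible V v ∧ glEnergy A' α' μ' ν' v = c * glEnergy A α μ ν u) :
    groundEnergy A' α' μ' ν' V = c * groundEnergy A α μ ν U := by
  have hset : admissibleEnergies A' α' μ' ν' V = c • admissibleEnergies A α μ ν U := by
    ext e
    simp only [admissibleEnergies, mem_smul_set, exists_mem_image, mem_ofPred_eq, smul_eq_mul]
    constructor
    · rintro ⟨v, hv, rfl⟩
      obtain ⟨u, hu, huv⟩ := hVU v hv
      exact ⟨u, hu, huv.symm⟩
    · rintro ⟨u, hu, rfl⟩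
      exact hUV u hu
  rw [groundEnergy, hset, Real.sInf_smul_of_nonneg hc, smul_eq_mul, groundEnergy]

/-- The gauge transform `u ↦ u e^{iφ}`, which turns the potential `A` into `A + ∇φ`. -/
def gaugeTransform (φ : ℝ × ℝ → ℝ) (u : ℝ × ℝ → ℂ) (x : ℝ × ℝ) : ℂ :=
  u x * Complex.exp (φ x * Complex.I)

lemma norm_gaugeTransform (φ : ℝ × ℝ → ℝ) (u : ℝ × ℝ → ℂ) (x : ℝ × ℝ) :
    ‖gaugeTransform φ u x‖ = ‖u x‖ := by
  rw [gaugeTransform, norm_mul, Complex.norm_exp_ofReal_mul_I, mul_one]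

lemma gaugeTransform_neg_gaugeTransform (φ : ℝ × ℝ → ℝ) (u : ℝ × ℝ → ℂ) :
    gaugeTransform φ (gaugeTransform (fun x ↦ -φ x) u) = u := by
  ext x
  simp [gaugeTransform, mul_assoc, ← Complex.exp_add]

lemma IsAdmissible.gaugeTransform {φ : ℝ × ℝ → ℝ} (hφ : ContDiff ℝ 1 φ) (hu : IsAdmissible U u) :
    IsAdmissible U (gaugeTransform φ u) where
  contDiff := hu.contDiff.mul ((Complex.ofRealCLM.contDiff.comp hφ).mul contDiff_const).cexp
  hasCompactSupport := hu.hasCompactSupport.mul_right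
  tsupport_subset := (tsupport_mul_subset_left).trans hu.tsupport_subset

lemma magGradSq_gaugeTransform {φ : ℝ × ℝ → ℝ} {x : ℝ × ℝ} (hφ : DifferentiableAt ℝ φ x)
    (hu : DifferentiableAt ℝ u x)
    (hA' : A' x = A x + (fderiv ℝ φ x (1, 0), fderiv ℝ φ x (0, 1))) :
    magGradSq A' (gaugeTransform φ u) x = magGradSq A u x := by
  have hphase : HasFDerivAt (fun y ↦ Complex.exp (φ y * Complex.I))
      (Complex.exp (φ x * Complex.I) • (Complex.ofRealCLM.comp (fderiv ℝ φ x)).smulRight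
        Complex.I) x :=
    ((Complex.ofRealCLM.hasFDerivAt.comp x hφ.hasFDerivAt).mul_const' Complex.I).cexp
  have hcov (h : ℝ × ℝ) (a : ℝ) :
      ‖fderiv ℝ (gaugeTransform φ u) x h -
        Complex.I * ((a + fderiv ℝ φ x h : ℝ) : ℂ) * gaugeTransform φ u x‖ =
      ‖fderiv ℝ u x h - Complex.I * (a : ℂ) * u x‖ := by
    have hfactor : fderiv ℝ (gaugeTransform φ u) x h -
        Complex.I * ((a + fderiv ℝ φ x h : ℝ) : ℂ) * gaugeTransform φ u x =
        (fderiv ℝ u x h - Complex.I * (a : ℂ) * u x) * Complex.exp (φ x * Complex.I) := by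
      have hprod : HasFDerivAt (gaugeTransform φ u) _ x := hu.hasFDerivAt.mul hphase
      rw [hprod.fderiv, gaugeTransform]
      simp only [add_apply, smul_apply, ContinuousLinearMap.smulRight_apply,
        ContinuousLinearMap.comp_apply, Complex.ofRealCLM_apply, smul_eq_mul]
      push_cast
      ring
    rw [hfactor, norm_mul, Complex.norm_exp_ofReal_mul_I, mul_one]
  simp only [magGradSq, hA', Prod.fst_add, Prod.snd_add, hcov]

lemma glEnergy_gaugeTransform {φ : ℝ × ℝ → ℝ} (hφ : Differentiable ℝ φ) (hu : Differentiable ℝ u)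
    (hA' : ∀ x, A' x = A x + (fderiv ℝ φ x (1, 0), fderiv ℝ φ x (0, 1))) :
    glEnergy A' α μ ν (gaugeTransform φ u) = glEnergy A α μ ν u := by
  simp only [glEnergy, glDensity, magGradSq_gaugeTransform (hφ _) (hu _) (hA' _),
    norm_gaugeTransform]

lemma groundEnergy_gauge {φ : ℝ × ℝ → ℝ} (hφ : ContDiff ℝ 1 φ)
    (hA' : ∀ x, A' x = A x + (fderiv ℝ φ x (1, 0), fderiv ℝ φ x (0, 1))) :
    groundEnergy A' α μ ν U = groundEnergy A α μ ν U := by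
  have henergy (u : ℝ × ℝ → ℂ) (hu : IsAdmissible U u) :
      glEnergy A' α μ ν (gaugeTransform φ u) = 1 * glEnergy A α μ ν u := by
    rw [one_mul, glEnergy_gaugeTransform (hφ.differentiable one_ne_zero)
      (hu.contDiff.differentiable one_ne_zero) hA']
  rw [← one_mul (groundEnergy A α μ ν U)]
  refine groundEnergy_eq_mul zero_le_one (fun v hv ↦ ?_)
    fun u hu ↦ ⟨_, hu.gaugeTransform hφ, henergy u hu⟩
  have hinv := hv.gaugeTransform hφ.neg
  refine ⟨_, hinv, ?_⟩
  rw [← henergy _ hinv, gaugeTransform_neg_gaugeTransform]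

lemma IsAdmissible.comp_homeomorph (hu : IsAdmissible U u) (Φ : ℝ × ℝ ≃ₜ ℝ × ℝ)
    (hΦ : ContDiff ℝ 1 Φ) : IsAdmissible (Φ ⁻¹' U) (u ∘ Φ) where
  contDiff := hu.contDiff.comp hΦ
  hasCompactSupport := hu.hasCompactSupport.comp_homeomorph Φ
  tsupport_subset := by
    rw [tsupport_comp_eq_preimage u Φ]
    exact preimage_mono hu.tsupport_subset

lemma magGradSq_comp_affine {s : ℝ} {p x : ℝ × ℝ} (hu : DifferentiableAt ℝ u (p + s • x)) :
    magGradSq (fun x ↦ s • A (p + s • x)) (fun x ↦ u (p + s • x)) x =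
      s ^ 2 * magGradSq A u (p + s • x) := by
  have hderiv : HasFDerivAt (fun x ↦ u (p + s • x))
      ((fderiv ℝ u (p + s • x)).comp (s • ContinuousLinearMap.id ℝ (ℝ × ℝ))) x :=
    hu.hasFDerivAt.comp x (((hasFDerivAt_id x).const_smul s).const_add p)
  have hcov (h : ℝ × ℝ) (a : ℝ) :
      ‖fderiv ℝ (fun x ↦ u (p + s • x)) x h - Complex.I * ((s * a : ℝ) : ℂ) * u (p + s • x)‖ ^ 2 =
      s ^ 2 * ‖fderiv ℝ u (p + s • x) h - Complex.I * (a : ℂ) * u (p + s • x)‖ ^ 2 := by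
    rw [hderiv.fderiv, ← sq_abs s, ← Real.norm_eq_abs, ← mul_pow, ← norm_smul]
    simp only [ContinuousLinearMap.comp_apply, smul_apply, ContinuousLinearMap.id_apply, map_smul,
      Complex.real_smul, Complex.ofReal_mul]
    ring_nf
  simp only [magGradSq, Prod.smul_fst, Prod.smul_snd, smul_eq_mul, hcov, mul_add]

lemma glEnergy_comp_affine (s : ℝ) (p : ℝ × ℝ) (hu : Differentiable ℝ u) :
    glEnergy (fun x ↦ s • A (p + s • x)) α μ ν (fun x ↦ u (p + s • x)) =
      (s ^ 2)⁻¹ * glEnergy A (s ^ 2 * α) μ ν u := by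
  have hdensity (x : ℝ × ℝ) :
      glDensity (fun x ↦ s • A (p + s • x)) α μ ν (fun x ↦ u (p + s • x)) x =
        glDensity A (s ^ 2 * α) μ ν u (p + s • x) := by
    simp only [glDensity, magGradSq_comp_affine (hu _)]
    ring
  simp only [glEnergy, hdensity]
  rw [Measure.integral_comp_smul volume (fun y ↦ glDensity A (s ^ 2 * α) μ ν u (p + y)) s,
    integral_add_left_eq_self]
  simp

lemma groundEnergy_comp_affine {s : ℝ} (hs : s ≠ 0) (p : ℝ × ℝ) :
    groundEnergy (fun x ↦ s • A (p + s • x)) α μ ν ((fun x ↦ p + s • x) ⁻¹' U) =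
      (s ^ 2)⁻¹ * groundEnergy A (s ^ 2 * α) μ ν U := by
  let Φ : ℝ × ℝ ≃ₜ ℝ × ℝ := (Homeomorph.smulOfNeZero s hs).trans (Homeomorph.addLeft p)
  have hΦ : ContDiff ℝ 1 Φ := contDiff_const.add (contDiff_id.const_smul s)
  have hΦsymm : ContDiff ℝ 1 Φ.symm :=
    (contDiff_const.add contDiff_id).const_smul (s⁻¹ : ℝ)
  refine groundEnergy_eq_mul (by positivity) (fun v hv ↦ ?_) fun u hu ↦
    ⟨_, hu.comp_homeomorph Φ hΦ,
      glEnergy_comp_affine s p (hu.contDiff.differentiable one_ne_zero)⟩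
  have hv' := hv.comp_homeomorph Φ.symm hΦsymm
  have hU : Φ.symm ⁻¹' ((fun x ↦ p + s • x) ⁻¹' U) = U := Φ.toEquiv.symm_preimage_preimage U
  rw [hU] at hv'
  refine ⟨_, hv', ?_⟩
  rw [← glEnergy_comp_affine s p (hv'.contDiff.differentiable one_ne_zero)]
  congr 1
  ext x
  exact congrArg v (Φ.symm_apply_apply x).symm

lemma magGradSq_conj {x : ℝ × ℝ} (hu : DifferentiableAt ℝ u x) :
    magGradSq (-A) (fun x ↦ starRingEnd ℂ (u x)) x = magGradSq A u x := by
  have hderiv : HasFDerivAt (fun x ↦ starRingEnd ℂ (u x))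
      ((Complex.conjCLE : ℂ →L[ℝ] ℂ).comp (fderiv ℝ u x)) x :=
    Complex.conjCLE.hasFDerivAt.comp x hu.hasFDerivAt
  have hcov (h : ℝ × ℝ) (a : ℝ) :
      ‖fderiv ℝ (fun x ↦ starRingEnd ℂ (u x)) x h -
        Complex.I * ((-a : ℝ) : ℂ) * starRingEnd ℂ (u x)‖ =
      ‖fderiv ℝ u x h - Complex.I * (a : ℂ) * u x‖ := by
    rw [hderiv.fderiv, ← Complex.norm_conj (fderiv ℝ u x h - _)]
    simp
  simp only [magGradSq, Pi.neg_apply, Prod.fst_neg, Prod.snd_neg, hcov]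

lemma IsAdmissible.conj (hu : IsAdmissible U u) :
    IsAdmissible U (fun x ↦ starRingEnd ℂ (u x)) where
  contDiff := Complex.conjCLE.contDiff.comp hu.contDiff
  hasCompactSupport := hu.hasCompactSupport.comp_left (map_zero _)
  tsupport_subset := (tsupport_comp_subset (map_zero _) u).trans hu.tsupport_subset

lemma groundEnergy_neg_potential : groundEnergy (-A) α μ ν U = groundEnergy A α μ ν U := by
  have henergy (A : ℝ × ℝ → ℝ × ℝ) (u : ℝ × ℝ → ℂ) (hu : IsAdmissible U u) :
      glEnergy (-A) α μ ν (fun x ↦ starRingEnd ℂ (u x)) = 1 * glEnergy A α μ ν u := by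
    simp only [glEnergy, glDensity, magGradSq_conj (hu.contDiff.differentiable one_ne_zero _),
      Complex.norm_conj, one_mul]
  rw [← one_mul (groundEnergy A α μ ν U)]
  refine groundEnergy_eq_mul zero_le_one (fun v hv ↦ ⟨_, hv.conj, ?_⟩)
    fun u hu ↦ ⟨_, hu.conj, henergy A u hu⟩
  have := henergy (-A) v hv
  rw [neg_neg] at this
  rw [this, one_mul, one_mul]

lemma IsAdmissible.const_smul (hu : IsAdmissible U u) (c : ℝ) : IsAdmissible U (c • u) where
  contDiff := hu.contDiff.const_smul c
  hasCompactSupport := hu.hasCompactSupport.smul_left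
  tsupport_subset := (tsupport_smul_subset_right (fun _ ↦ c) u).trans hu.tsupport_subset

lemma magGradSq_const_smul {x : ℝ × ℝ} (hu : DifferentiableAt ℝ u x) (c : ℝ) :
    magGradSq A (c • u) x = c ^ 2 * magGradSq A u x := by
  have hcov (h : ℝ × ℝ) (a : ℝ) :
      ‖fderiv ℝ (c • u) x h - Complex.I * (a : ℂ) * (c • u) x‖ ^ 2 =
      c ^ 2 * ‖fderiv ℝ u x h - Complex.I * (a : ℂ) * u x‖ ^ 2 := by
    rw [fderiv_const_smul hu, ← sq_abs c, ← Real.norm_eq_abs, ← mul_pow, ← norm_smul, smul_sub,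
      smul_apply, Pi.smul_apply, mul_smul_comm]
  simp only [magGradSq, hcov, mul_add]

lemma glEnergy_sqrt_smul (hμ : 0 < μ) (hν : 0 < ν) (hu : Differentiable ℝ u) :
    glEnergy A α μ ν (√(μ / (2 * ν)) • u) =
      μ ^ 2 / (2 * ν) * glEnergy A (α / μ) 1 (1 / 2) u := by
  have hsq : √(μ / (2 * ν)) ^ 2 = μ / (2 * ν) := Real.sq_sqrt (by positivity)
  have hfour : √(μ / (2 * ν)) ^ 4 = (μ / (2 * ν)) ^ 2 := by
    rw [show 4 = 2 * 2 from rfl, pow_mul, hsq]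
  unfold glEnergy
  rw [← integral_const_mul]
  congr 1 with x
  simp only [glDensity, magGradSq_const_smul (hu x), Pi.smul_apply, norm_smul, mul_pow,
    Real.norm_eq_abs, sq_abs, hsq, Even.pow_abs (by decide : Even 4), hfour]
  field_simp

lemma groundEnergy_normalize (hμ : 0 < μ) (hν : 0 < ν) :
    groundEnergy A α μ ν U = μ ^ 2 / (2 * ν) * groundEnergy A (α / μ) 1 (1 / 2) U := by
  have henergy (u : ℝ × ℝ → ℂ) (hu : IsAdmissible U u) :=
    glEnergy_sqrt_smul (A := A) (α := α) hμ hν (hu.contDiff.differentiable one_ne_zero)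
  refine groundEnergy_eq_mul (by positivity) (fun v hv ↦ ?_)
    fun u hu ↦ ⟨_, hu.const_smul _, henergy u hu⟩
  have hv' := hv.const_smul (√(μ / (2 * ν)))⁻¹
  refine ⟨_, hv', ?_⟩
  rw [← henergy _ hv', smul_inv_smul₀ (by positivity)]

end Invariance

/-! ### Squares and constant magnetic fields -/

/-- The open square of side `r` centred at `p`. -/
def cell (p : ℝ × ℝ) (r : ℝ) : Set (ℝ × ℝ) := {x | x - p ∈ Qsq r}

/-- The Landau gauge potential of the constant magnetic field `c`, shifted by a constant `a` so that
the first-order expansion of `Avan` at height `c` is `Alin c (c ^ 2 / 2)`. -/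
def Alin (c a : ℝ) (x : ℝ × ℝ) : ℝ × ℝ := (-c * x.2 + a, 0)

lemma continuous_A₀ : Continuous A₀ := by
  unfold A₀
  fun_prop

lemma continuous_Avan : Continuous Avan := by
  unfold Avan
  fun_prop

lemma continuous_Alin (c a : ℝ) : Continuous (Alin c a) := by
  unfold Alin
  fun_prop

lemma mem_Qsq {r : ℝ} {x : ℝ × ℝ} : x ∈ Qsq r ↔ |x.1| < r / 2 ∧ |x.2| < r / 2 := by
  simp only [Qsq, mem_prod, mem_Ioo, abs_lt, neg_div]

lemma mem_cell {p x : ℝ × ℝ} {r : ℝ} :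
    x ∈ cell p r ↔ |x.1 - p.1| < r / 2 ∧ |x.2 - p.2| < r / 2 := by
  simp only [cell, mem_ofPred_eq, mem_Qsq, Prod.fst_sub, Prod.snd_sub]

lemma mem_Strip {R : ℝ} {x : ℝ × ℝ} : x ∈ Strip R ↔ |x.1| < R / 2 := by
  simp only [Strip, mem_prod, mem_Ioo, abs_lt, neg_div, mem_univ, and_true]

lemma isOpen_Qsq (r : ℝ) : IsOpen (Qsq r) := isOpen_Ioo.prod isOpen_Ioo

lemma isOpen_cell (p : ℝ × ℝ) (r : ℝ) : IsOpen (cell p r) :=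
  (isOpen_Qsq r).preimage (by fun_prop)

lemma isOpen_Strip (R : ℝ) : IsOpen (Strip R) := isOpen_Ioo.prod isOpen_univ

lemma isBounded_Qsq (r : ℝ) : Bornology.IsBounded (Qsq r) :=
  (Metric.isBounded_Ioo _ _).prod (Metric.isBounded_Ioo _ _)

lemma isBounded_cell (p : ℝ × ℝ) (r : ℝ) : Bornology.IsBounded (cell p r) :=
  (IsometryEquiv.subRight p).isometry.antilipschitz.isBounded_preimage (isBounded_Qsq r)

lemma measureReal_Qsq {r : ℝ} (hr : 0 ≤ r) : volume.real (Qsq r) = r ^ 2 := by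
  rw [Qsq, Measure.volume_eq_prod, measureReal_prod_prod, Real.volume_real_Ioo_of_le (by linarith)]
  ring

lemma cell_disjoint {p q : ℝ × ℝ} {r : ℝ} (h : r ≤ |p.1 - q.1| ∨ r ≤ |p.2 - q.2|) :
    Disjoint (cell p r) (cell q r) := by
  rw [Set.disjoint_left]
  intro x hxp hxq
  rw [mem_cell] at hxp hxq
  rcases h with h | h
  · linarith [abs_sub_le p.1 x.1 q.1, abs_sub_comm p.1 x.1]
  · linarith [abs_sub_le p.2 x.2 q.2, abs_sub_comm p.2 x.2]

lemma groundEnergy_A₀_cell {α μ ν : ℝ} (p : ℝ × ℝ) (r : ℝ) :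
    groundEnergy A₀ α μ ν (cell p r) = groundEnergy A₀ α μ ν (Qsq r) := by
  let φ : ℝ × ℝ → ℝ := fun x ↦ (p.1 * x.2 - p.2 * x.1) / 2
  have hφ : ContDiff ℝ 1 φ := by fun_prop
  have hderiv (x : ℝ × ℝ) : HasFDerivAt φ ((2 : ℝ)⁻¹ •
      (p.1 • ContinuousLinearMap.snd ℝ ℝ ℝ - p.2 • ContinuousLinearMap.fst ℝ ℝ ℝ)) x := by
    simpa [φ, div_eq_inv_mul] using
      ((hasFDerivAt_snd.const_mul p.1).sub (hasFDerivAt_fst.const_mul p.2)).const_mul (2 : ℝ)⁻¹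
  have hcell : cell p r = (fun x ↦ -p + (1 : ℝ) • x) ⁻¹' Qsq r := by
    ext x
    simp [cell, sub_eq_neg_add]
  calc groundEnergy A₀ α μ ν (cell p r)
      = groundEnergy (fun x ↦ (1 : ℝ) • A₀ (-p + (1 : ℝ) • x)) α μ ν (cell p r) := by
        refine groundEnergy_gauge hφ fun x ↦ ?_
        rw [(hderiv x).fderiv]
        ext <;> simp [A₀] <;> ring
    _ = groundEnergy A₀ α μ ν (Qsq r) := by
        rw [hcell, groundEnergy_comp_affine one_ne_zero]
        simp

lemma groundEnergy_Alin_cell_of_pos {α μ ν c : ℝ} (hc : 0 < c) (a : ℝ) (p : ℝ × ℝ) :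
    groundEnergy (Alin c a) α μ ν (cell p 1) = c⁻¹ * groundEnergy A₀ (c * α) μ ν (Qsq √c) := by
  have hs : 0 < √c := Real.sqrt_pos.2 hc
  have hsq : √c * √c = c := Real.mul_self_sqrt hc.le
  let φ : ℝ × ℝ → ℝ := fun x ↦ -(c / 2) * (x.1 * x.2) + (a - c * p.2 / 2) * x.1 + c * p.1 / 2 * x.2
  have hφ : ContDiff ℝ 1 φ := by fun_prop
  have hderiv (x : ℝ × ℝ) : HasFDerivAt φ (-(c / 2) • (x.1 • ContinuousLinearMap.snd ℝ ℝ ℝ +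
      x.2 • ContinuousLinearMap.fst ℝ ℝ ℝ) + (a - c * p.2 / 2) • ContinuousLinearMap.fst ℝ ℝ ℝ +
      (c * p.1 / 2) • ContinuousLinearMap.snd ℝ ℝ ℝ) x :=
    (((hasFDerivAt_fst.mul hasFDerivAt_snd).const_mul (-(c / 2))).add
      (hasFDerivAt_fst.const_mul (a - c * p.2 / 2))).add (hasFDerivAt_snd.const_mul (c * p.1 / 2))
  have hcell : cell p 1 = (fun x ↦ -(√c • p) + √c • x) ⁻¹' Qsq √c := by
    ext x
    have habs (t : ℝ) : |(√c * t)| < √c / 2 ↔ |t| < 1 / 2 := by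
      rw [abs_mul, abs_of_pos hs, div_eq_mul_one_div √c, mul_lt_mul_iff_right₀ hs]
    simp only [mem_cell, mem_preimage, mem_Qsq, ← smul_neg, ← smul_add, Prod.smul_fst,
      Prod.smul_snd, smul_eq_mul, habs, neg_add_eq_sub, Prod.fst_sub, Prod.snd_sub]
  calc groundEnergy (Alin c a) α μ ν (cell p 1)
      = groundEnergy (fun x ↦ √c • A₀ (-(√c • p) + √c • x)) α μ ν (cell p 1) := by
        refine groundEnergy_gauge hφ fun x ↦ ?_
        rw [(hderiv x).fderiv]
        ext
        · simp [A₀, Alin]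
          linear_combination ((x.2 - p.2) / 2) * hsq
        · simp [A₀, Alin]
          linear_combination ((p.1 - x.1) / 2) * hsq
    _ = c⁻¹ * groundEnergy A₀ (c * α) μ ν (Qsq √c) := by
        rw [hcell, groundEnergy_comp_affine hs.ne', Real.sq_sqrt hc.le]

lemma groundEnergy_Alin_cell {α μ ν c : ℝ} (hc : c ≠ 0) (hμ : 0 < μ) (hν : 0 < ν) (a : ℝ)
    (p : ℝ × ℝ) :
    groundEnergy (Alin c a) α μ ν (cell p 1) =
      μ ^ 2 / (2 * ν) * (groundEnergy A₀ (|c| * α / μ) 1 (1 / 2) (Qsq √|c|) / |c|) := by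
  have hneg : -Alin c a = Alin (-c) (-a) := by
    ext x <;> simp [Alin, add_comm]
  have habs : groundEnergy (Alin c a) α μ ν (cell p 1) =
      |c|⁻¹ * groundEnergy A₀ (|c| * α) μ ν (Qsq √|c|) := by
    rcases hc.lt_or_gt with h | h
    · rw [← groundEnergy_neg_potential, hneg, abs_of_neg h,
        groundEnergy_Alin_cell_of_pos (neg_pos.2 h)]
    · rw [abs_of_pos h, groundEnergy_Alin_cell_of_pos h]
  rw [habs, groundEnergy_normalize hμ hν]
  ring

/-! ### Truncation of small values -/

lemma hasDerivAt_max_zero_sq (x : ℝ) : HasDerivAt (fun x : ℝ ↦ max x 0 ^ 2) (2 * max x 0) x := by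
  refine hasDerivAt_of_hasDerivAt_of_ne' (x := 0) (g := fun x ↦ 2 * max x 0) (fun y hy ↦ ?_)
    (Continuous.continuousAt (by fun_prop)) (Continuous.continuousAt (by fun_prop)) x
  rcases hy.lt_or_gt with h | h
  · have hzero : (fun x : ℝ ↦ max x 0 ^ 2) =ᶠ[𝓝 y] fun _ ↦ 0 := by
      filter_upwards [Iio_mem_nhds h] with z hz
      rw [max_eq_right (le_of_lt hz), zero_pow two_ne_zero]
    simpa [max_eq_right h.le] using (hasDerivAt_const y (0 : ℝ)).congr_of_eventuallyEq hzero
  · have hsq : (fun x : ℝ ↦ max x 0 ^ 2) =ᶠ[𝓝 y] fun x ↦ x ^ 2 := by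
      filter_upwards [Ioi_mem_nhds h] with z hz
      rw [max_eq_left (le_of_lt hz)]
    simpa [max_eq_left h.le] using (hasDerivAt_pow 2 y).congr_of_eventuallyEq hsq

lemma contDiff_max_zero_sq : ContDiff ℝ 1 (fun x : ℝ ↦ max x 0 ^ 2) := by
  rw [contDiff_one_iff_deriv, funext fun x ↦ (hasDerivAt_max_zero_sq x).deriv]
  exact ⟨fun x ↦ (hasDerivAt_max_zero_sq x).differentiableAt, by fun_prop⟩

lemma max_one_sub_mem_Icc {s : ℝ} (hs : 0 ≤ s) : max (1 - s) 0 ∈ Icc (0 : ℝ) 1 :=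
  ⟨le_max_right _ _, max_le (sub_le_self _ hs) zero_le_one⟩

section RadialTruncation

variable {F : Type*} [NormedAddCommGroup F] [InnerProductSpace ℝ F] {δ : ℝ}

/-- The radial map that vanishes on the ball of radius `δ` and shrinks every other vector `z` by the
factor `(1 - δ/‖z‖)²`. The square makes it `C¹`, and it does not increase distances. -/
def radialTruncation (δ : ℝ) (z : F) : F := (max (1 - δ * ‖z‖⁻¹) 0 ^ 2) • z

lemma radialTruncation_of_norm_le {z : F} (hz : ‖z‖ ≤ δ) : radialTruncation δ z = 0 := by
  rcases eq_or_ne z 0 with rfl | h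
  · exact smul_zero _
  · have hfactor : 1 - δ * ‖z‖⁻¹ ≤ 0 := by
      rw [sub_nonpos, ← div_eq_mul_inv, one_le_div (norm_pos_iff.2 h)]
      exact hz
    rw [radialTruncation, max_eq_right hfactor, zero_pow two_ne_zero, zero_smul]

lemma radialTruncation_eventuallyEq_zero {z : F} (hz : ‖z‖ < δ) :
    radialTruncation δ =ᶠ[𝓝 z] 0 := by
  filter_upwards [(isOpen_lt continuous_norm continuous_const).mem_nhds hz] with y hy
  exact radialTruncation_of_norm_le (le_of_lt hy)

lemma norm_radialTruncation_le (hδ : 0 ≤ δ) (z : F) : ‖radialTruncation δ z‖ ≤ ‖z‖ := by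
  have hfactor := max_one_sub_mem_Icc (mul_nonneg hδ (inv_nonneg.2 (norm_nonneg z)))
  rw [radialTruncation, norm_smul, Real.norm_of_nonneg (by positivity)]
  exact mul_le_of_le_one_left (norm_nonneg z) (pow_le_one₀ hfactor.1 hfactor.2)

lemma tendsto_radialTruncation (z : F) :
    Tendsto (fun δ ↦ radialTruncation δ z) (𝓝 0) (𝓝 z) := by
  have hcont : Continuous fun δ ↦ radialTruncation δ z := by
    unfold radialTruncation
    fun_prop
  simpa [radialTruncation] using hcont.tendsto 0

lemma contDiff_radialTruncation (hδ : 0 < δ) :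
    ContDiff ℝ 1 (radialTruncation δ : F → F) := by
  refine contDiff_iff_contDiffAt.2 fun z ↦ ?_
  rcases eq_or_ne z 0 with rfl | hz
  · exact contDiffAt_const.congr_of_eventuallyEq
      (radialTruncation_eventuallyEq_zero (by rwa [norm_zero]))
  · have hfactor : ContDiffAt ℝ 1 (fun z : F ↦ 1 - δ * ‖z‖⁻¹) z :=
      contDiffAt_const.sub (contDiffAt_const.mul
        ((contDiffAt_norm ℝ hz).inv (norm_ne_zero_iff.2 hz)))
    exact (contDiff_max_zero_sq.contDiffAt.comp z hfactor).smul contDiffAt_id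

lemma hasFDerivAt_norm_inv {z : F} (hz : z ≠ 0) :
    HasFDerivAt (fun z : F ↦ ‖z‖⁻¹) (-(‖z‖⁻¹ ^ 3) • innerSL ℝ z) z := by
  have hnorm : ‖z‖ ≠ 0 := norm_ne_zero_iff.2 hz
  have hsqrt : HasDerivAt (fun s : ℝ ↦ (√s)⁻¹) (-(1 / (2 * √(‖z‖ ^ 2))) / √(‖z‖ ^ 2) ^ 2)
      (‖z‖ ^ 2) :=
    (Real.hasDerivAt_sqrt (pow_ne_zero 2 hnorm)).inv (Real.sqrt_ne_zero'.2 (by positivity))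
  have hcomp := hsqrt.comp_hasFDerivAt z (hasStrictFDerivAt_norm_sq z).hasFDerivAt
  simp only [Function.comp_def, Real.sqrt_sq (norm_nonneg _)] at hcomp
  rw [← Nat.cast_smul_eq_nsmul ℝ, smul_smul] at hcomp
  convert! hcomp using 2
  push_cast
  field_simp

lemma fderiv_radialTruncation {z : F} (hz : z ≠ 0) (ξ : F) :
    fderiv ℝ (radialTruncation δ) z ξ = (max (1 - δ * ‖z‖⁻¹) 0 ^ 2) • ξ +
      (2 * max (1 - δ * ‖z‖⁻¹) 0 * (δ * ‖z‖⁻¹) * ‖z‖⁻¹ ^ 2 * inner ℝ z ξ) • z := by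
  have hfactor := (hasDerivAt_max_zero_sq (1 - δ * ‖z‖⁻¹)).comp_hasFDerivAt z
    (((hasFDerivAt_norm_inv hz).const_mul δ).const_sub 1)
  have hprod : HasFDerivAt (radialTruncation δ) _ z := hfactor.smul (hasFDerivAt_id z)
  rw [hprod.fderiv]
  simp only [Function.comp_apply, add_apply, smul_apply, ContinuousLinearMap.smulRight_apply,
    ContinuousLinearMap.id_apply, neg_apply, innerSL_apply_apply, smul_eq_mul]
  ring_nf

lemma norm_fderiv_radialTruncation_le (hδ : 0 < δ) (z ξ : F) :
    ‖fderiv ℝ (radialTruncation δ) z ξ‖ ≤ ‖ξ‖ := by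
  rcases eq_or_ne z 0 with rfl | hz
  · rw [(radialTruncation_eventuallyEq_zero (by rwa [norm_zero])).fderiv_eq]
    simp
  have hpos : 0 < ‖z‖ := norm_pos_iff.2 hz
  obtain ⟨ht₀, ht₁⟩ := max_one_sub_mem_Icc (by positivity : 0 ≤ δ * ‖z‖⁻¹)
  rw [fderiv_radialTruncation hz]
  set t := max (1 - δ * ‖z‖⁻¹) 0 with ht
  have htδ : t * (δ * ‖z‖⁻¹) = t * (1 - t) := by
    rcases max_choice (1 - δ * ‖z‖⁻¹) 0 with h | h <;> rw [ht, h] <;> ring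
  calc ‖t ^ 2 • ξ + (2 * t * (δ * ‖z‖⁻¹) * ‖z‖⁻¹ ^ 2 * inner ℝ z ξ) • z‖
      ≤ t ^ 2 * ‖ξ‖ + 2 * t * (δ * ‖z‖⁻¹) * ‖z‖⁻¹ ^ 2 * |inner ℝ z ξ| * ‖z‖ := by
        refine (norm_add_le _ _).trans_eq ?_
        rw [norm_smul, norm_smul, norm_mul, Real.norm_of_nonneg (sq_nonneg t),
          Real.norm_of_nonneg (by positivity), Real.norm_eq_abs]
    _ ≤ t ^ 2 * ‖ξ‖ + 2 * t * (δ * ‖z‖⁻¹) * ‖z‖⁻¹ ^ 2 * (‖z‖ * ‖ξ‖) * ‖z‖ := by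
        gcongr
        exact abs_real_inner_le_norm z ξ
    _ = (1 - (1 - t) ^ 2) * ‖ξ‖ := by
        have hone : ‖z‖⁻¹ * ‖z‖ = 1 := inv_mul_cancel₀ hpos.ne'
        linear_combination (2 * ‖ξ‖ * (‖z‖⁻¹ * ‖z‖) ^ 2) * htδ +
          2 * ‖ξ‖ * (t * (1 - t)) * (‖z‖⁻¹ * ‖z‖ + 1) * hone
    _ ≤ ‖ξ‖ := mul_le_of_le_one_left (norm_nonneg ξ) (sub_le_self _ (sq_nonneg _))

end RadialTruncation

section Truncation

variable {A : ℝ × ℝ → ℝ × ℝ} {α μ ν δ : ℝ} {U : Set (ℝ × ℝ)} {u : ℝ × ℝ → ℂ}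

lemma fderiv_radialTruncation_I_mul (a : ℝ) (z : ℂ) :
    fderiv ℝ (radialTruncation δ) z (Complex.I * (a : ℂ) * z) =
      Complex.I * (a : ℂ) * radialTruncation δ z := by
  rcases eq_or_ne z 0 with rfl | hz
  · simp [radialTruncation]
  · have horth : inner ℝ z (Complex.I * (a : ℂ) * z) = 0 := by
      rw [Complex.inner]
      simp
      ring
    rw [fderiv_radialTruncation hz, horth, mul_zero, zero_smul, add_zero, radialTruncation,
      mul_smul_comm]

lemma magGradSq_radialTruncation_le (hδ : 0 < δ) {x : ℝ × ℝ} (hu : DifferentiableAt ℝ u x) :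
    magGradSq A (fun x ↦ radialTruncation δ (u x)) x ≤ magGradSq A u x := by
  have hcomp : HasFDerivAt (fun x ↦ radialTruncation δ (u x))
      ((fderiv ℝ (radialTruncation δ) (u x)).comp (fderiv ℝ u x)) x :=
    ((contDiff_radialTruncation hδ).differentiable one_ne_zero _).hasFDerivAt.comp x hu.hasFDerivAt
  unfold magGradSq
  rw [hcomp.fderiv]
  simp only [ContinuousLinearMap.comp_apply, ← fderiv_radialTruncation_I_mul, ← map_sub]
  gcongr <;> exact norm_fderiv_radialTruncation_le hδ _ _

/-- The truncation of `u`, extended by zero outside `U`. -/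
def truncateOn (U : Set (ℝ × ℝ)) (δ : ℝ) (u : ℝ × ℝ → ℂ) : ℝ × ℝ → ℂ :=
  U.indicator fun x ↦ radialTruncation δ (u x)

lemma truncateOn_eventuallyEq (hU : IsOpen U) {x : ℝ × ℝ} (hx : x ∈ U) :
    truncateOn U δ u =ᶠ[𝓝 x] fun x ↦ radialTruncation δ (u x) :=
  eqOn_indicator.eventuallyEq_of_mem (hU.mem_nhds hx)

lemma isAdmissible_truncateOn (hU : IsOpen U) (hu : ContDiff ℝ 1 u)
    (hu₀ : ∀ x ∈ frontier U, u x = 0) (hδ : 0 < δ)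
    (hK : IsCompact (closure U ∩ {x | δ ≤ ‖u x‖})) : IsAdmissible U (truncateOn U δ u) := by
  set K := closure U ∩ {x | δ ≤ ‖u x‖}
  have hKU : K ⊆ U := by
    rintro x ⟨hxU, hxδ⟩
    by_contra hx
    have hx₀ := hu₀ x ⟨hxU, by rwa [hU.interior_eq]⟩
    rw [mem_ofPred_eq, hx₀, norm_zero] at hxδ
    exact hδ.not_ge hxδ
  have hzero (x) (hx : x ∉ K) : truncateOn U δ u x = 0 := by
    by_cases hxU : x ∈ U
    · have hsmall : ‖u x‖ < δ := not_le.1 fun h ↦ hx ⟨subset_closure hxU, h⟩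
      rw [truncateOn, indicator_of_mem hxU, radialTruncation_of_norm_le hsmall.le]
    · exact indicator_of_notMem hxU _
  have hsupp : tsupport (truncateOn U δ u) ⊆ K :=
    closure_minimal (fun x hx ↦ not_not.1 fun h ↦ hx (hzero x h)) hK.isClosed
  refine ⟨contDiff_iff_contDiffAt.2 fun x ↦ ?_, .intro hK hzero, hsupp.trans hKU⟩
  by_cases hx : x ∈ U
  · exact ((contDiff_radialTruncation hδ).comp hu).contDiffAt.congr_of_eventuallyEq
      (truncateOn_eventuallyEq hU hx)
  · exact contDiffAt_const.congr_of_eventuallyEq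
      (notMem_tsupport_iff_eventuallyEq.1 fun h ↦ hx (hKU (hsupp h)))

lemma glDensity_truncateOn_le (hU : IsOpen U) (hα : 0 ≤ α) (hν : 0 ≤ ν) (hδ : 0 < δ)
    {x : ℝ × ℝ} (hx : x ∈ U) (hu : DifferentiableAt ℝ u x) :
    glDensity A α μ ν (truncateOn U δ u) x ≤
      glDensity A α μ ν u x + μ * (‖u x‖ ^ 2 - ‖radialTruncation δ (u x)‖ ^ 2) := by
  have hgrad := mul_le_mul_of_nonneg_left
    (magGradSq_radialTruncation_le (A := A) hδ hu) hα
  have hfour : ν * ‖radialTruncation δ (u x)‖ ^ 4 ≤ ν * ‖u x‖ ^ 4 := by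
    gcongr
    exact norm_radialTruncation_le hδ.le _
  rw [glDensity_congr (truncateOn_eventuallyEq hU hx)]
  unfold glDensity
  linarith

lemma groundEnergy_le_setIntegral (hU : IsOpen U) (hA : Continuous A) (hα : 0 ≤ α) (hν : 0 ≤ ν)
    (hb : BddBelow (admissibleEnergies A α μ ν U)) (hu : ContDiff ℝ 1 u)
    (hu₀ : ∀ x ∈ frontier U, u x = 0)
    (hK : ∀ δ > 0, IsCompact (closure U ∩ {x | δ ≤ ‖u x‖}))
    (hdens : IntegrableOn (glDensity A α μ ν u) U) (hsq : IntegrableOn (fun x ↦ ‖u x‖ ^ 2) U) :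
    groundEnergy A α μ ν U ≤ ∫ x in U, glDensity A α μ ν u x := by
  have hmeas (δ : ℝ) (hδ : 0 < δ) :
      AEStronglyMeasurable (fun x ↦ ‖radialTruncation δ (u x)‖ ^ 2) (volume.restrict U) :=
    ((contDiff_radialTruncation hδ).continuous.comp hu.continuous).norm.pow 2
      |>.aestronglyMeasurable
  have hle (δ : ℝ) (hδ : 0 < δ) (x : ℝ × ℝ) :
      ‖‖radialTruncation δ (u x)‖ ^ 2‖ ≤ ‖u x‖ ^ 2 := by
    rw [Real.norm_of_nonneg (by positivity)]
    gcongr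
    exact norm_radialTruncation_le hδ.le _
  have hbound (δ : ℝ) (hδ : 0 < δ) : groundEnergy A α μ ν U ≤ (∫ x in U, glDensity A α μ ν u x) +
      μ * ((∫ x in U, ‖u x‖ ^ 2) - ∫ x in U, ‖radialTruncation δ (u x)‖ ^ 2) := by
    have hadm := isAdmissible_truncateOn hU hu hu₀ hδ (hK δ hδ)
    have htrunc : IntegrableOn (fun x ↦ ‖radialTruncation δ (u x)‖ ^ 2) U :=
      hsq.mono' (hmeas δ hδ) (.of_forall (hle δ hδ))
    have hloss : IntegrableOn (fun x ↦ μ * (‖u x‖ ^ 2 - ‖radialTruncation δ (u x)‖ ^ 2)) U :=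
      (hsq.sub htrunc).const_mul μ
    refine (groundEnergy_le hb hadm).trans ?_
    rw [← setIntegral_glDensity hadm.tsupport_subset, ← integral_sub hsq htrunc,
      ← integral_const_mul, ← integral_add hdens hloss]
    exact setIntegral_mono_on
      (integrable_glDensity hA hadm.contDiff hadm.hasCompactSupport α μ ν).integrableOn
      (hdens.add hloss) hU.measurableSet
      fun x hx ↦ glDensity_truncateOn_le hU hα hν hδ hx (hu.differentiable one_ne_zero x)
  have hlim : Tendsto (fun δ ↦ ∫ x in U, ‖radialTruncation δ (u x)‖ ^ 2) (𝓝[>] 0)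
      (𝓝 (∫ x in U, ‖u x‖ ^ 2)) :=
    tendsto_integral_filter_of_dominated_convergence (fun x ↦ ‖u x‖ ^ 2)
      (eventually_mem_nhdsWithin.mono hmeas)
      (eventually_mem_nhdsWithin.mono fun δ hδ ↦ .of_forall (hle δ hδ)) hsq
      (.of_forall fun x ↦
        ((tendsto_radialTruncation (u x)).mono_left nhdsWithin_le_nhds).norm.pow 2)
  have hrhs := ((hlim.const_sub (∫ x in U, ‖u x‖ ^ 2)).const_mul μ).const_add
    (∫ x in U, glDensity A α μ ν u x)
  rw [sub_self, mul_zero, add_zero] at hrhs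
  exact ge_of_tendsto hrhs (eventually_mem_nhdsWithin.mono hbound)

lemma groundEnergy_le_setIntegral_of_isBounded (hU : IsOpen U) (hUb : Bornology.IsBounded U)
    (hA : Continuous A) (hα : 0 ≤ α) (hν : 0 < ν) (hu : ContDiff ℝ 1 u)
    (hu₀ : ∀ x ∈ frontier U, u x = 0) :
    groundEnergy A α μ ν U ≤ ∫ x in U, glDensity A α μ ν u x := by
  have hint {f : ℝ × ℝ → ℝ} (hf : Continuous f) : IntegrableOn f U :=
    (hf.continuousOn.integrableOn_compact hUb.isCompact_closure).mono_set subset_closure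
  exact groundEnergy_le_setIntegral hU hA hα hν.le
    (bddBelow_admissibleEnergies hU.measurableSet hUb.measure_lt_top.ne hα hν hA) hu hu₀
    (fun δ _ ↦ hUb.isCompact_closure.inter_right
      (isClosed_le continuous_const hu.continuous.norm))
    (hint (continuous_glDensity hA hu α μ ν)) (hint (hu.continuous.norm.pow 2))

end Truncation

lemma eD_eq_groundEnergy {b r : ℝ} (hb : 0 ≤ b) :
    eD b r = groundEnergy A₀ b 1 (1 / 2) (Qsq r) := by
  have hF (u : ℝ × ℝ → ℂ) : Fsq b r u = ∫ x in Qsq r, glDensity A₀ b 1 (1 / 2) u x := by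
    simp only [Fsq, glDensity, one_mul, div_eq_mul_inv, mul_comm (_ ^ 4)]
  have hle (u : ℝ × ℝ → ℂ) (hu : MemH10sq r u) :
      groundEnergy A₀ b 1 (1 / 2) (Qsq r) ≤ Fsq b r u := by
    rw [hF]
    exact groundEnergy_le_setIntegral_of_isBounded (isOpen_Qsq r) (isBounded_Qsq r) continuous_A₀
      hb one_half_pos hu.1 hu.2
  refine le_antisymm (le_groundEnergy fun u hu ↦ ?_) ?_
  · refine csInf_le ⟨_, forall_mem_image.2 hle⟩ ⟨u, ⟨hu.contDiff, fun x hx ↦ ?_⟩, ?_⟩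
    · refine image_eq_zero_of_notMem_tsupport fun h ↦ ?_
      exact (isOpen_Qsq r).frontier_eq ▸ hx |>.2 (hu.tsupport_subset h)
    · rw [hF, setIntegral_glDensity hu.tsupport_subset]
  · exact le_csInf (image_nonempty.2 ⟨0, contDiff_const, by simp⟩) (forall_mem_image.2 hle)

/-! ### The magnetic lower bound -/

section Convolution

open scoped Convolution

variable {G : Type*} [NormedAddCommGroup G] [NormedSpace ℝ G] [MeasurableSpace G] [BorelSpace G]
  [FiniteDimensional ℝ G] {ν : Measure G} [ν.IsAddHaarMeasure] {f h : G → ℝ}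

lemma fderiv_convolution_right_apply (hf : Continuous f) (hh : ContDiff ℝ 1 h)
    (hhc : HasCompactSupport h) (x v : G) :
    fderiv ℝ (f ⋆[ContinuousLinearMap.mul ℝ ℝ, ν] h) x v =
      (f ⋆[ContinuousLinearMap.mul ℝ ℝ, ν] fun y ↦ fderiv ℝ h y v) x := by
  rw [(hhc.hasFDerivAt_convolution_right _ hf.locallyIntegrable hh x).fderiv,
    convolution_precompR_apply _ hf.locallyIntegrable (hhc.fderiv ℝ)
      (hh.continuous_fderiv one_ne_zero)]

lemma fderiv_convolution_left_apply (hf : ContDiff ℝ 1 f) (hfc : HasCompactSupport f)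
    (hh : Continuous h) (x v : G) :
    fderiv ℝ (f ⋆[ContinuousLinearMap.mul ℝ ℝ, ν] h) x v =
      ((fun y ↦ fderiv ℝ f y v) ⋆[ContinuousLinearMap.mul ℝ ℝ, ν] h) x := by
  have hflip : (ContinuousLinearMap.mul ℝ ℝ).flip = ContinuousLinearMap.mul ℝ ℝ := by
    ext; simp
  have hcomm (k l : G → ℝ) : (k ⋆[ContinuousLinearMap.mul ℝ ℝ, ν] l) =
      l ⋆[ContinuousLinearMap.mul ℝ ℝ, ν] k := by
    rw [← convolution_flip, hflip]
  rw [hcomm f, hcomm fun y ↦ fderiv ℝ f y v, fderiv_convolution_right_apply hh hf hfc]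

/- Differentiating the convolution `f ⋆ h(-·)` once in each direction, both orders of distributing
the two derivatives over the factors give the same value at `0`. -/
lemma integral_fderiv_mul_fderiv_comm (hf : ContDiff ℝ 1 f) (hfc : HasCompactSupport f)
    (hh : ContDiff ℝ 1 h) (hhc : HasCompactSupport h) (e v : G) :
    ∫ x, fderiv ℝ f x e * fderiv ℝ h x v ∂ν = ∫ x, fderiv ℝ f x v * fderiv ℝ h x e ∂ν := by
  set k : G → ℝ := fun x ↦ h (-x)
  have hk : ContDiff ℝ 1 k := hh.comp contDiff_neg
  have hkc : HasCompactSupport k := hhc.comp_homeomorph (Homeomorph.neg G)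
  have hk_fderiv (x w : G) : fderiv ℝ k (0 - x) w = -fderiv ℝ h x w := by
    have hd : HasFDerivAt h (fderiv ℝ h x) (-(0 - x)) := by
      simpa using (hh.differentiable one_ne_zero x).hasFDerivAt
    have hkd : HasFDerivAt k _ (0 - x) := hd.comp (0 - x) (hasFDerivAt_id _).neg
    rw [hkd.fderiv]
    simp
  have hcont {p : G → ℝ} (hp : ContDiff ℝ 1 p) (w : G) : Continuous fun y ↦ fderiv ℝ p y w :=
    (hp.continuous_fderiv one_ne_zero).clm_apply continuous_const
  have hswap : (f ⋆[ContinuousLinearMap.mul ℝ ℝ, ν] fun y ↦ fderiv ℝ k y e) =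
      (fun y ↦ fderiv ℝ f y e) ⋆[ContinuousLinearMap.mul ℝ ℝ, ν] k := by
    ext x
    rw [← fderiv_convolution_right_apply hf.continuous hk hkc,
      fderiv_convolution_left_apply hf hfc hk.continuous]
  have hmain := congr(fderiv ℝ $hswap 0 v)
  rw [fderiv_convolution_left_apply hf hfc (hcont hk e),
    fderiv_convolution_right_apply (hcont hf e) hk hkc] at hmain
  simp only [convolution_def, ContinuousLinearMap.mul_apply', hk_fderiv, mul_neg, integral_neg,
    neg_inj] at hmain
  exact hmain.symm

end Convolution

/-- The curl `∂₁A₂ - ∂₂A₁` of a planar vector field, that is, the magnetic field of the potential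
`A`. -/
def planarCurl (A : ℝ × ℝ → ℝ × ℝ) (x : ℝ × ℝ) : ℝ :=
  (fderiv ℝ A x (1, 0)).2 - (fderiv ℝ A x (0, 1)).1

section MagneticBound

variable {A : ℝ × ℝ → ℝ × ℝ} {u : ℝ × ℝ → ℂ}

lemma fderiv_norm_sq_comp_apply {x : ℝ × ℝ} (hu : DifferentiableAt ℝ u x) (v : ℝ × ℝ) :
    fderiv ℝ (fun y ↦ ‖u y‖ ^ 2) x v =
      2 * ((u x).re * (fderiv ℝ u x v).re + (u x).im * (fderiv ℝ u x v).im) := by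
  rw [hu.hasFDerivAt.norm_sq.fderiv]
  simp [Complex.inner, mul_comm, mul_add]

/- The slack is `‖(∂₁ - iA₁)u + i(∂₂ - iA₂)u‖²`. -/
lemma jacobian_add_le_magGradSq {x : ℝ × ℝ} (hu : DifferentiableAt ℝ u x) :
    2 * ((fderiv ℝ u x (1, 0)).re * (fderiv ℝ u x (0, 1)).im -
        (fderiv ℝ u x (0, 1)).re * (fderiv ℝ u x (1, 0)).im) +
      ((A x).1 * fderiv ℝ (fun y ↦ ‖u y‖ ^ 2) x (0, 1) -
        (A x).2 * fderiv ℝ (fun y ↦ ‖u y‖ ^ 2) x (1, 0)) ≤ magGradSq A u x := by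
  rw [fderiv_norm_sq_comp_apply hu, fderiv_norm_sq_comp_apply hu, magGradSq]
  set p := fderiv ℝ u x (1, 0) - Complex.I * (A x).1 * u x with hp
  set q := fderiv ℝ u x (0, 1) - Complex.I * (A x).2 * u x with hq
  have hslack := sq_nonneg ‖p + Complex.I * q‖
  simp only [Complex.sq_norm, Complex.normSq_apply, hp, hq, Complex.add_re, Complex.add_im,
    Complex.sub_re, Complex.sub_im, Complex.mul_re, Complex.mul_im, Complex.I_re, Complex.I_im,
    Complex.ofReal_re, Complex.ofReal_im] at hslack ⊢
  linarith

lemma integral_jacobian_eq_zero (hu : ContDiff ℝ 1 u) (hc : HasCompactSupport u) :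
    ∫ x, ((fderiv ℝ u x (1, 0)).re * (fderiv ℝ u x (0, 1)).im -
      (fderiv ℝ u x (0, 1)).re * (fderiv ℝ u x (1, 0)).im) = 0 := by
  have hd := hu.differentiable one_ne_zero
  have := hu.continuous_fderiv one_ne_zero
  have hint (v w : ℝ × ℝ) : Integrable fun x ↦ (fderiv ℝ u x v).re * (fderiv ℝ u x w).im :=
    Continuous.integrable_of_hasCompactSupport (by fun_prop)
      (((hc.fderiv_apply ℝ v).comp_left (g := Complex.re) rfl).mul_right)
  have hre (x v : ℝ × ℝ) : fderiv ℝ (fun y ↦ (u y).re) x v = (fderiv ℝ u x v).re :=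
    congr($((Complex.reCLM.hasFDerivAt.comp x (hd x).hasFDerivAt).fderiv) v)
  have him (x v : ℝ × ℝ) : fderiv ℝ (fun y ↦ (u y).im) x v = (fderiv ℝ u x v).im :=
    congr($((Complex.imCLM.hasFDerivAt.comp x (hd x).hasFDerivAt).fderiv) v)
  have hcomm := integral_fderiv_mul_fderiv_comm (ν := volume) (Complex.reCLM.contDiff.comp hu)
    (hc.comp_left (g := Complex.re) rfl) (Complex.imCLM.contDiff.comp hu)
    (hc.comp_left (g := Complex.im) rfl) (1, 0) (0, 1)
  simp only [Function.comp_def, Complex.reCLM_apply, Complex.imCLM_apply, hre, him] at hcomm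
  rw [integral_sub (hint _ _) (hint _ _), hcomm, sub_self]

lemma integrable_and_integral_mul_fderiv {a f : ℝ × ℝ → ℝ} (ha : ContDiff ℝ 1 a)
    (hf : ContDiff ℝ 1 f) (hfc : HasCompactSupport f) (v : ℝ × ℝ) :
    Integrable (fun x ↦ a x * fderiv ℝ f x v) ∧ Integrable (fun x ↦ fderiv ℝ a x v * f x) ∧
      ∫ x, a x * fderiv ℝ f x v = -∫ x, fderiv ℝ a x v * f x := by
  have ⟨_, _⟩ := And.intro ha.continuous hf.continuous
  have ⟨_, _⟩ := And.intro (ha.continuous_fderiv one_ne_zero) (hf.continuous_fderiv one_ne_zero)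
  have haf' : Integrable fun x ↦ a x * fderiv ℝ f x v :=
    Continuous.integrable_of_hasCompactSupport (by fun_prop) (hfc.fderiv_apply ℝ v).mul_left
  have ha'f : Integrable fun x ↦ fderiv ℝ a x v * f x :=
    Continuous.integrable_of_hasCompactSupport (by fun_prop) hfc.mul_left
  have haf : Integrable fun x ↦ a x * f x :=
    Continuous.integrable_of_hasCompactSupport (by fun_prop) hfc.mul_left
  exact ⟨haf', ha'f, integral_mul_fderiv_eq_neg_fderiv_mul_of_integrable ha'f haf' haf
    (fun x _ ↦ ha.differentiable one_ne_zero x) fun x _ ↦ hf.differentiable one_ne_zero x⟩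

lemma integral_curl_mul_norm_sq_le (hA : ContDiff ℝ 1 A) (hu : ContDiff ℝ 1 u)
    (hc : HasCompactSupport u) :
    ∫ x, planarCurl A x * ‖u x‖ ^ 2 ≤ ∫ x, magGradSq A u x := by
  have hsq : ContDiff ℝ 1 fun x ↦ ‖u x‖ ^ 2 := hu.norm_sq ℝ
  have hsqc : HasCompactSupport fun x ↦ ‖u x‖ ^ 2 :=
    hc.comp_left (g := fun z : ℂ ↦ ‖z‖ ^ 2) (by simp)
  obtain ⟨hi₁, hj₁, h₁⟩ := integrable_and_integral_mul_fderiv hA.fst hsq hsqc (0, 1)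
  obtain ⟨hi₂, hj₂, h₂⟩ := integrable_and_integral_mul_fderiv hA.snd hsq hsqc (1, 0)
  have hcurl (x : ℝ × ℝ) : planarCurl A x =
      fderiv ℝ (fun y ↦ (A y).2) x (1, 0) - fderiv ℝ (fun y ↦ (A y).1) x (0, 1) := by
    have hd := hA.differentiable one_ne_zero x
    rw [planarCurl, fderiv.fst hd, fderiv.snd hd]
    rfl
  have := hu.continuous_fderiv one_ne_zero
  have hjac : Integrable fun x ↦ (fderiv ℝ u x (1, 0)).re * (fderiv ℝ u x (0, 1)).im -
      (fderiv ℝ u x (0, 1)).re * (fderiv ℝ u x (1, 0)).im :=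
    Continuous.integrable_of_hasCompactSupport (by fun_prop)
      ((hc.fderiv_apply ℝ (1, 0)).mono' fun x hx ↦ subset_tsupport _ fun h ↦ hx (by simp [h]))
  calc ∫ x, planarCurl A x * ‖u x‖ ^ 2
      = (∫ x, (A x).1 * fderiv ℝ (fun y ↦ ‖u y‖ ^ 2) x (0, 1)) -
          ∫ x, (A x).2 * fderiv ℝ (fun y ↦ ‖u y‖ ^ 2) x (1, 0) := by
        simp only [hcurl, sub_mul]
        rw [integral_sub hj₂ hj₁, h₁, h₂]
        ring
    _ = ∫ x, (2 * ((fderiv ℝ u x (1, 0)).re * (fderiv ℝ u x (0, 1)).im -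
          (fderiv ℝ u x (0, 1)).re * (fderiv ℝ u x (1, 0)).im) +
        ((A x).1 * fderiv ℝ (fun y ↦ ‖u y‖ ^ 2) x (0, 1) -
          (A x).2 * fderiv ℝ (fun y ↦ ‖u y‖ ^ 2) x (1, 0))) := by
        rw [integral_add (hjac.const_mul 2) (by exact hi₁.sub hi₂), integral_const_mul,
          integral_jacobian_eq_zero hu hc, integral_sub hi₁ hi₂, mul_zero, zero_add]
    _ ≤ ∫ x, magGradSq A u x :=
        integral_mono ((hjac.const_mul 2).add (hi₁.sub hi₂))
          (integrable_magGradSq hA.continuous hu hc)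
          fun x ↦ jacobian_add_le_magGradSq (hu.differentiable one_ne_zero x)

lemma planarCurl_A₀ (x : ℝ × ℝ) : planarCurl A₀ x = 1 := by
  have hd : HasFDerivAt A₀ (((-(1 / 2) : ℝ) • ContinuousLinearMap.snd ℝ ℝ ℝ).prod
      ((1 / 2 : ℝ) • ContinuousLinearMap.fst ℝ ℝ ℝ)) x := by
    convert ContinuousLinearMap.hasFDerivAt _ using 1
    ext y <;> simp [A₀] <;> ring
  rw [planarCurl, hd.fderiv]
  norm_num

end MagneticBound

/-! ### The limiting energy density of a constant field -/

lemma continuous_planarCurl {A : ℝ × ℝ → ℝ × ℝ} (hA : ContDiff ℝ 1 A) :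
    Continuous (planarCurl A) := by
  have hcont (v : ℝ × ℝ) : Continuous fun x ↦ fderiv ℝ A x v :=
    (hA.continuous_fderiv one_ne_zero).clm_apply continuous_const
  exact (hcont _).snd.sub (hcont _).fst

lemma groundEnergy_eq_zero_of_one_le_curl {A : ℝ × ℝ → ℝ × ℝ} {α ν : ℝ} {U : Set (ℝ × ℝ)}
    (hA : ContDiff ℝ 1 A) (hcurl : ∀ x, 1 ≤ planarCurl A x) (hα : 1 ≤ α) (hν : 0 ≤ ν) :
    groundEnergy A α 1 ν U = 0 := by
  refine le_antisymm groundEnergy_nonpos (le_groundEnergy fun u hu ↦ ?_)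
  have hmag := integrable_magGradSq hA.continuous hu.contDiff hu.hasCompactSupport
  have hnorm : Continuous fun x ↦ ‖u x‖ ^ 2 := hu.contDiff.continuous.norm.pow 2
  have hcompact : HasCompactSupport fun x ↦ ‖u x‖ ^ 2 :=
    hu.hasCompactSupport.comp_left (g := fun z : ℂ ↦ ‖z‖ ^ 2) (by simp)
  have hsq := hnorm.integrable_of_hasCompactSupport (μ := volume) hcompact
  have hcurl_int : Integrable fun x ↦ planarCurl A x * ‖u x‖ ^ 2 :=
    ((continuous_planarCurl hA).mul hnorm).integrable_of_hasCompactSupport hcompact.mul_left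
  have hle : ∫ x, ‖u x‖ ^ 2 ≤ ∫ x, magGradSq A u x :=
    (integral_mono hsq hcurl_int fun x ↦ le_mul_of_one_le_left (sq_nonneg _) (hcurl x)).trans
      (integral_curl_mul_norm_sq_le hA hu.contDiff hu.hasCompactSupport)
  calc 0 ≤ (∫ x, magGradSq A u x) - ∫ x, ‖u x‖ ^ 2 := sub_nonneg.2 hle
    _ = ∫ x, (magGradSq A u x - ‖u x‖ ^ 2) := (integral_sub hmag hsq).symm
    _ ≤ glEnergy A α 1 ν u := by
        refine integral_mono (hmag.sub hsq) (integrable_glDensity hA.continuous hu.contDiff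
          hu.hasCompactSupport α 1 ν) fun x ↦ ?_
        have hkin := le_mul_of_one_le_left (magGradSq_nonneg A u x) hα
        have hquartic : 0 ≤ ν * ‖u x‖ ^ 4 := mul_nonneg hν (by positivity)
        simp only [glDensity]
        linarith

section SquareEnergy

variable {b b' r : ℝ}

lemma bddBelow_admissibleEnergies_Qsq (hb : 0 ≤ b) :
    BddBelow (admissibleEnergies A₀ b 1 (1 / 2) (Qsq r)) :=
  bddBelow_admissibleEnergies (isOpen_Qsq r).measurableSet (isBounded_Qsq r).measure_lt_top.ne hb
    one_half_pos continuous_A₀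

lemma eD_nonpos (hb : 0 ≤ b) : eD b r ≤ 0 :=
  eD_eq_groundEnergy hb ▸ groundEnergy_nonpos

lemma eD_mono (hb : 0 ≤ b) (h : b ≤ b') : eD b r ≤ eD b' r := by
  rw [eD_eq_groundEnergy hb, eD_eq_groundEnergy (hb.trans h)]
  exact groundEnergy_mono_left (bddBelow_admissibleEnergies_Qsq hb) continuous_A₀ h

lemma neg_sq_div_two_le_eD (hb : 0 ≤ b) (hr : 0 ≤ r) : -(1 / 2) * r ^ 2 ≤ eD b r := by
  rw [eD_eq_groundEnergy hb, ← measureReal_Qsq hr]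
  refine le_trans (le_of_eq ?_) (neg_mul_measure_le_groundEnergy (isOpen_Qsq r).measurableSet
    (isBounded_Qsq r).measure_lt_top.ne hb one_half_pos continuous_A₀)
  norm_num

lemma contDiff_A₀ : ContDiff ℝ 1 A₀ := by
  unfold A₀
  fun_prop

lemma eD_eq_zero (hb : 1 ≤ b) : eD b r = 0 := by
  rw [eD_eq_groundEnergy (zero_le_one.trans hb)]
  exact groundEnergy_eq_zero_of_one_le_curl contDiff_A₀ (fun x ↦ (planarCurl_A₀ x).ge) hb
    one_half_pos.le

/-- The centre of the `i`-th of the `n` intervals of length `r` tiling `(-nr/2, nr/2)`. -/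
def tileCenter (n : ℕ) (r : ℝ) (i : ℕ) : ℝ := (i + 1 / 2) * r - n * r / 2

lemma abs_tileCenter_add_half_le {n i : ℕ} (hr : 0 ≤ r) (hi : i < n) :
    |tileCenter n r i| + r / 2 ≤ n * r / 2 := by
  have hi' : (i : ℝ) + 1 ≤ n := mod_cast hi
  have hlow := mul_nonneg i.cast_nonneg hr
  have hup := mul_le_mul_of_nonneg_right hi' hr
  rw [← le_sub_iff_add_le, tileCenter, abs_le]
  constructor <;> linarith

lemma le_abs_tileCenter_sub {n i j : ℕ} (hr : 0 ≤ r) (hij : i ≠ j) :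
    r ≤ |tileCenter n r i - tileCenter n r j| := by
  have hdist : (1 : ℝ) ≤ |(i : ℝ) - j| := by
    exact_mod_cast Int.one_le_abs (sub_ne_zero.2 (Nat.cast_injective.ne hij) : (i : ℤ) - j ≠ 0)
  calc r ≤ |(i : ℝ) - j| * r := le_mul_of_one_le_left hr hdist
    _ = |tileCenter n r i - tileCenter n r j| := by
        rw [← abs_of_nonneg hr, ← abs_mul, abs_of_nonneg hr, tileCenter, tileCenter]
        ring_nf

lemma eD_mul_le (hb : 0 ≤ b) (hr : 0 ≤ r) (n : ℕ) : eD b (n * r) ≤ n ^ 2 * eD b r := by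
  let s := Finset.range n ×ˢ Finset.range n
  let V : ℕ × ℕ → Set (ℝ × ℝ) := fun i ↦ cell (tileCenter n r i.1, tileCenter n r i.2) r
  have hdisjoint : (s : Set (ℕ × ℕ)).PairwiseDisjoint V := by
    intro i _ j _ hij
    refine cell_disjoint ?_
    rcases not_and_or.1 (Prod.ext_iff.not.1 hij) with h | h
    · exact .inl (le_abs_tileCenter_sub hr h)
    · exact .inr (le_abs_tileCenter_sub hr h)
  have hsub (i : ℕ × ℕ) (hi : i ∈ s) : V i ⊆ Qsq (n * r) := by
    rw [Finset.mem_product, Finset.mem_range, Finset.mem_range] at hi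
    intro x hx
    rw [mem_cell] at hx
    rw [mem_Qsq]
    have h₁ := abs_tileCenter_add_half_le hr hi.1
    have h₂ := abs_tileCenter_add_half_le hr hi.2
    have h₃ := abs_sub_abs_le_abs_sub x.1 (tileCenter n r i.1)
    have h₄ := abs_sub_abs_le_abs_sub x.2 (tileCenter n r i.2)
    constructor <;> linarith
  calc eD b (n * r) = groundEnergy A₀ b 1 (1 / 2) (Qsq (n * r)) := eD_eq_groundEnergy hb
    _ ≤ ∑ i ∈ s, groundEnergy A₀ b 1 (1 / 2) (V i) := groundEnergy_le_sum_of_pairwiseDisjoint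
        continuous_A₀ (bddBelow_admissibleEnergies_Qsq hb) hdisjoint hsub
    _ = n ^ 2 * eD b r := by
        simp only [V, groundEnergy_A₀_cell, ← eD_eq_groundEnergy hb, Finset.sum_const, s,
          Finset.card_product, Finset.card_range, nsmul_eq_mul, Nat.cast_mul, sq]

end SquareEnergy

namespace IsLimitG

variable {g : ℝ → ℝ} {b b' r : ℝ}

lemma le_eD_div (hg : IsLimitG g) (hb : 0 < b) (hr : 0 < r) : g b ≤ eD b r / r ^ 2 := by
  refine le_of_tendsto ((hg b hb).comp (tendsto_natCast_atTop_atTop.atTop_mul_const hr)) ?_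
  filter_upwards [eventually_gt_atTop 0] with n hn
  have : (0 : ℝ) < n := mod_cast hn
  calc eD b (n * r) / (n * r) ^ 2 ≤ n ^ 2 * eD b r / (n * r) ^ 2 := by
        gcongr
        exact eD_mul_le hb.le hr.le n
    _ = eD b r / r ^ 2 := by field_simp

lemma mono (hg : IsLimitG g) (hb : 0 < b) (h : b ≤ b') : g b ≤ g b' :=
  le_of_tendsto_of_tendsto' (hg b hb) (hg b' (hb.trans_le h)) fun _ ↦ by
    gcongr
    exact eD_mono hb.le h

lemma nonpos (hg : IsLimitG g) (hb : 0 < b) : g b ≤ 0 :=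
  le_of_tendsto' (hg b hb) fun _ ↦ div_nonpos_of_nonpos_of_nonneg (eD_nonpos hb.le) (sq_nonneg _)

lemma neg_half_le (hg : IsLimitG g) (hb : 0 < b) : -(1 / 2) ≤ g b := by
  refine ge_of_tendsto (hg b hb) ?_
  filter_upwards [eventually_gt_atTop 0] with r hr
  exact (le_div_iff₀ (by positivity)).2 (neg_sq_div_two_le_eD hb.le hr.le)

lemma eq_zero (hg : IsLimitG g) (hb : 1 ≤ b) : g b = 0 :=
  tendsto_nhds_unique (hg b (zero_lt_one.trans_le hb)) <|
    tendsto_const_nhds.congr fun _ ↦ by rw [eD_eq_zero hb, zero_div]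

end IsLimitG

/-- The energy density `g` extended to zero field, where it takes the value `-1/2`, and to negative
arguments, so that it is monotone on the whole line. -/
def extendedDensity (g : ℝ → ℝ) (t : ℝ) : ℝ := if 0 < t then g t else -(1 / 2)

section ExtendedDensity

variable {g : ℝ → ℝ} {t : ℝ}

lemma extendedDensity_of_pos (ht : 0 < t) : extendedDensity g t = g t := if_pos ht

lemma extendedDensity_of_nonpos (ht : t ≤ 0) : extendedDensity g t = -(1 / 2) := if_neg ht.not_gt

lemma extendedDensity_mem_Icc (hg : IsLimitG g) (t : ℝ) :
    extendedDensity g t ∈ Icc (-(1 / 2)) 0 := by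
  unfold extendedDensity
  split_ifs with h
  · exact ⟨hg.neg_half_le h, hg.nonpos h⟩
  · norm_num

lemma extendedDensity_mono (hg : IsLimitG g) : Monotone (extendedDensity g) := by
  intro s t hst
  rcases le_or_gt s 0 with hs | hs
  · rw [extendedDensity_of_nonpos hs]
    exact (extendedDensity_mem_Icc hg t).1
  · rw [extendedDensity_of_pos hs, extendedDensity_of_pos (hs.trans_le hst)]
    exact hg.mono hs hst

lemma extendedDensity_of_one_le (hg : IsLimitG g) (ht : 1 ≤ t) : extendedDensity g t = 0 := by
  rw [extendedDensity_of_pos (zero_lt_one.trans_le ht), hg.eq_zero ht]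

lemma abs_extendedDensity_le (hg : IsLimitG g) (t : ℝ) : |extendedDensity g t| ≤ 1 / 2 :=
  abs_le.2 ⟨(extendedDensity_mem_Icc hg t).1, (extendedDensity_mem_Icc hg t).2.trans (by norm_num)⟩

lemma measurable_extendedDensity (hg : IsLimitG g) : Measurable (extendedDensity g) :=
  (extendedDensity_mono hg).measurable

lemma support_extendedDensity_abs_subset (hg : IsLimitG g) :
    (Function.support fun t ↦ extendedDensity g |t|) ⊆ Icc (-1) 1 := fun t ht ↦ by
  rw [mem_Icc, ← abs_le, ← not_lt]
  exact fun h ↦ ht (extendedDensity_of_one_le hg h.le)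

lemma integrable_extendedDensity_abs (hg : IsLimitG g) :
    Integrable fun t ↦ extendedDensity g |t| := by
  rw [← integrableOn_iff_integrable_of_support_subset (support_extendedDensity_abs_subset hg)]
  exact Measure.integrableOn_of_bounded measure_Icc_lt_top.ne
    ((measurable_extendedDensity hg).comp measurable_norm).aestronglyMeasurable
    (Eventually.of_forall fun _ ↦ abs_extendedDensity_le hg _)

/-- The integral of `g(|t|)` over the line: the limiting energy per unit length of a line on which
the field vanishes with unit gradient. -/
def lineDensity (g : ℝ → ℝ) : ℝ := ∫ t, extendedDensity g |t|

lemma lineDensity_nonpos (hg : IsLimitG g) : lineDensity g ≤ 0 :=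
  integral_nonpos fun _ ↦ (extendedDensity_mem_Icc hg _).2

end ExtendedDensity

/-! ### Localization of the strip energy -/

lemma norm_add_sq_le_of_pos {V : Type*} [SeminormedAddCommGroup V] {ε : ℝ} (hε : 0 < ε)
    (a b : V) : ‖a + b‖ ^ 2 ≤ (1 + ε) * ‖a‖ ^ 2 + (1 + 1 / ε) * ‖b‖ ^ 2 := by
  have hyoung : 2 * ‖a‖ * ‖b‖ ≤ ε * ‖a‖ ^ 2 + 1 / ε * ‖b‖ ^ 2 := by
    have hsq : ε * ‖a‖ ^ 2 + 1 / ε * ‖b‖ ^ 2 - 2 * ‖a‖ * ‖b‖ = (ε * ‖a‖ - ‖b‖) ^ 2 / ε := by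
      field_simp
      ring
    have := div_nonneg (sq_nonneg (ε * ‖a‖ - ‖b‖)) hε.le
    linarith
  calc ‖a + b‖ ^ 2 ≤ (‖a‖ + ‖b‖) ^ 2 := by
        gcongr
        exact norm_add_le a b
    _ ≤ (1 + ε) * ‖a‖ ^ 2 + (1 + 1 / ε) * ‖b‖ ^ 2 := by linarith

/-- The factor multiplying `|u|²` in the energy cost of replacing `u` by `χu` while changing the
potential by `B`. -/
def localizationError (B : ℝ × ℝ → ℝ × ℝ) (χ : ℝ × ℝ → ℝ) (x : ℝ × ℝ) : ℝ :=
  fderiv ℝ χ x (1, 0) ^ 2 + fderiv ℝ χ x (0, 1) ^ 2 + ((B x).1 ^ 2 + (B x).2 ^ 2) * χ x ^ 2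

section Localization

variable {A A' B : ℝ × ℝ → ℝ × ℝ} {χ : ℝ × ℝ → ℝ} {u : ℝ × ℝ → ℂ}

lemma localizationError_nonneg (x : ℝ × ℝ) : 0 ≤ localizationError B χ x := by
  unfold localizationError
  positivity

lemma continuous_localizationError (hB : Continuous B) (hχ : ContDiff ℝ 1 χ) :
    Continuous (localizationError B χ) := by
  have := hχ.continuous
  have := hχ.continuous_fderiv one_ne_zero
  unfold localizationError
  fun_prop

lemma integrable_localizationError (hB : Continuous B) (hχ : ContDiff ℝ 1 χ)
    (hχc : HasCompactSupport χ) : Integrable (localizationError B χ) := by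
  refine (continuous_localizationError hB hχ).integrable_of_hasCompactSupport
    (.intro hχc fun x hx ↦ ?_)
  have hd : fderiv ℝ χ x = 0 :=
    image_eq_zero_of_notMem_tsupport fun h ↦ hx (tsupport_fderiv_subset ℝ h)
  simp [localizationError, hd, image_eq_zero_of_notMem_tsupport hx]

/- `(∂ⱼ - iA'ⱼ)(χu) = χ (∂ⱼ - iAⱼ)u + (∂ⱼχ + i(Aⱼ - A'ⱼ)χ) u`. -/
lemma magGradSq_smul_le {ε : ℝ} (hε : 0 < ε) {x : ℝ × ℝ} (hχ : DifferentiableAt ℝ χ x)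
    (hu : DifferentiableAt ℝ u x) :
    magGradSq A' (fun y ↦ χ y • u y) x ≤ (1 + ε) * (χ x ^ 2 * magGradSq A u x) +
      (1 + 1 / ε) * (localizationError (A - A') χ x * ‖u x‖ ^ 2) := by
  have hcomponent (v : ℝ × ℝ) (a a' : ℝ) :
      ‖fderiv ℝ (fun y ↦ χ y • u y) x v - Complex.I * a' * (χ x • u x)‖ ^ 2 ≤
        (1 + ε) * (χ x ^ 2 * ‖fderiv ℝ u x v - Complex.I * a * u x‖ ^ 2) +
        (1 + 1 / ε) * ((fderiv ℝ χ x v ^ 2 + (a - a') ^ 2 * χ x ^ 2) * ‖u x‖ ^ 2) := by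
    have hsplit : fderiv ℝ (fun y ↦ χ y • u y) x v - Complex.I * a' * (χ x • u x) =
        χ x • (fderiv ℝ u x v - Complex.I * a * u x) +
          (fderiv ℝ χ x v + ((a - a') * χ x : ℝ) * Complex.I) * u x := by
      have hd : HasFDerivAt (fun y ↦ χ y • u y) _ x := hχ.hasFDerivAt.smul hu.hasFDerivAt
      rw [hd.fderiv]
      simp only [add_apply, smul_apply, ContinuousLinearMap.smulRight_apply, Complex.real_smul]
      push_cast
      ring
    rw [hsplit]
    refine (norm_add_sq_le_of_pos hε _ _).trans_eq ?_
    rw [norm_smul, norm_mul, mul_pow, mul_pow, Real.norm_eq_abs, sq_abs, ← mul_pow (a - a'),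
      ← Complex.normSq_eq_norm_sq (_ + _), Complex.normSq_add_mul_I]
  refine (add_le_add (hcomponent (1, 0) (A x).1 (A' x).1)
    (hcomponent (0, 1) (A x).2 (A' x).2)).trans_eq ?_
  simp only [magGradSq, localizationError, Pi.sub_apply, Prod.fst_sub, Prod.snd_sub]
  ring

lemma glDensity_smul_le {ε α μ ν : ℝ} (hε : 0 < ε) (hα : 0 ≤ α) (hν : 0 ≤ ν) {x : ℝ × ℝ}
    (hχ : DifferentiableAt ℝ χ x) (hχ₁ : |χ x| ≤ 1) (hu : DifferentiableAt ℝ u x) :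
    glDensity A' α μ ν (fun y ↦ χ y • u y) x ≤ χ x ^ 2 * glDensity A (α * (1 + ε)) μ ν u x +
      α * (1 + 1 / ε) * (localizationError (A - A') χ x * ‖u x‖ ^ 2) := by
  have hmag := mul_le_mul_of_nonneg_left (magGradSq_smul_le (A := A) (A' := A') hε hχ hu) hα
  have habs : |χ x| ^ 4 ≤ χ x ^ 2 := by
    rw [← sq_abs]
    exact pow_le_pow_of_le_one (abs_nonneg _) hχ₁ (by norm_num)
  have hquartic : ν * ‖χ x • u x‖ ^ 4 ≤ χ x ^ 2 * (ν * ‖u x‖ ^ 4) := by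
    rw [norm_smul, mul_pow, Real.norm_eq_abs, mul_left_comm]
    exact mul_le_mul_of_nonneg_right habs (mul_nonneg hν (pow_nonneg (norm_nonneg _) 4))
  have hquadratic : μ * ‖χ x • u x‖ ^ 2 = χ x ^ 2 * (μ * ‖u x‖ ^ 2) := by
    rw [norm_smul, mul_pow, Real.norm_eq_abs, sq_abs, mul_left_comm]
  unfold glDensity
  linarith

lemma IsAdmissible.smul_left {U V : Set (ℝ × ℝ)} (hu : IsAdmissible U u) (hχ : ContDiff ℝ 1 χ)
    (hV : tsupport χ ⊆ V) : IsAdmissible V fun x ↦ χ x • u x where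
  contDiff := hχ.smul hu.contDiff
  hasCompactSupport := hu.hasCompactSupport.mono fun x hx hux ↦ hx (by simp only [hux, smul_zero])
  tsupport_subset := (tsupport_smul_subset_left χ u).trans hV

end Localization

section LocalizedEnergy

variable {χ : ℝ × ℝ → ℝ} {u : ℝ × ℝ → ℂ} {ε μ ν : ℝ}

lemma integrable_norm_sq {V : Type*} [NormedAddCommGroup V] {f : ℝ × ℝ → V} (hf : Continuous f)
    (hc : HasCompactSupport f) : Integrable fun x ↦ ‖f x‖ ^ 2 := by
  refine Continuous.integrable_of_hasCompactSupport (by fun_prop) ?_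
  exact hc.mono fun x hx hfx ↦ hx (by simp [hfx])

lemma exists_contDiff_cutoff_Qsq (hε : 0 < ε) : ∃ χ : ℝ × ℝ → ℝ, ContDiff ℝ 1 χ ∧
    HasCompactSupport χ ∧ tsupport χ ⊆ Qsq 1 ∧ (∀ x, |χ x| ≤ 1) ∧
    1 / (1 + ε) ≤ ∫ x, χ x ^ 2 := by
  set ρ := √(1 / (1 + ε))
  have hρ₀ : 0 < ρ := by positivity
  have hρ₁ : ρ < 1 := by
    rw [Real.sqrt_lt' one_pos, div_lt_iff₀ (by linarith)]
    linarith
  let f : ContDiffBump (0 : ℝ × ℝ) := ⟨ρ / 2, (ρ + 1) / 4, by linarith, by linarith⟩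
  have hout : f.rOut < 1 / 2 := by
    change (ρ + 1) / 4 < 1 / 2
    linarith
  have hf : Integrable fun x ↦ f x ^ 2 := by
    simpa using integrable_norm_sq f.continuous f.hasCompactSupport
  refine ⟨f, f.contDiff, f.hasCompactSupport, fun x hx ↦ ?_, fun x ↦ ?_, ?_⟩
  · rw [f.tsupport_eq, mem_closedBall_zero_iff, norm_prod_le_iff] at hx
    exact mem_Qsq.2 ⟨hx.1.trans_lt hout, hx.2.trans_lt hout⟩
  · rw [abs_of_nonneg f.nonneg]
    exact f.le_one
  · have hone : ∀ x ∈ Qsq ρ, f x ^ 2 = 1 := fun x hx ↦ by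
      rw [f.one_of_mem_closedBall, one_pow]
      exact mem_closedBall_zero_iff.2 (norm_prod_le_iff.2 ((mem_Qsq.1 hx).imp le_of_lt le_of_lt))
    calc 1 / (1 + ε) = ρ ^ 2 := (Real.sq_sqrt (by positivity)).symm
      _ = ∫ x in Qsq ρ, f x ^ 2 := by
        rw [setIntegral_congr_fun (isOpen_Qsq ρ).measurableSet hone, setIntegral_const,
          measureReal_Qsq hρ₀.le, smul_eq_mul, mul_one]
      _ ≤ ∫ x, f x ^ 2 := setIntegral_le_integral hf (.of_forall fun x ↦ sq_nonneg _)

lemma integrable_and_integral_comp_sub_mul {a h : ℝ × ℝ → ℝ} (ha : Integrable a)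
    (hh : Integrable h) : Integrable (fun y ↦ ∫ x, a (x - y) * h x) ∧
      ∫ y, ∫ x, a (x - y) * h x = (∫ x, a x) * ∫ x, h x := by
  have hconv : (fun y ↦ ∫ x, a (x - y) * h x) =
      convolution h (fun x ↦ a (-x)) (ContinuousLinearMap.mul ℝ ℝ) volume := by
    ext y
    simp only [convolution_def, ContinuousLinearMap.mul_apply', neg_sub, mul_comm]
  have ha' : Integrable fun x ↦ a (-x) := ha.comp_neg
  refine ⟨hconv ▸ hh.integrable_convolution _ ha', ?_⟩
  rw [hconv, integral_convolution _ hh ha', ContinuousLinearMap.mul_apply',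
    integral_neg_eq_self a, mul_comm]

lemma glEnergy_mul_add {A : ℝ × ℝ → ℝ × ℝ} (hA : Continuous A) (hu : ContDiff ℝ 1 u)
    (hc : HasCompactSupport u) (α s C : ℝ) :
    glEnergy A (s * α) (s * (μ + C)) (s * ν) u =
      s * (glEnergy A α μ ν u - C * ∫ x, ‖u x‖ ^ 2) := by
  unfold glEnergy
  rw [← integral_const_mul C, ← integral_sub (integrable_glDensity hA hu hc α μ ν)
    ((integrable_norm_sq hu.continuous hc).const_mul C), ← integral_const_mul]
  congr 1 with x
  unfold glDensity
  ring

/- Around height `y₂` the potential `Avan` agrees with that of the constant field `y₂` up to the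
error `Avan(x - y)`. -/
lemma localizationError_comp_sub (x y : ℝ × ℝ) :
    localizationError (Avan - Alin y.2 (y.2 ^ 2 / 2)) (fun z ↦ χ (z - y)) x =
      localizationError Avan χ (x - y) := by
  simp only [localizationError, fderiv_comp_sub, Pi.sub_apply, Avan, Alin, Prod.fst_sub,
    Prod.snd_sub]
  ring

/-- An upper bound for the energy, in the constant field `y.2`, of the localization of `u` around
`y` by the cutoff `χ(· - y)`. -/
def localEnergyBound (χ : ℝ × ℝ → ℝ) (ε μ ν : ℝ) (u : ℝ × ℝ → ℂ) (y : ℝ × ℝ) : ℝ :=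
  (∫ x, χ (x - y) ^ 2 * glDensity Avan (1 + ε) μ ν u x) +
    (1 + 1 / ε) * ∫ x, localizationError Avan χ (x - y) * ‖u x‖ ^ 2

lemma glEnergy_smul_comp_sub_le (hχ : ContDiff ℝ 1 χ) (hχ₁ : ∀ x, |χ x| ≤ 1)
    (hε : 0 < ε) (hν : 0 ≤ ν) (hu : ContDiff ℝ 1 u) (hc : HasCompactSupport u) (y : ℝ × ℝ) :
    glEnergy (Alin y.2 (y.2 ^ 2 / 2)) 1 μ ν (fun x ↦ χ (x - y) • u x) ≤
      localEnergyBound χ ε μ ν u y := by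
  have hχy : ContDiff ℝ 1 fun x ↦ χ (x - y) := hχ.comp (contDiff_id.sub contDiff_const)
  have hadm : IsAdmissible univ fun x ↦ χ (x - y) • u x :=
    IsAdmissible.smul_left ⟨hu, hc, subset_univ _⟩ hχy (subset_univ _)
  have hdens : Integrable fun x ↦ χ (x - y) ^ 2 * glDensity Avan (1 + ε) μ ν u x :=
    (integrable_glDensity continuous_Avan hu hc _ _ _).bdd_mul (c := 1)
      (hχy.continuous.pow 2).aestronglyMeasurable (.of_forall fun x ↦ by
        rw [norm_pow, Real.norm_eq_abs]
        exact pow_le_one₀ (abs_nonneg _) (hχ₁ _))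
  have herr : Integrable fun x ↦ localizationError Avan χ (x - y) * ‖u x‖ ^ 2 := by
    have := (continuous_localizationError continuous_Avan hχ).comp (continuous_sub_right y)
    have := hu.continuous
    refine Continuous.integrable_of_hasCompactSupport (by fun_prop) ?_
    exact hc.mono fun x hx hux ↦ hx (by simp [hux])
  unfold localEnergyBound
  rw [← integral_const_mul, ← integral_add hdens (herr.const_mul _)]
  refine integral_mono (integrable_glDensity (continuous_Alin _ _) hadm.contDiff
    hadm.hasCompactSupport _ _ _) (hdens.add (herr.const_mul _)) fun x ↦ ?_
  have hpoint := glDensity_smul_le (A := Avan) (A' := Alin y.2 (y.2 ^ 2 / 2)) (μ := μ) hε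
    zero_le_one hν (hχy.differentiable one_ne_zero x) (hχ₁ _) (hu.differentiable one_ne_zero x)
  rwa [localizationError_comp_sub, one_mul, one_mul] at hpoint

lemma integrable_and_integral_localEnergyBound (hχ : ContDiff ℝ 1 χ) (hχc : HasCompactSupport χ)
    (hu : ContDiff ℝ 1 u) (hc : HasCompactSupport u) :
    Integrable (localEnergyBound χ ε μ ν u) ∧
      ∫ y, localEnergyBound χ ε μ ν u y =
        (∫ x, χ x ^ 2) * glEnergy Avan (1 + ε) μ ν u +
          (1 + 1 / ε) * ((∫ x, localizationError Avan χ x) * ∫ x, ‖u x‖ ^ 2) := by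
  have hχ2 : Integrable fun x ↦ χ x ^ 2 := by
    simpa using integrable_norm_sq hχ.continuous hχc
  obtain ⟨hi, hdens⟩ := integrable_and_integral_comp_sub_mul hχ2
    (integrable_glDensity continuous_Avan hu hc (1 + ε) μ ν)
  obtain ⟨hi', herr⟩ := integrable_and_integral_comp_sub_mul
    (integrable_localizationError continuous_Avan hχ hχc) (integrable_norm_sq hu.continuous hc)
  refine ⟨hi.add (hi'.const_mul _), ?_⟩
  unfold localEnergyBound
  rw [integral_add hi (hi'.const_mul _), integral_const_mul, hdens, herr, glEnergy]

end LocalizedEnergy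

namespace IsLimitG

variable {g : ℝ → ℝ} {χ : ℝ × ℝ → ℝ} {u : ℝ × ℝ → ℂ} {ε μ ν R : ℝ}

lemma le_groundEnergy_Alin_cell (hg : IsLimitG g) {c : ℝ} (hc : c ≠ 0) (hμ : 0 < μ)
    (hν : 0 < ν) (a : ℝ) (p : ℝ × ℝ) :
    μ ^ 2 / (2 * ν) * extendedDensity g |c / μ| ≤ groundEnergy (Alin c a) 1 μ ν (cell p 1) := by
  have hcμ : 0 < |c| / μ := div_pos (abs_pos.2 hc) hμ
  have hle := hg.le_eD_div hcμ (Real.sqrt_pos.2 (abs_pos.2 hc))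
  rw [Real.sq_sqrt (abs_nonneg c), eD_eq_groundEnergy hcμ.le] at hle
  rw [groundEnergy_Alin_cell hc hμ hν, mul_one, abs_div, abs_of_pos hμ,
    extendedDensity_of_pos hcμ]
  gcongr

lemma indicator_mul_extendedDensity_le (hg : IsLimitG g) (hχ : ContDiff ℝ 1 χ)
    (hχs : tsupport χ ⊆ Qsq 1) (hχ₁ : ∀ x, |χ x| ≤ 1) (hε : 0 < ε) (hμ : 0 < μ) (hν : 0 < ν)
    (hu : IsAdmissible (Strip R) u) {y : ℝ × ℝ} (hy : y.2 ≠ 0) :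
    (Ioo (-((R + 1) / 2)) ((R + 1) / 2)).indicator (fun _ ↦ μ ^ 2 / (2 * ν)) y.1 *
      extendedDensity g |y.2 / μ| ≤ localEnergyBound χ ε μ ν u y := by
  refine le_trans ?_ (glEnergy_smul_comp_sub_le hχ hχ₁ hε hν.le hu.contDiff
    hu.hasCompactSupport y)
  by_cases hmem : y.1 ∈ Ioo (-((R + 1) / 2)) ((R + 1) / 2)
  · have htsupport : tsupport (fun x ↦ χ (x - y)) ⊆ cell y 1 :=
      (tsupport_comp_subset_preimage χ (continuous_sub_right y)).trans fun x hx ↦ hχs hx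
    have hadm : IsAdmissible (cell y 1) fun x ↦ χ (x - y) • u x :=
      hu.smul_left (hχ.comp (contDiff_id.sub contDiff_const)) htsupport
    rw [indicator_of_mem hmem]
    refine (hg.le_groundEnergy_Alin_cell hy hμ hν _ y).trans (groundEnergy_le ?_ hadm)
    exact bddBelow_admissibleEnergies (isOpen_cell y 1).measurableSet
      (isBounded_cell y 1).measure_lt_top.ne zero_le_one hν (continuous_Alin _ _)
  · have hzero : (fun x ↦ χ (x - y) • u x) = 0 := by
      ext1 x
      by_contra hne
      obtain ⟨hχx, hux⟩ := smul_ne_zero_iff.1 hne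
      have h₁ := (mem_Qsq.1 (hχs (subset_tsupport _ hχx))).1
      have h₂ := mem_Strip.1 (hu.tsupport_subset (subset_tsupport _ hux))
      rw [abs_lt] at h₁ h₂
      exact hmem ⟨by linarith [h₁.2, h₂.1, Prod.fst_sub x y],
        by linarith [h₁.1, h₂.2, Prod.fst_sub x y]⟩
    rw [indicator_of_notMem hmem, zero_mul, hzero]
    simp [glEnergy, glDensity_zero]

lemma mul_lineDensity_le_integral_localEnergyBound (hg : IsLimitG g) (hχ : ContDiff ℝ 1 χ)
    (hχc : HasCompactSupport χ) (hχs : tsupport χ ⊆ Qsq 1) (hχ₁ : ∀ x, |χ x| ≤ 1) (hε : 0 < ε)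
    (hμ : 0 < μ) (hν : 0 < ν) (hR : 0 ≤ R) (hu : IsAdmissible (Strip R) u) :
    (R + 1) * (μ ^ 2 / (2 * ν)) * (μ * lineDensity g) ≤
      ∫ y, localEnergyBound χ ε μ ν u y := by
  set S := Ioo (-((R + 1) / 2)) ((R + 1) / 2)
  have hind : Integrable (S.indicator fun _ ↦ μ ^ 2 / (2 * ν)) :=
    (integrableOn_const (by simp [S])).integrable_indicator measurableSet_Ioo
  have hdens : Integrable fun t ↦ extendedDensity g |t / μ| :=
    (integrable_extendedDensity_abs hg).comp_div hμ.ne'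
  have hae : ∀ᵐ y : ℝ × ℝ, y.2 ≠ 0 := by
    have hnull : (volume : Measure (ℝ × ℝ)) (univ ×ˢ {0}) = 0 := by
      simp [Measure.volume_eq_prod]
    filter_upwards [measure_eq_zero_iff_ae_notMem.1 hnull] with y hy hy₂
    exact hy ⟨mem_univ _, hy₂⟩
  calc (R + 1) * (μ ^ 2 / (2 * ν)) * (μ * lineDensity g)
      = ∫ y : ℝ × ℝ, S.indicator (fun _ ↦ μ ^ 2 / (2 * ν)) y.1 *
          extendedDensity g |y.2 / μ| := by
        rw [Measure.volume_eq_prod, integral_prod_mul (S.indicator fun _ ↦ μ ^ 2 / (2 * ν))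
          fun t ↦ extendedDensity g |t / μ|, integral_indicator measurableSet_Ioo,
          setIntegral_const, Measure.integral_comp_div (fun t ↦ extendedDensity g |t|) μ,
          abs_of_pos hμ, Real.volume_real_Ioo_of_le (by linarith), lineDensity, smul_eq_mul,
          smul_eq_mul]
        ring
    _ ≤ ∫ y, localEnergyBound χ ε μ ν u y := by
        refine integral_mono_ae (hind.mul_prod hdens)
          (integrable_and_integral_localEnergyBound hχ hχc hu.contDiff hu.hasCompactSupport).1 ?_
        filter_upwards [hae] with y hy
        exact hg.indicator_mul_extendedDensity_le hχ hχs hχ₁ hε hμ hν hu hy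

/- The constant `C` absorbs the localization error into a shift of the quadratic coefficient. -/
lemma exists_mul_lineDensity_le_glEnergy_Avan (hg : IsLimitG g) (hε : 0 < ε) :
    ∃ C, 0 ≤ C ∧ ∀ R l : ℝ, 0 ≤ R → 0 < l → ∀ u, IsAdmissible (Strip R) u →
      (R + 1) * ((1 + ε) ^ 2 * (l + C) ^ 3 / l) * lineDensity g ≤
        glEnergy Avan 1 l (l / 2) u := by
  obtain ⟨χ, hχ, hχc, hχs, hχ₁, hm⟩ := exists_contDiff_cutoff_Qsq hε
  set m := ∫ x, χ x ^ 2 with hm_def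
  have hm₀ : 0 < m := lt_of_lt_of_le (by positivity) hm
  set K := ∫ x, localizationError Avan χ x with hK
  have hK₀ : 0 ≤ K := integral_nonneg fun x ↦ localizationError_nonneg x
  refine ⟨K / (m * ε), by positivity, fun R l hR hl u hu ↦ ?_⟩
  set C := K / (m * ε) with hC
  have hC₀ : 0 ≤ C := by positivity
  have hbound := hg.mul_lineDensity_le_integral_localEnergyBound hχ hχc hχs hχ₁ hε
    (μ := (1 + ε) * (l + C)) (ν := (1 + ε) * (l / 2)) (by positivity) (by positivity) hR hu
  have hsplit := glEnergy_mul_add (μ := l) (ν := l / 2) continuous_Avan hu.contDiff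
    hu.hasCompactSupport 1 (1 + ε) C
  rw [mul_one] at hsplit
  rw [(integrable_and_integral_localEnergyBound hχ hχc hu.contDiff hu.hasCompactSupport).2,
    hsplit, ← hm_def, ← hK] at hbound
  set P := (R + 1) * ((1 + ε) * (l + C) ^ 3 / l) * lineDensity g with hP
  have hP_nonpos : P ≤ 0 := mul_nonpos_of_nonneg_of_nonpos (by positivity) (lineDensity_nonpos hg)
  have hPm : P ≤ m * glEnergy Avan 1 l (l / 2) u := by
    have hε₁ : 0 < 1 + ε := by positivity
    refine le_of_mul_le_mul_left (le_of_eq_of_le ?_ (hbound.trans_eq ?_)) hε₁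
    · rw [hP]
      field_simp
    · rw [hC]
      field_simp
      ring
  have hone : 1 ≤ (1 + ε) * m := by
    rwa [div_le_iff₀ (by positivity), mul_comm] at hm
  refine le_of_mul_le_mul_left ?_ hm₀
  calc m * ((R + 1) * ((1 + ε) ^ 2 * (l + C) ^ 3 / l) * lineDensity g)
      = (1 + ε) * m * P := by rw [hP]; ring
    _ ≤ P := mul_le_of_one_le_left hP_nonpos hone
    _ ≤ m * glEnergy Avan 1 l (l / 2) u := hPm

end IsLimitG

/-! ### The strip energy -/

lemma exists_height_cutoffs : ∃ (χ : ℕ → ℝ × ℝ → ℝ) (M : ℝ), ∀ n,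
    ContDiff ℝ 1 (χ n) ∧ (∀ x, |χ n x| ≤ 1) ∧ (∀ x, |x.2| < (n : ℝ) + 1 → χ n x = 1) ∧
    (∀ x, 2 * ((n : ℝ) + 1) ≤ |x.2| → χ n x = 0) ∧ ∀ x, localizationError 0 (χ n) x ≤ M := by
  let f : ContDiffBump (0 : ℝ) := ⟨1, 2, one_pos, one_lt_two⟩
  obtain ⟨D, hD⟩ := (f.hasCompactSupport.deriv).exists_bound_of_continuous
    ((f.contDiff (n := 1)).continuous_deriv le_rfl)
  have hnorm (n : ℕ) (x : ℝ × ℝ) : dist (x.2 / (n + 1)) 0 = |x.2| / (n + 1) := by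
    rw [dist_zero_right, Real.norm_eq_abs, abs_div, abs_of_pos (by positivity : (0 : ℝ) < n + 1)]
  refine ⟨fun n x ↦ f (x.2 / (n + 1)), D ^ 2, fun n ↦ ⟨?_, fun x ↦ ?_, fun x hx ↦ ?_,
    fun x hx ↦ ?_, fun x ↦ ?_⟩⟩
  · exact f.contDiff.comp (contDiff_snd.div_const _)
  · rw [abs_of_nonneg f.nonneg]
    exact f.le_one
  · refine f.one_of_mem_closedBall ?_
    rw [Metric.mem_closedBall, hnorm, div_le_iff₀ (by positivity)]
    exact hx.le.trans_eq (one_mul _).symm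
  · refine f.zero_of_le_dist ?_
    rwa [hnorm, le_div_iff₀ (by positivity)]
  · have hd (v : ℝ × ℝ) : fderiv ℝ (fun x : ℝ × ℝ ↦ f (x.2 / (n + 1))) x v =
        deriv f (x.2 / (n + 1)) * (v.2 / (n + 1)) := by
      have hf : HasDerivAt f _ (x.2 / (n + 1)) :=
        ((f.contDiff (n := 1)).differentiable one_ne_zero _).hasDerivAt
      have hdiv := (hasFDerivAt_snd (𝕜 := ℝ) (p := x)).mul_const ((n : ℝ) + 1)⁻¹
      simp only [← div_eq_mul_inv] at hdiv
      have hcomp := hf.comp_hasFDerivAt (f := fun x : ℝ × ℝ ↦ x.2 / (n + 1)) x hdiv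
      rw [show (fun x : ℝ × ℝ ↦ f (x.2 / (n + 1))) = f ∘ fun x ↦ x.2 / (n + 1) from rfl,
        hcomp.fderiv]
      simp [div_eq_mul_inv, mul_comm]
    have hinv : |(1 : ℝ) / (n + 1)| ≤ 1 := by
      rw [abs_of_pos (by positivity), div_le_one (by positivity)]
      linarith [(Nat.cast_nonneg n : (0 : ℝ) ≤ n)]
    simp only [localizationError, hd, Pi.zero_apply, Prod.fst_zero, Prod.snd_zero]
    have : |deriv f (x.2 / (n + 1)) * (1 / (n + 1))| ≤ |D| := by
      rw [abs_mul]
      exact (mul_le_of_le_one_right (abs_nonneg _) hinv).trans ((hD _).trans (le_abs_self D))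
    simpa using sq_le_sq.2 this

lemma abs_glDensity_le {A : ℝ × ℝ → ℝ × ℝ} {α μ ν : ℝ} (hα : 0 ≤ α) (hμ : 0 ≤ μ) (hν : 0 ≤ ν)
    (u : ℝ × ℝ → ℂ) (x : ℝ × ℝ) :
    |glDensity A α μ ν u x| ≤ α * magGradSq A u x + μ * ‖u x‖ ^ 2 + ν * ‖u x‖ ^ 4 := by
  have h₁ := mul_nonneg hα (magGradSq_nonneg A u x)
  have h₂ := mul_nonneg hμ (sq_nonneg ‖u x‖)
  have h₃ := mul_nonneg hν (pow_nonneg (norm_nonneg (u x)) 4)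
  unfold glDensity
  rw [abs_le]
  constructor <;> linarith

lemma abs_glDensity_smul_le {A : ℝ × ℝ → ℝ × ℝ} {χ : ℝ × ℝ → ℝ} {u : ℝ × ℝ → ℂ} {μ ν M : ℝ}
    (hμ : 0 ≤ μ) (hν : 0 ≤ ν) {x : ℝ × ℝ} (hχ : DifferentiableAt ℝ χ x) (hχ₁ : |χ x| ≤ 1)
    (hM : localizationError 0 χ x ≤ M) (hu : DifferentiableAt ℝ u x) :
    |glDensity A 1 μ ν (fun y ↦ χ y • u y) x| ≤
      2 * magGradSq A u x + (2 * M + μ) * ‖u x‖ ^ 2 + ν * ‖u x‖ ^ 4 := by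
  have hmag := magGradSq_smul_le (A := A) (A' := A) one_pos hχ hu
  rw [sub_self] at hmag
  have hsq : χ x ^ 2 * magGradSq A u x ≤ magGradSq A u x :=
    mul_le_of_le_one_left (magGradSq_nonneg A u x) ((sq_le_one_iff_abs_le_one _).2 hχ₁)
  have herr := mul_le_mul_of_nonneg_right hM (sq_nonneg ‖u x‖)
  have hnorm : ‖χ x • u x‖ ≤ ‖u x‖ := by
    rw [norm_smul]
    exact mul_le_of_le_one_left (norm_nonneg _) hχ₁
  have h₂ : μ * ‖χ x • u x‖ ^ 2 ≤ μ * ‖u x‖ ^ 2 := by gcongr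
  have h₄ : ν * ‖χ x • u x‖ ^ 4 ≤ ν * ‖u x‖ ^ 4 := by gcongr
  refine (abs_glDensity_le zero_le_one hμ hν _ x).trans ?_
  linarith

section Strip

variable {u : ℝ × ℝ → ℂ} {μ ν R L : ℝ}

lemma MemH1mag0.of_isAdmissible (hu : IsAdmissible (Strip R) u) : MemH1mag0 R u := by
  refine ⟨hu.contDiff, (integrable_norm_sq hu.contDiff.continuous
    hu.hasCompactSupport).integrableOn, (integrable_magGradSq continuous_Avan hu.contDiff
    hu.hasCompactSupport).integrableOn, ?_, fun x hx ↦ ?_⟩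
  · have := hu.contDiff.continuous
    refine (Continuous.integrable_of_hasCompactSupport (by fun_prop) ?_).integrableOn
    exact hu.hasCompactSupport.mono fun x hx hux ↦ hx (by simp [hux])
  · rw [(isOpen_Strip R).frontier_eq] at hx
    exact image_eq_zero_of_notMem_tsupport fun h ↦ hx.2 (hu.tsupport_subset h)

lemma groundEnergy_Strip_le_setIntegral_of_eq_zero (hν : 0 ≤ ν)
    (hb : BddBelow (admissibleEnergies Avan 1 μ ν (Strip R))) {T : ℝ}
    (hu : ContDiff ℝ 1 u) (hu₀ : ∀ x ∈ frontier (Strip R), u x = 0)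
    (hT : ∀ x, T ≤ |x.2| → u x = 0) :
    groundEnergy Avan 1 μ ν (Strip R) ≤ ∫ x in Strip R, glDensity Avan 1 μ ν u x := by
  set K := Icc (-R / 2) (R / 2) ×ˢ Icc (-T) T
  have hK : IsCompact K := isCompact_Icc.prod isCompact_Icc
  have hclosure : closure (Strip R) ⊆ Icc (-R / 2) (R / 2) ×ˢ univ :=
    closure_minimal (prod_mono_left Ioo_subset_Icc_self) (isClosed_Icc.prod isClosed_univ)
  have hlevel : ∀ δ > 0, closure (Strip R) ∩ {x | δ ≤ ‖u x‖} ⊆ K := fun δ hδ x hx ↦ by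
    refine ⟨(hclosure hx.1).1, abs_le.1 (le_of_not_ge fun h ↦ ?_)⟩
    have hδu : δ ≤ ‖u x‖ := hx.2
    rw [hT x h, norm_zero] at hδu
    exact hδ.not_ge hδu
  have hint {f : ℝ × ℝ → ℝ} (hf : Continuous f) (hf₀ : ∀ x, T < |x.2| → f x = 0) :
      IntegrableOn f (Strip R) := by
    refine (hf.continuousOn.integrableOn_compact hK).of_forall_sdiff_eq_zero
      (isOpen_Strip R).measurableSet fun x hx ↦ hf₀ x (not_le.1 fun h ↦ hx.2 ?_)
    exact ⟨Ioo_subset_Icc_self hx.1.1, abs_le.1 h⟩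
  refine groundEnergy_le_setIntegral (isOpen_Strip R) continuous_Avan zero_le_one hν hb hu hu₀
    (fun δ hδ ↦ hK.of_isClosed_subset (isClosed_closure.inter
      (isClosed_le continuous_const hu.continuous.norm)) (hlevel δ hδ))
    (hint (continuous_glDensity continuous_Avan hu _ _ _) fun x hx ↦ ?_)
    (hint (hu.continuous.norm.pow 2) fun x hx ↦ by simp [hT x hx.le])
  have hopen : IsOpen {x : ℝ × ℝ | T < |x.2|} := isOpen_lt continuous_const (by fun_prop)
  have hev : u =ᶠ[𝓝 x] 0 := by
    filter_upwards [hopen.mem_nhds hx] with z hz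
    exact hT z (le_of_lt hz)
  rw [glDensity_congr hev, glDensity_zero]

lemma groundEnergy_Strip_le_setIntegral (hμ : 0 ≤ μ) (hν : 0 ≤ ν)
    (hb : BddBelow (admissibleEnergies Avan 1 μ ν (Strip R))) (hu : MemH1mag0 R u) :
    groundEnergy Avan 1 μ ν (Strip R) ≤ ∫ x in Strip R, glDensity Avan 1 μ ν u x := by
  obtain ⟨hu₁, h₂, hmag, h₄, hu₀⟩ := hu
  obtain ⟨χ, M, hχ⟩ := exists_height_cutoffs
  choose hχ hχ₁ hχone hχzero hχerr using hχ
  have hlim : Tendsto (fun n ↦ ∫ x in Strip R, glDensity Avan 1 μ ν (fun y ↦ χ n y • u y) x) atTop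
      (𝓝 (∫ x in Strip R, glDensity Avan 1 μ ν u x)) := by
    refine tendsto_integral_of_dominated_convergence (fun x ↦ 2 * magGradSq Avan u x +
      (2 * M + μ) * ‖u x‖ ^ 2 + ν * ‖u x‖ ^ 4) (fun n ↦ ?_)
      (((hmag.const_mul 2).add (h₂.const_mul _)).add (h₄.const_mul _))
      (fun n ↦ .of_forall fun x ↦ ?_) (.of_forall fun x ↦ ?_)
    · exact (continuous_glDensity continuous_Avan ((hχ n).smul hu₁) _ _ _).aestronglyMeasurable
    · exact abs_glDensity_smul_le hμ hν ((hχ n).differentiable one_ne_zero x) (hχ₁ n x)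
        (hχerr n x) (hu₁.differentiable one_ne_zero x)
    · refine tendsto_const_nhds.congr' ?_
      obtain ⟨N, hN⟩ := exists_nat_gt |x.2|
      filter_upwards [eventually_ge_atTop N] with n hn
      have hopen : IsOpen {z : ℝ × ℝ | |z.2| < n + 1} := isOpen_lt (by fun_prop) continuous_const
      have hx : |x.2| < n + 1 := hN.trans_le ((Nat.cast_le.2 hn).trans (by linarith))
      refine glDensity_congr ?_
      filter_upwards [hopen.mem_nhds hx] with z hz
      rw [hχone n z hz, one_smul]
  refine ge_of_tendsto' hlim fun n ↦ groundEnergy_Strip_le_setIntegral_of_eq_zero hν hb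
    ((hχ n).smul hu₁) (fun x hx ↦ ?_) (T := 2 * (n + 1)) fun x hx ↦ ?_
  · simp only [hu₀ x hx, smul_zero]
  · simp only [hχzero n x hx, zero_smul]

end Strip

section StripEnergy

variable {g : ℝ → ℝ} {l L R : ℝ}

lemma IsLimitG.bddBelow_admissibleEnergies_Strip (hg : IsLimitG g) (hl : 0 < l) (hR : 0 ≤ R) :
    BddBelow (admissibleEnergies Avan 1 l (l / 2) (Strip R)) := by
  obtain ⟨C, -, hC⟩ := hg.exists_mul_lineDensity_le_glEnergy_Avan one_pos
  exact ⟨_, forall_mem_image.2 (hC R l hR hl)⟩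

lemma egs_eq_groundEnergy (hg : IsLimitG g) (hL : 0 < L) (hR : 0 ≤ R) :
    egs L R = groundEnergy Avan 1 (L ^ (-(2 : ℝ) / 3)) (L ^ (-(2 : ℝ) / 3) / 2) (Strip R) := by
  have hl : 0 < L ^ (-(2 : ℝ) / 3) := Real.rpow_pos_of_pos hL _
  set l := L ^ (-(2 : ℝ) / 3) with hl_def
  have henergy (u : ℝ × ℝ → ℂ) : Estrip L R u = ∫ x in Strip R, glDensity Avan 1 l (l / 2) u x := by
    simp only [Estrip, stripDensity, glDensity, one_mul, ← hl_def]
  have hle (u : ℝ × ℝ → ℂ) (hu : MemH1mag0 R u) :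
      groundEnergy Avan 1 l (l / 2) (Strip R) ≤ Estrip L R u := by
    rw [henergy]
    exact groundEnergy_Strip_le_setIntegral hl.le (by positivity)
      (hg.bddBelow_admissibleEnergies_Strip hl hR) hu
  refine le_antisymm (le_groundEnergy fun u hu ↦ ?_) ?_
  · refine csInf_le ⟨_, forall_mem_image.2 hle⟩ ⟨u, .of_isAdmissible hu, ?_⟩
    rw [henergy, setIntegral_glDensity hu.tsupport_subset]
  · exact le_csInf (image_nonempty.2 ⟨0, .of_isAdmissible (.zero _)⟩) (forall_mem_image.2 hle)

lemma groundEnergy_Avan_cell_le {ε μ ν : ℝ} (hε : 0 < ε) (hν : 0 < ν) (p : ℝ × ℝ) :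
    groundEnergy Avan 1 μ ν (cell p 1) ≤
      groundEnergy (Alin p.2 (p.2 ^ 2 / 2)) (1 + ε) (μ - (1 + 1 / ε) / 64) ν (cell p 1) := by
  refine le_groundEnergy fun u hu ↦ ?_
  refine (groundEnergy_le (bddBelow_admissibleEnergies (isOpen_cell p 1).measurableSet
    (isBounded_cell p 1).measure_lt_top.ne zero_le_one hν continuous_Avan) hu).trans ?_
  refine integral_mono (integrable_glDensity continuous_Avan hu.contDiff hu.hasCompactSupport _ _ _)
    (integrable_glDensity (continuous_Alin _ _) hu.contDiff hu.hasCompactSupport _ _ _) fun x ↦ ?_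
  by_cases hx : x ∈ tsupport u
  · have hmem := (mem_cell.1 (hu.tsupport_subset hx)).2
    have hmag := magGradSq_smul_le (A := Alin p.2 (p.2 ^ 2 / 2)) (A' := Avan) (χ := fun _ ↦ 1) hε
      (differentiableAt_const 1) (hu.contDiff.differentiable one_ne_zero x)
    -- `Avan` and `Alin` differ by `(x₂ - p₂)² / 2 ≤ 1 / 8` on the cell.
    have herr : localizationError (Alin p.2 (p.2 ^ 2 / 2) - Avan) (fun _ ↦ 1) x ≤ 1 / 64 := by
      have hsq : (x.2 - p.2) ^ 2 ≤ (1 / 2) ^ 2 :=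
        sq_le_sq' (abs_lt.1 hmem).1.le (abs_lt.1 hmem).2.le
      have hfour : ((x.2 - p.2) ^ 2) ^ 2 ≤ ((1 / 2) ^ 2) ^ 2 := by gcongr
      simp only [localizationError, Alin, Avan, Pi.sub_apply, Prod.fst_sub, Prod.snd_sub,
        fderiv_fun_const, Pi.zero_apply, zero_apply]
      linear_combination hfour / 4
    have hmul : (1 + 1 / ε) * (localizationError (Alin p.2 (p.2 ^ 2 / 2) - Avan) (fun _ ↦ 1) x *
        ‖u x‖ ^ 2) ≤ (1 + 1 / ε) * (1 / 64 * ‖u x‖ ^ 2) := by gcongr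
    simp only [one_smul, one_pow, one_mul] at hmag
    simp only [glDensity]
    linarith
  · simp only [glDensity_of_notMem_tsupport hx, le_refl]

/-- The rescaled ground state energy of a unit square in the constant field `c`, with coupling `M`:
the energy per unit area of a square of side `√c` in reduced field `c / M`. -/
def cellDensity (M c : ℝ) : ℝ := eD (c / M) (√c) / c

/-- The step function sampling `cellDensity M` at the midpoints of the integer intervals. -/
def stepDensity (M s : ℝ) : ℝ := cellDensity M |(⌊s⌋ : ℝ) + 1 / 2|

variable {M : ℝ}

lemma groundEnergy_Avan_cell_le_mul_cellDensity {ε : ℝ} (hε : 0 < ε)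
    (hl : (1 + 1 / ε) / 64 < l) {p : ℝ × ℝ} (hp : p.2 ≠ 0) :
    groundEnergy Avan 1 l (l / 2) (cell p 1) ≤ (l - (1 + 1 / ε) / 64) ^ 2 / l *
      cellDensity ((l - (1 + 1 / ε) / 64) / (1 + ε)) |p.2| := by
  have hl₀ : 0 < l := lt_trans (by positivity) hl
  have hμ := sub_pos.2 hl
  have hbpos : 0 < |p.2| * (1 + ε) / (l - (1 + 1 / ε) / 64) :=
    div_pos (mul_pos (abs_pos.2 hp) (by positivity)) hμ
  refine (groundEnergy_Avan_cell_le hε (half_pos hl₀) p).trans_eq ?_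
  rw [groundEnergy_Alin_cell hp hμ (half_pos hl₀), ← eD_eq_groundEnergy hbpos.le, cellDensity,
    mul_div_cancel₀ l two_ne_zero, div_div_eq_mul_div]

lemma groundEnergy_Avan_Strip_le (hg : IsLimitG g) {ε : ℝ} (hε : 0 < ε)
    (hl : (1 + 1 / ε) / 64 < l) (N K : ℕ) :
    groundEnergy Avan 1 l (l / 2) (Strip N) ≤ N * ((l - (1 + 1 / ε) / 64) ^ 2 / l *
      ∑ j ∈ Finset.range (2 * K),
        cellDensity ((l - (1 + 1 / ε) / 64) / (1 + ε)) |tileCenter (2 * K) 1 j|) := by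
  have hl₀ : 0 < l := lt_trans (by positivity) hl
  let s := Finset.range N ×ˢ Finset.range (2 * K)
  let p : ℕ × ℕ → ℝ × ℝ := fun i ↦ (tileCenter N 1 i.1, tileCenter (2 * K) 1 i.2)
  have hdisjoint : (s : Set (ℕ × ℕ)).PairwiseDisjoint fun i ↦ cell (p i) 1 := by
    intro i _ j _ hij
    refine cell_disjoint ?_
    rcases not_and_or.1 (Prod.ext_iff.not.1 hij) with h | h
    · exact .inl (le_abs_tileCenter_sub zero_le_one h)
    · exact .inr (le_abs_tileCenter_sub zero_le_one h)
  have hsub (i : ℕ × ℕ) (hi : i ∈ s) : cell (p i) 1 ⊆ Strip N := by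
    intro x hx
    rw [mem_cell] at hx
    rw [mem_Strip]
    have hcenter := abs_tileCenter_add_half_le zero_le_one
      (Finset.mem_range.1 (Finset.mem_product.1 hi).1)
    have := abs_sub_abs_le_abs_sub x.1 (tileCenter N 1 i.1)
    linarith [hx.1]
  have hcenter (j : ℕ) : tileCenter (2 * K) 1 j ≠ 0 := by
    have hodd : (2 * j + 1 : ℝ) ≠ 2 * K := mod_cast by lia
    intro h
    rw [tileCenter] at h
    push_cast at h
    exact hodd (by linarith)
  calc groundEnergy Avan 1 l (l / 2) (Strip N)
      ≤ ∑ i ∈ s, groundEnergy Avan 1 l (l / 2) (cell (p i) 1) :=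
        groundEnergy_le_sum_of_pairwiseDisjoint continuous_Avan
          (hg.bddBelow_admissibleEnergies_Strip hl₀ N.cast_nonneg) hdisjoint hsub
    _ ≤ ∑ i ∈ s, (l - (1 + 1 / ε) / 64) ^ 2 / l *
          cellDensity ((l - (1 + 1 / ε) / 64) / (1 + ε)) |(p i).2| :=
        Finset.sum_le_sum fun i _ ↦ groundEnergy_Avan_cell_le_mul_cellDensity hε hl (hcenter i.2)
    _ = N * ((l - (1 + 1 / ε) / 64) ^ 2 / l * ∑ j ∈ Finset.range (2 * K),
          cellDensity ((l - (1 + 1 / ε) / 64) / (1 + ε)) |tileCenter (2 * K) 1 j|) := by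
        simp only [s, p, Finset.sum_product, Finset.sum_const, Finset.card_range, nsmul_eq_mul,
          Finset.mul_sum]

lemma cellDensity_mem_Icc (hM : 0 ≤ M) {c : ℝ} (hc : 0 < c) :
    cellDensity M c ∈ Icc (-(1 / 2)) 0 := by
  have hb : 0 ≤ c / M := by positivity
  refine ⟨(le_div_iff₀ hc).2 ?_, div_nonpos_of_nonpos_of_nonneg (eD_nonpos hb) hc.le⟩
  simpa only [Real.sq_sqrt hc.le] using neg_sq_div_two_le_eD hb (Real.sqrt_nonneg c)

lemma cellDensity_of_le (hM : 0 < M) {c : ℝ} (hc : M ≤ c) : cellDensity M c = 0 := by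
  rw [cellDensity, eD_eq_zero ((one_le_div hM).2 hc), zero_div]

lemma abs_intCast_add_half_pos (n : ℤ) : 0 < |(n : ℝ) + 1 / 2| := by
  have hodd : (2 * n + 1 : ℝ) ≠ 0 := mod_cast by lia
  exact abs_pos.2 fun h ↦ hodd (by linarith)

lemma abs_floor_add_half_sub_le (s : ℝ) : |(⌊s⌋ + 1 / 2 : ℝ) - s| ≤ 1 / 2 := by
  rw [abs_le]
  constructor <;> linarith [Int.floor_le s, Int.lt_floor_add_one s]

lemma measurable_stepDensity (M : ℝ) : Measurable (stepDensity M) :=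
  (Measurable.of_discrete (f := fun n : ℤ ↦ cellDensity M |(n : ℝ) + 1 / 2|)).comp
    Int.measurable_floor

lemma abs_stepDensity_le (hM : 0 ≤ M) (s : ℝ) : |stepDensity M s| ≤ 1 / 2 :=
  have hmem := cellDensity_mem_Icc hM (abs_intCast_add_half_pos ⌊s⌋)
  abs_le.2 ⟨hmem.1, hmem.2.trans one_half_pos.le⟩

lemma stepDensity_of_le (hM : 0 < M) {s : ℝ} (hs : M + 1 / 2 ≤ |s|) : stepDensity M s = 0 := by
  refine cellDensity_of_le hM ?_
  have := abs_sub_abs_le_abs_sub s (⌊s⌋ + 1 / 2)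
  rw [abs_sub_comm] at this
  linarith [abs_floor_add_half_sub_le s]

lemma intervalIntegral_stepDensity (M : ℝ) (n : ℤ) :
    ∫ s in (n : ℝ)..n + 1, stepDensity M s = cellDensity M |(n : ℝ) + 1 / 2| := by
  have hae : ∀ᵐ s, s ∈ uIoc (n : ℝ) (n + 1) →
      stepDensity M s = cellDensity M |(n : ℝ) + 1 / 2| := by
    filter_upwards [(countable_singleton ((n : ℝ) + 1)).ae_notMem volume] with s hs hmem
    rw [uIoc_of_le (le_add_of_nonneg_right zero_le_one)] at hmem
    rw [stepDensity, Int.floor_eq_iff.2 ⟨hmem.1.le, lt_of_le_of_ne hmem.2 hs⟩]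
  rw [intervalIntegral.integral_congr_ae hae, intervalIntegral.integral_const,
    add_sub_cancel_left, one_smul]

lemma sum_cellDensity_tileCenter (hM : 0 < M) {K : ℕ} (hK : M + 1 / 2 ≤ K) :
    ∑ j ∈ Finset.range (2 * K), cellDensity M |tileCenter (2 * K) 1 j| =
      M * ∫ t, stepDensity M (M * t) := by
  have hterm (j : ℕ) : cellDensity M |tileCenter (2 * K) 1 j| =
      ∫ s in ((j : ℝ) - K)..((j + 1 : ℕ) : ℝ) - K, stepDensity M s := by
    have h := intervalIntegral_stepDensity M (j - K)
    push_cast at h ⊢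
    rw [show (j : ℝ) + 1 - K = j - K + 1 by ring, h, tileCenter]
    push_cast
    ring_nf
  have hintegrable (a b : ℝ) : IntervalIntegrable (stepDensity M) volume a b :=
    intervalIntegrable_iff.2 <| Measure.integrableOn_of_bounded measure_Ioc_lt_top.ne
      (measurable_stepDensity M).aestronglyMeasurable (.of_forall (abs_stepDensity_le hM.le))
  simp only [hterm]
  rw [intervalIntegral.sum_integral_adjacent_intervals fun _ _ ↦ hintegrable _ _,
    Measure.integral_comp_mul_left, abs_of_pos (inv_pos.2 hM), smul_eq_mul,
    mul_inv_cancel_left₀ hM.ne', intervalIntegral.integral_of_le (by push_cast; linarith)]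
  refine setIntegral_eq_integral_of_forall_compl_eq_zero fun s hs ↦ stepDensity_of_le hM ?_
  by_contra! h
  have := abs_lt.1 h
  refine hs ?_
  push_cast
  constructor <;> linarith

lemma tendsto_abs_floor_mul_add_half_div (t : ℝ) :
    Tendsto (fun M : ℝ ↦ |(⌊M * t⌋ : ℝ) + 1 / 2| / M) atTop (𝓝 |t|) := by
  have hlim : Tendsto (fun M : ℝ ↦ 1 / 2 * M⁻¹) atTop (𝓝 0) := by
    simpa using tendsto_inv_atTop_zero.const_mul (1 / 2 : ℝ)
  refine tendsto_iff_dist_tendsto_zero.2 (squeeze_zero' (.of_forall fun _ ↦ dist_nonneg) ?_ hlim)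
  filter_upwards [eventually_gt_atTop 0] with M hM
  have habs : |t| = |M * t| / M := by
    rw [abs_mul, abs_of_pos hM, mul_div_cancel_left₀ _ hM.ne']
  rw [habs, Real.dist_eq, ← sub_div, abs_div, abs_of_pos hM, div_eq_mul_inv]
  gcongr
  exact (abs_abs_sub_abs_le_abs_sub _ _).trans (abs_floor_add_half_sub_le _)

lemma tendsto_abs_floor_mul_add_half_atTop {t : ℝ} (ht : t ≠ 0) :
    Tendsto (fun M : ℝ ↦ |(⌊M * t⌋ : ℝ) + 1 / 2|) atTop atTop := by
  refine ((tendsto_abs_floor_mul_add_half_div t).pos_mul_atTop (abs_pos.2 ht) tendsto_id).congr' ?_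
  filter_upwards [eventually_ne_atTop 0] with M hM
  exact div_mul_cancel₀ _ hM

lemma tendsto_stepDensity (hg : IsLimitG g) {t : ℝ} (ht : t ≠ 0)
    (hcont : ContinuousAt (extendedDensity g) |t|) :
    Tendsto (fun M ↦ stepDensity M (M * t)) atTop (𝓝 (extendedDensity g |t|)) := by
  have hdiv := tendsto_abs_floor_mul_add_half_div t
  have hpos (M : ℝ) := abs_intCast_add_half_pos ⌊M * t⌋
  refine tendsto_order.2 ⟨fun a ha ↦ ?_, fun a ha ↦ ?_⟩
  · filter_upwards [(hcont.tendsto.comp hdiv).eventually_const_lt ha, eventually_gt_atTop 0]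
      with M hMa hM
    have hb : 0 < |(⌊M * t⌋ : ℝ) + 1 / 2| / M := div_pos (hpos M) hM
    refine hMa.trans_le ?_
    have := hg.le_eD_div hb (Real.sqrt_pos.2 (hpos M))
    rwa [Real.sq_sqrt (hpos M).le, ← extendedDensity_of_pos (g := g) hb] at this
  · obtain ⟨t', ht', hta⟩ : ∃ t', |t| < t' ∧ extendedDensity g t' < a :=
      (((hcont.tendsto.mono_left nhdsWithin_le_nhds).eventually_lt_const ha).and
        (self_mem_nhdsWithin (s := Ioi |t|))).exists.imp fun _ h ↦ h.symm
    have ht'₀ : 0 < t' := (abs_nonneg t).trans_lt ht'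
    rw [extendedDensity_of_pos ht'₀] at hta
    have hlim := (hg t' ht'₀).comp
      (Real.tendsto_sqrt_atTop.comp (tendsto_abs_floor_mul_add_half_atTop ht))
    filter_upwards [hlim.eventually_lt_const hta, hdiv.eventually_lt_const ht',
      eventually_ge_atTop 0] with M hMa hMt hM
    refine lt_of_le_of_lt ?_ hMa
    simp only [Function.comp_apply, Real.sq_sqrt (hpos M).le]
    exact div_le_div_of_nonneg_right (eD_mono (div_nonneg (hpos M).le hM) hMt.le) (hpos M).le

lemma countable_not_continuousAt_abs {f : ℝ → ℝ} (hf : Monotone f) :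
    {t | ¬ ContinuousAt f |t|}.Countable := by
  refine (hf.countable_not_continuousAt.union
    (hf.countable_not_continuousAt.image Neg.neg)).mono fun t ht ↦ ?_
  rcases abs_choice t with h | h
  · exact .inl (h ▸ ht)
  · exact .inr ⟨|t|, ht, by rw [h, neg_neg]⟩

lemma tendsto_integral_stepDensity (hg : IsLimitG g) :
    Tendsto (fun M ↦ ∫ t, stepDensity M (M * t)) atTop (𝓝 (lineDensity g)) := by
  refine tendsto_integral_filter_of_dominated_convergence
    ((Icc (-2) 2).indicator fun _ ↦ (1 / 2 : ℝ)) (.of_forall fun M ↦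
      ((measurable_stepDensity M).comp (measurable_const_mul M)).aestronglyMeasurable) ?_
    ((integrable_indicator_iff measurableSet_Icc).2 (integrableOn_const measure_Icc_lt_top.ne)) ?_
  · filter_upwards [eventually_ge_atTop 1] with M hM
    have hM₀ : 0 < M := zero_lt_one.trans_le hM
    refine .of_forall fun t ↦ ?_
    by_cases ht : t ∈ Icc (-2 : ℝ) 2
    · rw [indicator_of_mem ht]
      exact abs_stepDensity_le hM₀.le _
    · have hlt : 2 < |t| := not_le.1 fun h ↦ ht (abs_le.1 h)
      rw [indicator_of_notMem ht, stepDensity_of_le hM₀, norm_zero]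
      rw [abs_mul, abs_of_pos hM₀]
      nlinarith
  · filter_upwards [(countable_not_continuousAt_abs (extendedDensity_mono hg)).ae_notMem volume,
      (countable_singleton (0 : ℝ)).ae_notMem volume] with t ht ht₀
    exact tendsto_stepDensity hg ht₀ (not_not.1 ht)

end StripEnergy

lemma tendsto_of_approximate_bounds {ι : Type*} {F : Filter ι} {f : ι → ℝ} {φ ψ : ℝ → ℝ} {a : ℝ}
    (hφ : Tendsto φ (𝓝[>] 0) (𝓝 a)) (hψ : Tendsto ψ (𝓝[>] 0) (𝓝 a))
    (hlow : ∀ ε > 0, ∃ u : ι → ℝ, Tendsto u F (𝓝 (φ ε)) ∧ u ≤ᶠ[F] f)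
    (hup : ∀ ε > 0, ∃ v : ι → ℝ, Tendsto v F (𝓝 (ψ ε)) ∧ f ≤ᶠ[F] v) : Tendsto f F (𝓝 a) := by
  refine tendsto_order.2 ⟨fun c hc ↦ ?_, fun c hc ↦ ?_⟩
  · obtain ⟨ε, hcε, hε⟩ := ((hφ.eventually_const_lt hc).and self_mem_nhdsWithin).exists
    obtain ⟨u, hu, huf⟩ := hlow ε hε
    filter_upwards [hu.eventually_const_lt hcε, huf] with x hx hxf
    exact hx.trans_le hxf
  · obtain ⟨ε, hcε, hε⟩ := ((hψ.eventually_lt_const hc).and self_mem_nhdsWithin).exists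
    obtain ⟨v, hv, hfv⟩ := hup ε hε
    filter_upwards [hv.eventually_lt_const hcε, hfv] with x hx hxf
    exact hxf.trans_lt hx

lemma groundEnergy_Avan_Strip_div_anti {g : ℝ → ℝ} (hg : IsLimitG g) {l l' R : ℝ} (hl' : 0 < l')
    (h : l' ≤ l) (hR : 0 ≤ R) :
    groundEnergy Avan 1 l (l / 2) (Strip R) / l ≤
      groundEnergy Avan 1 l' (l' / 2) (Strip R) / l' := by
  have hl : 0 < l := hl'.trans_le h
  rw [le_div_iff₀ hl']
  refine le_groundEnergy fun u hu ↦ ?_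
  have hint (α μ ν : ℝ) :=
    integrable_glDensity continuous_Avan hu.contDiff hu.hasCompactSupport α μ ν
  calc groundEnergy Avan 1 l (l / 2) (Strip R) / l * l'
      ≤ glEnergy Avan 1 l (l / 2) u / l * l' := by
        gcongr
        exact groundEnergy_le (hg.bddBelow_admissibleEnergies_Strip hl hR) hu
    _ = ∫ x, l' / l * glDensity Avan 1 l (l / 2) u x := by
        rw [integral_const_mul, glEnergy]
        ring
    _ ≤ glEnergy Avan 1 l' (l' / 2) u := by
        refine integral_mono ((hint 1 l (l / 2)).const_mul _) (hint 1 l' (l' / 2)) fun x ↦ ?_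
        have hmag := mul_le_of_le_one_left (magGradSq_nonneg Avan u x) ((div_le_one hl).2 h)
        simp only [glDensity]
        field_simp at hmag ⊢
        linarith

namespace IsLimitE

variable {g E : ℝ → ℝ} {ε : ℝ}

lemma exists_mul_lineDensity_le (hE : IsLimitE E) (hg : IsLimitG g) (hε : 0 < ε) :
    ∃ C, ∀ L > 0, (1 + ε) ^ 2 * (L ^ (-(2 : ℝ) / 3) + C) ^ 3 / L ^ (-(2 : ℝ) / 3) *
      lineDensity g ≤ E L := by
  obtain ⟨C, -, hC⟩ := hg.exists_mul_lineDensity_le_glEnergy_Avan hε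
  refine ⟨C, fun L hL ↦ ?_⟩
  have hl : 0 < L ^ (-(2 : ℝ) / 3) := Real.rpow_pos_of_pos hL _
  set P := (1 + ε) ^ 2 * (L ^ (-(2 : ℝ) / 3) + C) ^ 3 / L ^ (-(2 : ℝ) / 3) * lineDensity g
  have hlim : Tendsto (fun R : ℝ ↦ (1 + R⁻¹) * P) atTop (𝓝 P) := by
    simpa using (tendsto_inv_atTop_zero.const_add 1).mul_const P
  refine le_of_tendsto_of_tendsto hlim (hE L hL) ?_
  filter_upwards [eventually_gt_atTop 0] with R hR
  rw [egs_eq_groundEnergy hg hL hR.le, le_div_iff₀ hR]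
  calc (1 + R⁻¹) * P * R = (R + 1) * ((1 + ε) ^ 2 * (L ^ (-(2 : ℝ) / 3) + C) ^ 3 /
        L ^ (-(2 : ℝ) / 3)) * lineDensity g := by simp only [P]; field_simp
    _ ≤ _ := le_groundEnergy (hC R _ hR.le hl)

lemma le_mul_integral_stepDensity (hE : IsLimitE E) (hg : IsLimitG g) (hε : 0 < ε) {L l M : ℝ}
    (hL : 0 < L) (hl : L ^ (-(2 : ℝ) / 3) = l) (hεl : (1 + 1 / ε) / 64 < l)
    (hM : (l - (1 + 1 / ε) / 64) / (1 + ε) = M) :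
    E L ≤ (l - (1 + 1 / ε) / 64) ^ 2 / l * (M * ∫ t, stepDensity M (M * t)) := by
  have hM₀ : 0 < M := hM ▸ div_pos (sub_pos.2 hεl) (by positivity)
  obtain ⟨K, hK⟩ := exists_nat_ge (M + 1 / 2)
  refine le_of_tendsto ((hE L hL).comp tendsto_natCast_atTop_atTop) ?_
  filter_upwards [eventually_gt_atTop 0] with N hN
  rw [Function.comp_apply, div_le_iff₀ (Nat.cast_pos.2 hN), mul_comm,
    egs_eq_groundEnergy hg hL N.cast_nonneg, hl, ← sum_cellDensity_tileCenter hM₀ hK, ← hM]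
  exact groundEnergy_Avan_Strip_le hg hε hεl N K

theorem tendsto_rpow_mul (hE : IsLimitE E) (hg : IsLimitG g) :
    Tendsto (fun L ↦ L ^ ((4 : ℝ) / 3) * E L) (𝓝[>] 0) (𝓝 (lineDensity g)) := by
  have hcoupling : Tendsto (fun L : ℝ ↦ L ^ (-(2 : ℝ) / 3)) (𝓝[>] 0) atTop :=
    tendsto_rpow_neg_nhdsGT_zero (by norm_num)
  have hinv := tendsto_inv_atTop_zero.comp hcoupling
  have hrpow (L : ℝ) (hL : 0 < L) : L ^ ((4 : ℝ) / 3) = ((L ^ (-(2 : ℝ) / 3)) ^ 2)⁻¹ := by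
    rw [← Real.rpow_natCast, ← Real.rpow_mul hL.le, ← Real.rpow_neg hL.le]
    norm_num
  have hε₀ : Tendsto (fun ε : ℝ ↦ 1 + ε) (𝓝[>] 0) (𝓝 1) :=
    tendsto_nhdsWithin_of_tendsto_nhds (by
      simpa using (tendsto_id (x := 𝓝 (0 : ℝ))).const_add 1)
  refine tendsto_of_approximate_bounds (φ := fun ε ↦ (1 + ε) ^ 2 * lineDensity g)
    (ψ := fun ε ↦ (1 + ε)⁻¹ * lineDensity g) (by simpa using (hε₀.pow 2).mul_const (lineDensity g))
    (by simpa using (hε₀.inv₀ one_ne_zero).mul_const (lineDensity g)) (fun ε hε ↦ ?_) fun ε hε ↦ ?_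
  · obtain ⟨C, hC⟩ := hE.exists_mul_lineDensity_le hg hε
    refine ⟨fun L ↦ (1 + ε) ^ 2 * (1 + C * (L ^ (-(2 : ℝ) / 3))⁻¹) ^ 3 * lineDensity g, ?_, ?_⟩
    · simpa using ((((hinv.const_mul C).const_add 1).pow 3).const_mul _).mul_const (lineDensity g)
    · filter_upwards [self_mem_nhdsWithin] with L (hL : 0 < L)
      have : 0 < L ^ (-(2 : ℝ) / 3) := Real.rpow_pos_of_pos hL _
      refine le_of_eq_of_le ?_ (mul_le_mul_of_nonneg_left (hC L hL) (by positivity))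
      rw [hrpow L hL]
      field_simp
  · obtain ⟨C, hC⟩ : ∃ C, (1 + 1 / ε) / 64 = C := ⟨_, rfl⟩
    have hM : Tendsto (fun L : ℝ ↦ (L ^ (-(2 : ℝ) / 3) - C) / (1 + ε)) (𝓝[>] 0) atTop :=
      (tendsto_atTop_add_const_right _ (-C) hcoupling).atTop_div_const (by positivity)
    refine ⟨fun L ↦ (1 + ε)⁻¹ * (1 - C * (L ^ (-(2 : ℝ) / 3))⁻¹) ^ 3 * ∫ t, stepDensity
      ((L ^ (-(2 : ℝ) / 3) - C) / (1 + ε)) ((L ^ (-(2 : ℝ) / 3) - C) / (1 + ε) * t), ?_, ?_⟩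
    · simpa using ((((hinv.const_mul C).const_sub 1).pow 3).const_mul _).mul
        ((tendsto_integral_stepDensity hg).comp hM)
    · filter_upwards [self_mem_nhdsWithin, hcoupling.eventually_gt_atTop C] with L (hL : 0 < L) hLC
      have : 0 < L ^ (-(2 : ℝ) / 3) := Real.rpow_pos_of_pos hL _
      have hle := hE.le_mul_integral_stepDensity hg hε hL rfl (hC.trans_lt hLC) rfl
      rw [hC] at hle
      refine (mul_le_mul_of_nonneg_left hle (by positivity)).trans_eq ?_
      rw [hrpow L hL]
      generalize (∫ t : ℝ, stepDensity _ _) = H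
      field_simp

lemma monotoneOn_rpow_mul (hE : IsLimitE E) (hg : IsLimitG g) :
    MonotoneOn (fun L ↦ (L ^ (-(2 : ℝ) / 3))⁻¹ * E L) (Ioi 0) := by
  intro L (hL : 0 < L) L' (hL' : 0 < L') hLL'
  refine le_of_tendsto_of_tendsto ((hE L hL).const_mul _) ((hE L' hL').const_mul _) ?_
  filter_upwards [eventually_gt_atTop 0] with R hR
  rw [← mul_div_assoc, ← mul_div_assoc, inv_mul_eq_div, inv_mul_eq_div,
    egs_eq_groundEnergy hg hL hR.le, egs_eq_groundEnergy hg hL' hR.le]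
  have hcoupling : L' ^ (-(2 : ℝ) / 3) ≤ L ^ (-(2 : ℝ) / 3) :=
    Real.rpow_le_rpow_of_nonpos hL hLL' (by norm_num)
  exact div_le_div_of_nonneg_right
    (groundEnergy_Avan_Strip_div_anti hg (Real.rpow_pos_of_pos hL' _) hcoupling hR.le) hR.le

lemma aemeasurable (hE : IsLimitE E) (hg : IsLimitG g) {μ : Measure ℝ} (hμ : ∀ᵐ L ∂μ, 0 < L) :
    AEMeasurable E μ := by
  rw [← Measure.restrict_eq_self_of_ae_mem (s := Ioi 0) hμ]
  have hmono := aemeasurable_restrict_of_monotoneOn (μ := μ) measurableSet_Ioi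
    (hE.monotoneOn_rpow_mul hg)
  refine ((measurable_id.pow_const (-(2 : ℝ) / 3)).aemeasurable.mul hmono).congr ?_
  filter_upwards [ae_restrict_mem measurableSet_Ioi] with L hL
  exact mul_inv_cancel_left₀ (Real.rpow_pos_of_pos hL _).ne' _

end IsLimitE

/-! ### Length of curves and one-dimensional Hausdorff measure -/

section Curves

variable {V : Type*} [NormedAddCommGroup V] [NormedSpace ℝ V] [MeasurableSpace V] [BorelSpace V]
  {γ : ℝ → V} {v : V} {x : ℝ}

lemma eventually_hausdorffMeasure_image_le (h : HasStrictDerivAt γ v x) {K : NNReal}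
    (hK : ‖v‖₊ < K) : ∀ᶠ s in (𝓝 x).smallSets, μH[1] (γ '' s) ≤ K * volume s := by
  obtain ⟨u, hu, hlip⟩ := h.hasStrictFDerivAt.exists_lipschitzOnWith_of_nnnorm_lt K (by simpa)
  filter_upwards [eventually_smallSets.2 ⟨u, hu, fun _ ↦ id⟩] with s hs
  simpa [hausdorffMeasure_real] using (hlip.mono hs).hausdorffMeasure_image_le zero_le_one

lemma eventually_le_hausdorffMeasure_image (h : HasStrictDerivAt γ v x) {K : NNReal}
    (hK : K < ‖v‖₊) : ∀ᶠ s in (𝓝 x).smallSets, K * volume s ≤ μH[1] (γ '' s) := by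
  obtain rfl | hK0 := eq_or_ne K 0
  · simp
  obtain ⟨u, hu, happrox⟩ := h.hasStrictFDerivAt.approximates_deriv_on_nhds
    (Or.inr (tsub_pos_of_lt hK))
  filter_upwards [eventually_smallSets.2 ⟨u, hu, fun _ ↦ id⟩] with s hs
  have hanti : AntilipschitzWith K⁻¹ (s.domRestrict γ) := by
    refine AntilipschitzWith.of_le_mul_dist fun y z ↦ ?_
    have hdiff := happrox y (hs y.2) z (hs z.2)
    have htri := norm_sub_norm_le (((y : ℝ) - z) • v) (((y : ℝ) - z) • v - (γ y - γ z))
    rw [sub_sub_cancel, norm_smul] at htri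
    rw [ContinuousLinearMap.toSpanSingleton_apply, norm_sub_rev, NNReal.coe_sub hK.le,
      coe_nnnorm] at hdiff
    rw [NNReal.coe_inv, ← div_eq_inv_mul, le_div_iff₀ (by positivity), Subtype.dist_eq,
      dist_eq_norm, dist_eq_norm, domRestrict_apply, domRestrict_apply]
    linarith
  have hle := hanti.le_hausdorffMeasure_image zero_le_one univ
  rw [image_univ, range_domRestrict, ENNReal.rpow_one,
    ← isometry_subtype_coe.hausdorffMeasure_image (Or.inl zero_le_one), image_univ,
    Subtype.range_coe, hausdorffMeasure_real, ENNReal.coe_inv hK0, mul_comm,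
    ← div_eq_mul_inv] at hle
  rw [mul_comm]
  exact ENNReal.mul_le_of_le_div hle

lemma tendsto_hausdorffMeasure_image_closedBall_div (h : HasStrictDerivAt γ v x) :
    Tendsto (fun r ↦ μH[1] (γ '' Metric.closedBall x r) / volume (Metric.closedBall x r))
      (𝓝[>] 0) (𝓝 ‖v‖ₑ) := by
  have hballs := (tendsto_closedBall_smallSets x).mono_left (nhdsWithin_le_nhds (s := Ioi 0))
  have hvol : ∀ᶠ r : ℝ in 𝓝[>] 0, volume (Metric.closedBall x r) ≠ 0 ∧
      volume (Metric.closedBall x r) ≠ ⊤ := by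
    filter_upwards [self_mem_nhdsWithin] with r hr
    exact ⟨(Metric.measure_closedBall_pos volume x hr).ne', measure_closedBall_lt_top.ne⟩
  refine tendsto_order.2 ⟨fun c hc ↦ ?_, fun c hc ↦ ?_⟩
  · obtain ⟨K, hcK, hK⟩ := ENNReal.lt_iff_exists_nnreal_btwn.1 hc
    filter_upwards [hvol, hballs.eventually
      (eventually_le_hausdorffMeasure_image h (by simpa [enorm] using hK))] with r hr hle
    exact hcK.trans_le ((ENNReal.le_div_iff_mul_le (Or.inl hr.1) (Or.inl hr.2)).2 hle)
  · obtain ⟨K, hK, hKc⟩ := ENNReal.lt_iff_exists_nnreal_btwn.1 hc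
    filter_upwards [hballs.eventually
      (eventually_hausdorffMeasure_image_le h (by simpa [enorm] using hK))] with r hle
    exact (ENNReal.div_le_of_le_mul hle).trans_lt hKc

lemma comap_hausdorffMeasure_eq_withDensity (hγ : ContDiff ℝ 1 γ) (hinj : γ.Injective) :
    (μH[1]).comap γ = volume.withDensity fun y ↦ ‖deriv γ y‖ₑ := by
  have happly (s : Set ℝ) : (μH[1]).comap γ s = μH[1] (γ '' s) :=
    (hγ.continuous.measurableEmbedding hinj).comap_apply _ s
  have hstrict (x : ℝ) := hγ.hasStrictDerivAt (x := x) one_ne_zero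
  have hupper (x : ℝ) : ∃ K : NNReal, ∃ u ∈ 𝓝 x, ∀ s ⊆ u, (μH[1]).comap γ s ≤ K * volume s := by
    obtain ⟨K, hK⟩ := exists_gt ‖deriv γ x‖₊
    simp only [happly]
    exact ⟨K, eventually_smallSets.1 (eventually_hausdorffMeasure_image_le (hstrict x) hK)⟩
  have hfin : IsLocallyFiniteMeasure ((μH[1]).comap γ) := by
    refine ⟨fun x ↦ ?_⟩
    obtain ⟨K, u, hu, hK⟩ := hupper x
    obtain ⟨w, hw, hwfin⟩ := (volume : Measure ℝ).finiteAt_nhds x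
    exact ⟨u ∩ w, inter_mem hu hw, (hK _ inter_subset_left).trans_lt <| ENNReal.mul_lt_top (by simp)
      ((measure_mono inter_subset_right).trans_lt hwfin)⟩
  have hac : (μH[1]).comap γ ≪ volume := by
    refine fun s hs ↦ measure_null_of_locally_null s fun x _ ↦ ?_
    obtain ⟨K, u, hu, hK⟩ := hupper x
    refine ⟨s ∩ u, inter_mem_nhdsWithin s hu, le_antisymm ?_ zero_le⟩
    simpa [measure_mono_null inter_subset_left hs] using hK (s ∩ u) inter_subset_right
  rw [← Measure.withDensity_rnDeriv_eq _ _ hac]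
  refine withDensity_congr_ae ?_
  filter_upwards [Besicovitch.ae_tendsto_rnDeriv ((μH[1]).comap γ) volume] with x hx
  simp only [happly] at hx
  exact tendsto_nhds_unique hx (tendsto_hausdorffMeasure_image_closedBall_div (hstrict x))

theorem setIntegral_range_hausdorffMeasure {F : Type*} [NormedAddCommGroup F] [NormedSpace ℝ F]
    (hγ : ContDiff ℝ 1 γ) (hinj : γ.Injective) (f : V → F) :
    ∫ x in range γ, f x ∂μH[1] = ∫ y, ‖deriv γ y‖ • f (γ y) := by
  have hemb := hγ.continuous.measurableEmbedding hinj
  have hm : Measurable fun y ↦ ‖deriv γ y‖₊ := (hγ.continuous_deriv le_rfl).nnnorm.measurable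
  calc ∫ x in range γ, f x ∂μH[1] = ∫ y, f (γ y) ∂(μH[1]).comap γ := by
        rw [← hemb.map_comap, hemb.integral_map]
    _ = ∫ y, ‖deriv γ y‖ • f (γ y) := by
        rw [comap_hausdorffMeasure_eq_withDensity hγ hinj]
        exact integral_withDensity_eq_integral_smul hm _

end Curves

/-! ### Zero sets as graphs -/

lemma exists_contDiff_eventuallyEq {V W : Type*} [NormedAddCommGroup V] [NormedSpace ℝ V]
    [HasContDiffBump V] [NormedAddCommGroup W] [NormedSpace ℝ W] {n : ℕ} {f : V → W} {x : V}
    (hf : ContDiffAt ℝ n f x) : ∃ φ : V → W, ContDiff ℝ n φ ∧ φ =ᶠ[𝓝 x] f := by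
  obtain ⟨r, hr, hball⟩ := Metric.nhds_basis_closedBall.mem_iff.1 (hf.eventually (by simp))
  let ρ : ContDiffBump x := ⟨r / 2, r, half_pos hr, half_lt_self hr⟩
  refine ⟨fun y ↦ ρ y • f y, contDiff_iff_contDiffAt.2 fun y ↦ ?_, ?_⟩
  · by_cases hy : y ∈ tsupport ρ
    · rw [ρ.tsupport_eq] at hy
      exact ρ.contDiff.contDiffAt.smul (hball hy)
    · refine contDiffAt_const (c := 0) |>.congr_of_eventuallyEq ?_
      filter_upwards [notMem_tsupport_iff_eventuallyEq.1 hy] with z hz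
      rw [hz, Pi.zero_apply, zero_smul]
  · filter_upwards [ρ.eventuallyEq_one] with y hy
    simp [hy]

/-- The set `{F = 0}` is, inside the open set `W`, the graph of the `C¹` function `h`, with
`|F|` growing at rate at least `δ` in the vertical direction. -/
structure IsZeroGraph (F : ℝ × ℝ → ℝ) (W : Set (ℝ × ℝ)) (h : ℝ → ℝ) (δ : ℝ) : Prop where
  pos : 0 < δ
  isOpen : IsOpen W
  contDiff : ContDiff ℝ 1 h
  apply_graph : ∀ p ∈ W, F (p.1, h p.1) = 0
  le_abs : ∀ p ∈ W, δ * |p.2 - h p.1| ≤ |F p|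
  fderiv_ne_zero : ∀ p ∈ W, fderiv ℝ F p (0, 1) ≠ 0

lemma IsZeroGraph.eq_zero_iff {F : ℝ × ℝ → ℝ} {W : Set (ℝ × ℝ)} {h : ℝ → ℝ} {δ : ℝ}
    (H : IsZeroGraph F W h δ) {p : ℝ × ℝ} (hp : p ∈ W) : F p = 0 ↔ p = (p.1, h p.1) := by
  refine ⟨fun h0 ↦ Prod.ext rfl (sub_eq_zero.1 (abs_nonpos_iff.1 ?_)), fun hF ↦ ?_⟩
  · have hle := H.le_abs p hp
    rw [h0, abs_zero] at hle
    exact nonpos_of_mul_nonpos_right hle H.pos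
  · rw [hF]
    exact H.apply_graph p hp

lemma eventually_mul_abs_sub_le {F : ℝ × ℝ → ℝ} (hF : ContDiff ℝ 1 F) {p : ℝ × ℝ}
    (hd : fderiv ℝ F p (0, 1) ≠ 0) : ∀ᶠ q : (ℝ × ℝ) × (ℝ × ℝ) in 𝓝 (p, p),
      q.1.1 = q.2.1 → |fderiv ℝ F p (0, 1)| / 2 * |q.1.2 - q.2.2| ≤ |F q.1 - F q.2| := by
  have hstrict := (hF.hasStrictFDerivAt (x := p) one_ne_zero).isLittleO.def
    (half_pos (abs_pos.2 hd))
  filter_upwards [hstrict] with q hq hfst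
  have hdiff : q.1 - q.2 = (q.1.2 - q.2.2) • ((0 : ℝ), (1 : ℝ)) := by ext <;> simp [hfst]
  rw [hdiff, map_smul, norm_smul, smul_eq_mul, Real.norm_eq_abs, Real.norm_eq_abs,
    Prod.norm_mk, norm_zero, norm_one, max_eq_right zero_le_one, mul_one] at hq
  have htri := abs_sub_abs_le_abs_sub ((q.1.2 - q.2.2) * fderiv ℝ F p (0, 1)) (F q.1 - F q.2)
  rw [abs_sub_comm _ (F q.1 - F q.2), abs_mul] at htri
  linarith

lemma exists_isZeroGraph {F : ℝ × ℝ → ℝ} (hF : ContDiff ℝ 1 F) {p : ℝ × ℝ} (hp : F p = 0)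
    (hd : fderiv ℝ F p (0, 1) ≠ 0) : ∃ W h δ, p ∈ W ∧ IsZeroGraph F W h δ := by
  have hinv : (fderiv ℝ F p ∘L .inr ℝ ℝ ℝ).IsInvertible := by
    refine .of_inverse (g := (fderiv ℝ F p (0, 1))⁻¹ • .id ℝ ℝ) ?_ ?_ <;> ext <;> simp [hd]
  obtain ⟨h, hh, heq⟩ := exists_contDiff_eventuallyEq (n := 1)
    (hF.contDiffAt.contDiffAt_implicitFunction one_ne_zero hinv)
  have hself : h p.1 = p.2 :=
    heq.eq_of_nhds.trans (hF.contDiffAt.implicitFunction_apply_self one_ne_zero hinv)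
  have hgraph : ContinuousAt (fun q : ℝ × ℝ ↦ (q.1, h q.1)) p := by
    have := hh.continuous
    fun_prop
  have hgraph' : Tendsto (fun q : ℝ × ℝ ↦ (q.1, h q.1)) (𝓝 p) (𝓝 p) := by
    simpa [ContinuousAt, hself] using hgraph
  have hzero : ∀ᶠ q : ℝ × ℝ in 𝓝 p, F (q.1, h q.1) = 0 := by
    have himpl := hF.contDiffAt.eventually_apply_implicitFunction one_ne_zero hinv
    filter_upwards [continuousAt_fst.eventually (himpl.and heq)] with q hq
    rw [hq.2, hq.1, hp]
  have hderiv : ∀ᶠ q in 𝓝 p, fderiv ℝ F q (0, 1) ≠ 0 :=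
    ((hF.continuous_fderiv one_ne_zero).clm_apply continuous_const).continuousAt.eventually_ne hd
  have hgrowth := (tendsto_id.prodMk_nhds hgraph').eventually (eventually_mul_abs_sub_le hF hd)
  obtain ⟨W, hW, hWo, hpW⟩ := eventually_nhds_iff.1 (hzero.and (hderiv.and hgrowth))
  refine ⟨W, h, |fderiv ℝ F p (0, 1)| / 2, hpW, half_pos (abs_pos.2 hd), hWo, hh,
    fun q hq ↦ (hW q hq).1, fun q hq ↦ ?_, fun q hq ↦ (hW q hq).2.1⟩
  simpa [(hW q hq).1] using (hW q hq).2.2 rfl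

/-- The coordinates of the plane in an orthonormal frame; an isometry for the Euclidean norm on
`ℝ × ℝ`, but not for the sup norm that `ℝ × ℝ` carries. -/
def frame (e : OrthonormalBasis (Fin 2) ℝ E2) : (ℝ × ℝ) ≃L[ℝ] E2 :=
  (ContinuousLinearEquiv.finTwoArrow ℝ ℝ).symm.trans
    ((EuclideanSpace.equiv (Fin 2) ℝ).symm.trans e.repr.symm.toContinuousLinearEquiv)

lemma frame_apply (e : OrthonormalBasis (Fin 2) ℝ E2) (p : ℝ × ℝ) :
    frame e p = p.1 • e 0 + p.2 • e 1 := by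
  simp [frame, ← e.sum_repr_symm]

lemma measurePreserving_frame (e : OrthonormalBasis (Fin 2) ℝ E2) : MeasurePreserving (frame e) :=
  e.measurePreserving_repr_symm.comp
    ((PiLp.volume_preserving_toLp (Fin 2)).comp (volume_preserving_finTwoArrow ℝ).symm)

lemma exists_orthonormalBasis_apply_one_ne_zero {ℓ : E2 →L[ℝ] ℝ} (hℓ : ℓ ≠ 0) :
    ∃ e : OrthonormalBasis (Fin 2) ℝ E2, ℓ (e 1) ≠ 0 := by
  by_contra! h
  refine hℓ (ContinuousLinearMap.coe_inj.1
    ((EuclideanSpace.basisFun (Fin 2) ℝ).toBasis.ext fun i ↦ ?_))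
  simpa using h ((EuclideanSpace.basisFun (Fin 2) ℝ).reindex (Equiv.swap i 1))

lemma norm_frame_mul_abs_eq_norm (e : OrthonormalBasis (Fin 2) ℝ E2) (ℓ : E2 →L[ℝ] ℝ) {s : ℝ}
    (h : ℓ (frame e (1, s)) = 0) : ‖frame e (1, s)‖ * |ℓ (e 1)| = ‖ℓ‖ := by
  have h0 : ℓ (e 0) = -(s * ℓ (e 1)) := by
    rw [frame_apply, one_smul, map_add, map_smul, smul_eq_mul] at h
    linarith
  have hnorm : ‖frame e (1, s)‖ ^ 2 = 1 + s ^ 2 := by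
    simp [← e.sum_sq_inner_right, frame_apply, inner_add_right, inner_smul_right]
  have hdual : ‖ℓ‖ ^ 2 = ℓ (e 0) ^ 2 + ℓ (e 1) ^ 2 := by
    rw [← (InnerProductSpace.toDual ℝ E2).symm.norm_map ℓ, ← e.sum_sq_inner_right]
    simp [real_inner_comm _ (e _), InnerProductSpace.toDual_symm_apply]
  refine (sq_eq_sq₀ (by positivity) (norm_nonneg _)).1 ?_
  rw [mul_pow, hnorm, hdual, h0, sq_abs]
  ring

/-! ### Concentration on zero sets -/

lemma mul_integral_eq_integral_add_div {k f φ : ℝ → ℝ} {z t : ℝ} (ht : 0 < t) :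
    t * ∫ s, f s * k (t * φ s) = ∫ σ, f (z + σ / t) * k (t * φ (z + σ / t)) := by
  rw [Measure.integral_comp_div (fun s ↦ f (z + s) * k (t * φ (z + s))) t,
    integral_add_left_eq_self (fun s ↦ f s * k (t * φ s)) z, abs_of_pos ht, smul_eq_mul]

/-- The profiles `k` whose rescalings `t k(t ·)` concentrate at the origin with mass `∫ k`: bounded
Borel functions vanishing outside `(-1, 1)` and continuous almost everywhere. -/
structure IsConcentrationKernel (k : ℝ → ℝ) : Prop where
  measurable : Measurable k
  bounded : ∃ C, ∀ s, |k s| ≤ C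
  eq_zero : ∀ s, 1 ≤ |s| → k s = 0
  ae_continuousAt : ∀ᵐ s, ContinuousAt k s

namespace IsConcentrationKernel

variable {k f φ : ℝ → ℝ} {C M δ z a t : ℝ}

lemma norm_mul_le_indicator (hk : IsConcentrationKernel k) (hC : ∀ s, |k s| ≤ C)
    (hM : ∀ s, |f s| ≤ M) (hδ : 0 < δ) (hφ : ∀ s, f s ≠ 0 → δ * |s - z| ≤ |φ s|) (ht : 0 < t)
    (σ : ℝ) : ‖f (z + σ / t) * k (t * φ (z + σ / t))‖ ≤
      (Icc (-δ⁻¹) δ⁻¹).indicator (fun _ ↦ M * C) σ := by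
  have hM0 : 0 ≤ M := (abs_nonneg _).trans (hM 0)
  by_cases hσ : σ ∈ Icc (-δ⁻¹) δ⁻¹
  · rw [indicator_of_mem hσ, norm_mul]
    exact mul_le_mul (hM _) (hC _) (abs_nonneg _) hM0
  rw [indicator_of_notMem hσ, norm_le_zero_iff, mul_eq_zero, or_iff_not_imp_left]
  refine fun hf ↦ hk.eq_zero _ ?_
  have hle := hφ _ hf
  rw [add_sub_cancel_left, abs_div, abs_of_pos ht, ← mul_div_assoc, div_le_iff₀ ht] at hle
  rw [mem_Icc, ← abs_le, not_le, inv_lt_iff_one_lt_mul₀' hδ] at hσ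
  rw [abs_mul, abs_of_pos ht, mul_comm]
  exact hσ.le.trans hle

lemma norm_mul_integral_le (hk : IsConcentrationKernel k) (hC : ∀ s, |k s| ≤ C)
    (hM : ∀ s, |f s| ≤ M) (hδ : 0 < δ) (hφ : ∀ s, f s ≠ 0 → δ * |s - z| ≤ |φ s|) (ht : 0 < t) :
    ‖t * ∫ s, f s * k (t * φ s)‖ ≤ ∫ σ, (Icc (-δ⁻¹) δ⁻¹).indicator (fun _ ↦ M * C) σ := by
  rw [mul_integral_eq_integral_add_div (z := z) ht]
  exact norm_integral_le_of_norm_le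
    ((integrable_indicator_iff measurableSet_Icc).2 continuous_const.integrableOn_Icc)
    (.of_forall (hk.norm_mul_le_indicator hC hM hδ hφ ht))

lemma ae_continuousAt_mul (hk : IsConcentrationKernel k) (ha : a ≠ 0) :
    ∀ᵐ σ, ContinuousAt k (a * σ) := by
  have hnull : volume {s | ¬ ContinuousAt k s} = 0 := hk.ae_continuousAt
  have hpre := Real.volume_preimage_mul_left ha {s | ¬ ContinuousAt k s}
  rwa [hnull, mul_zero] at hpre

lemma tendsto_mul_integral (hk : IsConcentrationKernel k) (hf : Measurable f) (hφm : Measurable φ)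
    (hM : ∀ s, |f s| ≤ M) (hδ : 0 < δ) (hφ : ∀ s, f s ≠ 0 → δ * |s - z| ≤ |φ s|)
    (hfz : ContinuousAt f z) (hφz : φ z = 0) (ha : a ≠ 0) (hd : HasDerivAt φ a z) :
    Tendsto (fun t ↦ t * ∫ s, f s * k (t * φ s)) atTop (𝓝 ((∫ s, k s) * (f z / |a|))) := by
  obtain ⟨C, hC⟩ := hk.bounded
  have hkm := hk.measurable
  have hlim : ∫ σ, f z * k (a * σ) = (∫ s, k s) * (f z / |a|) := by
    rw [integral_const_mul, Measure.integral_comp_mul_left, abs_inv, smul_eq_mul]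
    ring
  rw [← hlim]
  refine Tendsto.congr' ((eventually_gt_atTop 0).mono fun t ht ↦
    (mul_integral_eq_integral_add_div (z := z) ht).symm) ?_
  refine tendsto_integral_filter_of_dominated_convergence
    ((Icc (-δ⁻¹) δ⁻¹).indicator fun _ ↦ M * C) (.of_forall fun t ↦ ?_)
    ((eventually_gt_atTop 0).mono fun t ht ↦
      .of_forall (hk.norm_mul_le_indicator hC hM hδ hφ ht))
    ((integrable_indicator_iff measurableSet_Icc).2 continuous_const.integrableOn_Icc) ?_
  · exact Measurable.aestronglyMeasurable (by fun_prop)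
  filter_upwards [hk.ae_continuousAt_mul ha] with σ hσ
  have hshift : Tendsto (fun t : ℝ ↦ z + σ / t) atTop (𝓝 z) := by
    simpa using (tendsto_const_nhds.div_atTop tendsto_id).const_add z
  have hslope : Tendsto (fun t : ℝ ↦ t * φ (z + σ / t)) atTop (𝓝 (a * σ)) := by
    simpa [hφz, div_eq_inv_mul, mul_comm] using hd.hasFDerivAt.lim_real σ
  exact (hfz.tendsto.comp hshift).mul (hσ.tendsto.comp hslope)

lemma tendsto_mul_integral_zero (hk : IsConcentrationKernel k) (hδ : 0 < δ)
    (hφ : ∀ s, f s ≠ 0 → δ * |s - z| ≤ |φ s|) (hfz : f =ᶠ[𝓝 z] 0) :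
    Tendsto (fun t ↦ t * ∫ s, f s * k (t * φ s)) atTop (𝓝 0) := by
  obtain ⟨r, hr, hball⟩ := Metric.eventually_nhds_iff.1 hfz
  refine tendsto_const_nhds.congr' ?_
  filter_upwards [eventually_ge_atTop (δ * r)⁻¹] with t ht
  have hpos : 0 < δ * r := mul_pos hδ hr
  have ht0 : 0 < t := (inv_pos.2 hpos).trans_le ht
  have hzero (s : ℝ) : f s * k (t * φ s) = 0 := by
    rw [mul_eq_zero, or_iff_not_imp_left]
    refine fun hs ↦ hk.eq_zero _ ?_
    have hrs : r ≤ |s - z| := le_of_not_gt fun hlt ↦ hs (hball hlt)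
    calc (1 : ℝ) ≤ t * (δ * r) := (inv_le_iff_one_le_mul₀ hpos).1 ht
      _ ≤ t * |φ s| := by
        gcongr
        exact (mul_le_mul_of_nonneg_left hrs hδ.le).trans (hφ s hs)
      _ = |t * φ s| := by rw [abs_mul, abs_of_pos ht0]
  simp [hzero]

lemma integrable_mul {X : Type*} [TopologicalSpace X] [MeasurableSpace X]
    {μ : Measure X} [IsFiniteMeasureOnCompacts μ] (hk : IsConcentrationKernel k) {f φ : X → ℝ}
    (hf : Measurable f) (hM : ∀ x, |f x| ≤ M) (hfc : HasCompactSupport f) (hφ : Measurable φ) :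
    Integrable (fun x ↦ f x * k (φ x)) μ := by
  obtain ⟨C, hC⟩ := hk.bounded
  refine IntegrableOn.integrable_of_forall_notMem_eq_zero (s := tsupport f) ?_ fun x hx ↦ by
    rw [image_eq_zero_of_notMem_tsupport hx, zero_mul]
  refine Measure.integrableOn_of_bounded (M := M * C) hfc.isCompact.measure_lt_top.ne
    (hf.mul (hk.measurable.comp hφ)).aestronglyMeasurable (.of_forall fun x ↦ ?_)
  rw [norm_mul]
  exact mul_le_mul (hM x) (hC _) (norm_nonneg _) ((abs_nonneg _).trans (hM x))

end IsConcentrationKernel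

lemma IsZeroGraph.tendsto_slice {k : ℝ → ℝ} (hk : IsConcentrationKernel k) {F f : ℝ × ℝ → ℝ}
    {W : Set (ℝ × ℝ)} {h : ℝ → ℝ} {δ M y : ℝ} (H : IsZeroGraph F W h δ) (hF : ContDiff ℝ 1 F)
    (hf : Measurable f) (hM : ∀ p, |f p| ≤ M) (hfW : tsupport f ⊆ W)
    (hcont : (y, h y) ∈ W → ContinuousAt f (y, h y)) :
    Tendsto (fun t ↦ t * ∫ z, f (y, z) * k (t * F (y, z))) atTop
      (𝓝 ((∫ s, k s) * (f (y, h y) / |fderiv ℝ F (y, h y) (0, 1)|))) := by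
  have hgrowth (z : ℝ) (hz : f (y, z) ≠ 0) : δ * |z - h y| ≤ |F (y, z)| :=
    H.le_abs _ (hfW (subset_tsupport f hz))
  have hslice : Continuous fun z : ℝ ↦ (y, z) := by fun_prop
  by_cases hy : (y, h y) ∈ tsupport f
  · refine hk.tendsto_mul_integral (by fun_prop) (hF.continuous.comp hslice).measurable
      (fun _ ↦ hM _) H.pos hgrowth ((hcont (hfW hy)).comp hslice.continuousAt)
      (H.apply_graph _ (hfW hy)) (H.fderiv_ne_zero _ (hfW hy)) ?_
    exact (hF.differentiable one_ne_zero _).hasFDerivAt.comp_hasDerivAt _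
      ((hasDerivAt_const _ y).prodMk (hasDerivAt_id _))
  · have hzero := notMem_tsupport_iff_eventuallyEq.1 hy
    rw [hzero.eq_of_nhds, Pi.zero_apply, zero_div, mul_zero]
    exact hk.tendsto_mul_integral_zero H.pos hgrowth (hslice.continuousAt.eventually hzero)

theorem IsZeroGraph.tendsto_mul_integral {k : ℝ → ℝ} (hk : IsConcentrationKernel k)
    {F f : ℝ × ℝ → ℝ} {W : Set (ℝ × ℝ)} {h : ℝ → ℝ} {δ M : ℝ} (H : IsZeroGraph F W h δ)
    (hF : ContDiff ℝ 1 F) (hf : Measurable f) (hM : ∀ p, |f p| ≤ M) (hfc : HasCompactSupport f)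
    (hfW : tsupport f ⊆ W) (hcont : ∀ᵐ y, (y, h y) ∈ W → ContinuousAt f (y, h y)) :
    Tendsto (fun t ↦ t * ∫ p, f p * k (t * F p)) atTop
      (𝓝 ((∫ s, k s) * ∫ y, f (y, h y) / |fderiv ℝ F (y, h y) (0, 1)|)) := by
  obtain ⟨C, hC⟩ := hk.bounded
  have hint (t : ℝ) : Integrable fun p ↦ f p * k (t * F p) :=
    hk.integrable_mul hf hM hfc (hF.continuous.const_mul t).measurable
  have hfubini (t : ℝ) :
      t * ∫ p, f p * k (t * F p) = ∫ y, t * ∫ z, f (y, z) * k (t * F (y, z)) := by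
    rw [Measure.volume_eq_prod, integral_prod _ (hint t), integral_const_mul]
  simp only [hfubini]
  rw [← integral_const_mul]
  obtain ⟨R, hR⟩ := (hfc.isCompact.image continuous_fst).isBounded.subset_closedBall 0
  refine tendsto_integral_filter_of_dominated_convergence ((Metric.closedBall 0 R).indicator
    fun _ ↦ ∫ σ, (Icc (-δ⁻¹) δ⁻¹).indicator (fun _ ↦ M * C) σ) (.of_forall fun t ↦ ?_) ?_ ?_ ?_
  · exact (hint t).aestronglyMeasurable.integral_prod_right'.const_mul t
  · filter_upwards [eventually_gt_atTop 0] with t ht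
    refine .of_forall fun y ↦ ?_
    by_cases hy : y ∈ Metric.closedBall 0 R
    · rw [indicator_of_mem hy]
      exact hk.norm_mul_integral_le (z := h y) hC (fun _ ↦ hM _) H.pos
        (fun z hz ↦ H.le_abs (y, z) (hfW (subset_tsupport f hz))) ht
    · have hzero (z : ℝ) : f (y, z) = 0 := image_eq_zero_of_notMem_tsupport fun hz ↦
        hy (hR (mem_image_of_mem Prod.fst hz))
      simp [hzero, hy]
  · exact (integrable_indicator_iff measurableSet_closedBall).2
      (integrableOn_const measure_closedBall_lt_top.ne)
  · filter_upwards [hcont] with y hy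
    exact H.tendsto_slice hk hF hf hM hfW hy

/-! ### The co-area limit -/

/-- The rescaled profiles `t k(tB)`, tested against `f`, converge to `∫ k` times the measure
`ds / |∇B|` on `{B = 0}`: the limiting form of the co-area formula at the zero level. -/
def HasCoareaLimit (k : ℝ → ℝ) (B f : E2 → ℝ) : Prop :=
  Tendsto (fun t ↦ t * ∫ x, f x * k (t * B x)) atTop
    (𝓝 ((∫ s, k s) * ∫ x in {x | B x = 0}, f x / ‖fderiv ℝ B x‖ ∂μH[1]))

/-- The weights against which the co-area limit is taken near a zero of `B`: bounded Borel functions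
compactly supported in `U` and continuous almost everywhere on `{B = 0}`. The last condition admits
the products of continuous functions with the indicator of a domain. -/
structure IsTestWeight (B : E2 → ℝ) (U : Set E2) (f : E2 → ℝ) : Prop where
  measurable : Measurable f
  bounded : ∃ M, ∀ x, |f x| ≤ M
  hasCompactSupport : HasCompactSupport f
  tsupport_subset : tsupport f ⊆ U
  ae_continuousAt : ∀ᵐ x ∂μH[1], B x = 0 → ContinuousAt f x

/-- The graph of `h` over the first axis of the frame `e`. -/
def graphCurve (e : OrthonormalBasis (Fin 2) ℝ E2) (h : ℝ → ℝ) (y : ℝ) : E2 := frame e (y, h y)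

section GraphCurve

variable {e : OrthonormalBasis (Fin 2) ℝ E2} {h : ℝ → ℝ} {y : ℝ}

lemma contDiff_graphCurve (hh : ContDiff ℝ 1 h) : ContDiff ℝ 1 (graphCurve e h) :=
  (frame e).contDiff.comp (contDiff_id.prodMk hh)

lemma deriv_graphCurve (hh : ContDiff ℝ 1 h) :
    deriv (graphCurve e h) y = frame e (1, deriv h y) :=
  ((frame e).hasFDerivAt.comp_hasDerivAt y
    ((hasDerivAt_id y).prodMk (hh.differentiable one_ne_zero y).hasDerivAt)).deriv

lemma deriv_graphCurve_ne_zero (hh : ContDiff ℝ 1 h) : deriv (graphCurve e h) y ≠ 0 := by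
  rw [deriv_graphCurve hh]
  exact (map_ne_zero_iff _ (frame e).injective).2 (by simp)

lemma antilipschitzWith_graphCurve : AntilipschitzWith 1 (graphCurve e h) := by
  refine AntilipschitzWith.of_le_mul_dist fun y z ↦ ?_
  have hcoord (y : ℝ) : inner ℝ (e 0) (graphCurve e h y) = y := by
    simp [graphCurve, frame_apply, inner_add_right, inner_smul_right]
  have hle := norm_inner_le_norm (𝕜 := ℝ) (e 0) (graphCurve e h y - graphCurve e h z)
  rwa [inner_sub_right, hcoord, hcoord, e.norm_eq_one, ← dist_eq_norm, ← dist_eq_norm] at hle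

lemma IsTestWeight.ae_comp_graphCurve {B f : E2 → ℝ} {U : Set E2} (hf : IsTestWeight B U f) :
    ∀ᵐ y, B (graphCurve e h y) = 0 → ContinuousAt f (graphCurve e h y) := by
  have hle := (antilipschitzWith_graphCurve (e := e) (h := h)).hausdorffMeasure_preimage_le
    zero_le_one {x | ¬ (B x = 0 → ContinuousAt f x)}
  have hnull : μH[1] {x | ¬ (B x = 0 → ContinuousAt f x)} = 0 := hf.ae_continuousAt
  rw [hnull, mul_zero, hausdorffMeasure_real] at hle
  exact nonpos_iff_eq_zero.1 hle

end GraphCurve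

namespace IsZeroGraph

variable {e : OrthonormalBasis (Fin 2) ℝ E2} {B f : E2 → ℝ} {k h : ℝ → ℝ} {W : Set (ℝ × ℝ)}
  {δ y : ℝ}

lemma eq_zero_iff_mem_range (H : IsZeroGraph (B ∘ frame e) W h δ) {x : E2}
    (hx : x ∈ frame e '' W) : B x = 0 ↔ x ∈ range (graphCurve e h) := by
  obtain ⟨p, hp, rfl⟩ := hx
  refine (H.eq_zero_iff hp).trans ⟨fun hgraph ↦ ⟨p.1, ?_⟩, ?_⟩
  · rw [graphCurve, ← hgraph]
  · rintro ⟨y, hy⟩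
    rw [← (frame e).injective hy]

lemma norm_deriv_graphCurve_mul (H : IsZeroGraph (B ∘ frame e) W h δ) (hB : ContDiff ℝ 1 B)
    (hy : (y, h y) ∈ W) : ‖deriv (graphCurve e h) y‖ *
      |fderiv ℝ (B ∘ frame e) (y, h y) (0, 1)| = ‖fderiv ℝ B (graphCurve e h y)‖ := by
  have htangent : fderiv ℝ B (graphCurve e h y) (deriv (graphCurve e h) y) = 0 := by
    have hzero : B ∘ graphCurve e h =ᶠ[𝓝 y] fun _ ↦ 0 := by
      have hcont := continuous_id.prodMk H.contDiff.continuous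
      filter_upwards [hcont.continuousAt.eventually (H.isOpen.mem_nhds hy)] with z hz
      exact H.apply_graph _ hz
    rw [← fderiv_comp_deriv y (hB.differentiable one_ne_zero _)
      ((contDiff_graphCurve H.contDiff).differentiable one_ne_zero y), hzero.deriv_eq, deriv_const]
  rw [deriv_graphCurve H.contDiff] at htangent ⊢
  rw [← norm_frame_mul_abs_eq_norm e _ htangent, (frame e).comp_right_fderiv]
  simp [frame_apply, graphCurve]

lemma setIntegral_div_norm_fderiv (H : IsZeroGraph (B ∘ frame e) W h δ) (hB : ContDiff ℝ 1 B)
    (hf : tsupport f ⊆ frame e '' W) :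
    ∫ x in {x | B x = 0}, f x / ‖fderiv ℝ B x‖ ∂μH[1] =
      ∫ y, f (graphCurve e h y) / |fderiv ℝ (B ∘ frame e) (y, h y) (0, 1)| := by
  have hγ := contDiff_graphCurve (e := e) H.contDiff
  have hinj : (graphCurve e h).Injective := antilipschitzWith_graphCurve.injective
  have hrange : MeasurableSet (range (graphCurve e h)) :=
    (hγ.continuous.measurableEmbedding hinj).measurableSet_range
  have hlevel : MeasurableSet {x | B x = 0} :=
    (isClosed_singleton.preimage hB.continuous).measurableSet
  calc ∫ x in {x | B x = 0}, f x / ‖fderiv ℝ B x‖ ∂μH[1]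
      = ∫ x in range (graphCurve e h), f x / ‖fderiv ℝ B x‖ ∂μH[1] := by
        rw [← integral_indicator hlevel, ← integral_indicator hrange]
        refine integral_congr_ae (.of_forall fun x ↦ ?_)
        by_cases hx : x ∈ frame e '' W
        · exact indicator_eq_indicator (H.eq_zero_iff_mem_range hx) rfl
        · simp [indicator, image_eq_zero_of_notMem_tsupport fun hfx ↦ hx (hf hfx)]
    _ = ∫ y, ‖deriv (graphCurve e h) y‖ •
          (f (graphCurve e h y) / ‖fderiv ℝ B (graphCurve e h y)‖) :=
        setIntegral_range_hausdorffMeasure hγ hinj _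
    _ = _ := by
        refine integral_congr_ae (.of_forall fun y ↦ ?_)
        by_cases hy : graphCurve e h y ∈ tsupport f
        · have hyW : (y, h y) ∈ W := (frame e).injective.mem_set_image.1 (hf hy)
          have hγ' : ‖deriv (graphCurve e h) y‖ ≠ 0 :=
            norm_ne_zero_iff.2 (deriv_graphCurve_ne_zero H.contDiff)
          have hB' := abs_ne_zero.2 (H.fderiv_ne_zero _ hyW)
          simp only [smul_eq_mul, ← H.norm_deriv_graphCurve_mul hB hyW]
          field_simp
        · simp [image_eq_zero_of_notMem_tsupport hy]

theorem hasCoareaLimit (H : IsZeroGraph (B ∘ frame e) W h δ) (hB : ContDiff ℝ 1 B)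
    (hk : IsConcentrationKernel k) (hf : IsTestWeight B (frame e '' W) f) :
    HasCoareaLimit k B f := by
  obtain ⟨M, hM⟩ := hf.bounded
  have hframe := measurePreserving_frame e
  have hsupp : tsupport (f ∘ frame e) ⊆ W :=
    (tsupport_comp_eq_preimage f (frame e).toHomeomorph).subset.trans
      ((preimage_mono hf.tsupport_subset).trans_eq (preimage_image_eq W (frame e).injective))
  have hcont : ∀ᵐ y, (y, h y) ∈ W → ContinuousAt (f ∘ frame e) (y, h y) := by
    filter_upwards [hf.ae_comp_graphCurve (e := e) (h := h)] with y hy hyW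
    exact ContinuousAt.comp (f := frame e) (hy (H.apply_graph _ hyW))
      (frame e).continuous.continuousAt
  have hlim := H.tendsto_mul_integral hk (hB.comp (frame e).contDiff)
    (hf.measurable.comp (frame e).continuous.measurable) (fun p ↦ hM _)
    (hf.hasCompactSupport.comp_homeomorph (frame e).toHomeomorph) hsupp hcont
  rw [HasCoareaLimit, H.setIntegral_div_norm_fderiv hB hf.tsupport_subset]
  refine hlim.congr fun t ↦ ?_
  rw [← hframe.integral_comp (frame e).toHomeomorph.measurableEmbedding]
  rfl

end IsZeroGraph

section Local

variable {B : E2 → ℝ} {k : ℝ → ℝ} {x₀ : E2}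

lemma exists_frame_isZeroGraph (hB : ContDiff ℝ 1 B) (hx : B x₀ = 0) (hd : fderiv ℝ B x₀ ≠ 0) :
    ∃ e W h δ, x₀ ∈ frame e '' W ∧ IsZeroGraph (B ∘ frame e) W h δ := by
  obtain ⟨e, he⟩ := exists_orthonormalBasis_apply_one_ne_zero hd
  obtain ⟨p, rfl⟩ := (frame e).surjective x₀
  obtain ⟨W, h, δ, hp, H⟩ := exists_isZeroGraph (hB.comp (frame e).contDiff) (p := p) hx (by
    rw [(frame e).comp_right_fderiv]
    simpa [frame_apply] using he)
  exact ⟨e, W, h, δ, mem_image_of_mem _ hp, H⟩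

lemma exists_isOpen_hasCoareaLimit (hB : ContDiff ℝ 1 B) (hk : IsConcentrationKernel k)
    (hx : B x₀ = 0 → fderiv ℝ B x₀ ≠ 0) :
    ∃ U, IsOpen U ∧ x₀ ∈ U ∧ ∀ f, IsTestWeight B U f → HasCoareaLimit k B f := by
  by_cases h0 : B x₀ = 0
  · obtain ⟨e, W, h, δ, hxW, H⟩ := exists_frame_isZeroGraph hB h0 (hx h0)
    exact ⟨frame e '' W, (frame e).isOpenMap _ H.isOpen, hxW, fun f ↦ H.hasCoareaLimit hB hk⟩
  set c := |B x₀| / 2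
  have hc : 0 < c := half_pos (abs_pos.2 h0)
  refine ⟨{x | c < |B x|}, isOpen_lt continuous_const hB.continuous.abs,
    half_lt_self (abs_pos.2 h0), fun f hf ↦ ?_⟩
  have hfar (x : E2) (hfx : f x ≠ 0) : c < |B x| := hf.tsupport_subset (subset_tsupport f hfx)
  have hright : ∫ x in {x | B x = 0}, f x / ‖fderiv ℝ B x‖ ∂μH[1] = 0 := by
    refine setIntegral_eq_zero_of_forall_eq_zero fun x hx ↦ ?_
    have hfx : f x = 0 := by
      by_contra hne
      exact hc.not_gt (by simpa [show B x = 0 from hx] using hfar x hne)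
    rw [hfx, zero_div]
  rw [HasCoareaLimit, hright, mul_zero]
  refine tendsto_const_nhds.congr' ?_
  filter_upwards [eventually_ge_atTop c⁻¹] with t ht
  have hzero (x : E2) : f x * k (t * B x) = 0 := by
    rw [mul_eq_zero, or_iff_not_imp_left]
    refine fun hfx ↦ hk.eq_zero _ ?_
    have ht0 : 0 < t := (inv_pos.2 hc).trans_le ht
    rw [abs_mul, abs_of_pos ht0]
    exact ((inv_le_iff_one_le_mul₀ hc).1 ht).trans
      (mul_le_mul_of_nonneg_left (hfar x hfx).le ht0.le)
  simp [hzero]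

lemma finiteAtFilter_hausdorffMeasure_zeros (hB : ContDiff ℝ 1 B) (hx : B x₀ = 0)
    (hd : fderiv ℝ B x₀ ≠ 0) :
    (μH[1] : Measure E2).FiniteAtFilter (𝓝[{x | B x = 0}] x₀) := by
  obtain ⟨e, W, h, δ, ⟨p, hp, rfl⟩, H⟩ := exists_frame_isZeroGraph hB hx hd
  have hstrict := (contDiff_graphCurve (e := e) H.contDiff).hasStrictDerivAt (x := p.1) one_ne_zero
  obtain ⟨s, hs, hle, hfin⟩ := ((eventually_hausdorffMeasure_image_le hstrict
    (lt_add_one _)).and (volume.finiteAt_nhds p.1).eventually).exists_mem_of_smallSets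
  refine ⟨graphCurve e h '' s, ?_, hle.trans_lt (ENNReal.mul_lt_top ENNReal.coe_lt_top hfin)⟩
  have hV : frame e '' (W ∩ Prod.fst ⁻¹' s) ∈ 𝓝 (frame e p) :=
    (frame e).isOpenMap.image_mem_nhds
      (inter_mem (H.isOpen.mem_nhds hp) (continuousAt_fst.preimage_mem_nhds hs))
  filter_upwards [self_mem_nhdsWithin, mem_nhdsWithin_of_mem_nhds hV]
  rintro _ hq ⟨q, ⟨hqW, hqs⟩, rfl⟩
  refine ⟨q.1, hqs, ?_⟩
  rw [graphCurve, ← (H.eq_zero_iff hqW).1 hq]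

end Local

section Global

variable {B : E2 → ℝ} {K : Set E2}

lemma hausdorffMeasure_zeros_lt_top (hK : IsCompact K) (hB : ContDiff ℝ 1 B)
    (hd : ∀ x ∈ K, B x = 0 → fderiv ℝ B x ≠ 0) : μH[1] {x ∈ K | B x = 0} < ⊤ := by
  have hcompact : IsCompact {x ∈ K | B x = 0} :=
    hK.inter_right (isClosed_singleton.preimage hB.continuous)
  exact hcompact.measure_lt_top_of_nhdsWithin fun x hx ↦
    (finiteAtFilter_hausdorffMeasure_zeros hB hx.2 (hd x hx.1 hx.2)).filter_mono
      (nhdsWithin_mono _ fun y hy ↦ hy.2)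

lemma volume_eq_zero_of_hausdorffMeasure_lt_top {s : Set E2} (hs : μH[1] s < ⊤) :
    volume s = 0 := by
  have hdim : (Module.finrank ℝ E2 : ℝ) = 2 := by simp
  have := isAddHaarMeasure_hausdorffMeasure (E := E2)
  rw [hdim] at this
  exact Measure.absolutelyContinuous_isAddHaarMeasure volume μH[2]
    ((Measure.hausdorffMeasure_zero_or_top one_lt_two s).resolve_right hs.ne)

end Global

section Domain

variable {B f : E2 → ℝ} {k : ℝ → ℝ} {Ω U : Set E2} {M : ℝ}

lemma isTestWeight_indicator (hΩo : IsOpen Ω) (hΩb : Bornology.IsBounded Ω)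
    (hbdry : μH[1] ({x | B x = 0} ∩ frontier Ω) = 0) (hf : Continuous f) (hM : ∀ x, |f x| ≤ M)
    (hfU : tsupport f ⊆ U) : IsTestWeight B U (Ω.indicator f) where
  measurable := hf.measurable.indicator hΩo.measurableSet
  bounded := ⟨M, fun x ↦ (norm_indicator_le_norm_self f x).trans (hM x)⟩
  hasCompactSupport := .intro hΩb.isCompact_closure fun _ hx ↦
    indicator_of_notMem (fun hxΩ ↦ hx (subset_closure hxΩ)) f
  tsupport_subset :=
    (closure_mono (support_indicator.subset.trans inter_subset_right)).trans hfU
  ae_continuousAt := by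
    filter_upwards [measure_eq_zero_iff_ae_notMem.1 hbdry] with x hx hBx
    exact hf.continuousOn.continuousAt_indicator fun hxΩ ↦ hx ⟨hBx, hxΩ⟩

lemma integrableOn_zeros_div_norm_fderiv (hB : ContDiff ℝ 1 B) (hf : Measurable f)
    (hM : ∀ x, |f x| ≤ M) (hfc : HasCompactSupport f)
    (hd : ∀ x ∈ tsupport f, B x = 0 → fderiv ℝ B x ≠ 0) :
    IntegrableOn (fun x ↦ f x / ‖fderiv ℝ B x‖) {x | B x = 0} μH[1] := by
  have hgrad : Continuous fun x ↦ ‖fderiv ℝ B x‖ := (hB.continuous_fderiv one_ne_zero).norm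
  have hcompact : IsCompact {x ∈ tsupport f | B x = 0} :=
    hfc.isCompact.inter_right (isClosed_singleton.preimage hB.continuous)
  obtain ⟨c, hc, hle⟩ := hcompact.exists_forall_le' (a := 0) hgrad.continuousOn
    fun x hx ↦ norm_pos_iff.2 (hd x hx.1 hx.2)
  have hint : IntegrableOn (fun x ↦ f x / ‖fderiv ℝ B x‖) {x ∈ tsupport f | B x = 0} μH[1] := by
    refine Measure.integrableOn_of_bounded (M := M / c)
      (hausdorffMeasure_zeros_lt_top hfc.isCompact hB hd).ne
      (hf.div hgrad.measurable).aestronglyMeasurable ?_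
    filter_upwards [ae_restrict_mem hcompact.measurableSet] with x hx
    rw [norm_div, norm_norm]
    exact div_le_div₀ ((abs_nonneg _).trans (hM x)) (hM x) hc (hle x hx)
  refine hint.of_forall_sdiff_eq_zero (isClosed_singleton.preimage hB.continuous).measurableSet ?_
  rintro x ⟨hBx, hx⟩
  rw [image_eq_zero_of_notMem_tsupport fun hfx ↦ hx ⟨hfx, hBx⟩, zero_div]

lemma HasCoareaLimit.sum {ι : Type*} {s : Finset ι} {f : ι → E2 → ℝ}
    (h : ∀ i ∈ s, HasCoareaLimit k B (f i))
    (hbulk : ∀ i ∈ s, ∀ t, Integrable fun x ↦ f i x * k (t * B x))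
    (hline : ∀ i ∈ s, IntegrableOn (fun x ↦ f i x / ‖fderiv ℝ B x‖) {x | B x = 0} μH[1]) :
    HasCoareaLimit k B fun x ↦ ∑ i ∈ s, f i x := by
  have hsum := tendsto_finsetSum s h
  rw [← Finset.mul_sum, ← integral_finsetSum s hline] at hsum
  simp only [← Finset.mul_sum, ← Finset.sum_div] at hsum
  refine hsum.congr fun t ↦ ?_
  rw [← integral_finsetSum s fun i hi ↦ hbulk i hi t]
  simp only [Finset.sum_mul]

theorem hasCoareaLimit_indicator (hk : IsConcentrationKernel k) (hΩo : IsOpen Ω)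
    (hΩb : Bornology.IsBounded Ω) (hB : ContDiff ℝ 1 B)
    (hd : ∀ x ∈ closure Ω, B x = 0 → fderiv ℝ B x ≠ 0)
    (hbdry : μH[1] ({x | B x = 0} ∩ frontier Ω) = 0) : HasCoareaLimit k B (Ω.indicator 1) := by
  choose! U hUo hxU hU using fun x hx ↦ exists_isOpen_hasCoareaLimit hB hk (hd x hx)
  obtain ⟨s, hs, hcover⟩ := hΩb.isCompact_closure.elim_nhds_subcover U
    fun x hx ↦ (hUo x hx).mem_nhds (hxU x hx)
  obtain ⟨ρ, hρ⟩ := PartitionOfUnity.exists_isSubordinate isClosed_closure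
    (fun i : s ↦ U i) (fun i ↦ hUo i (hs i i.2)) (by simpa [iUnion_subtype] using hcover)
  have hweight (i : s) : IsTestWeight B (U i) (Ω.indicator (ρ i)) :=
    isTestWeight_indicator (M := 1) hΩo hΩb hbdry (ρ i).continuous
      (fun x ↦ (abs_of_nonneg (ρ.nonneg i x)).trans_le (ρ.le_one i x)) (hρ i)
  have hsum : (fun x ↦ ∑ i, Ω.indicator (ρ i) x) = Ω.indicator 1 := by
    rw [← Finset.sum_fn, ← Finset.indicator_sum]
    refine indicator_congr fun x hx ↦ ?_
    rw [Finset.sum_apply, ← finsum_eq_sum_of_fintype, ρ.sum_eq_one (subset_closure hx),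
      Pi.one_apply]
  rw [← hsum]
  refine HasCoareaLimit.sum (fun i _ ↦ hU i (hs i i.2) _ (hweight i)) (fun i _ t ↦ ?_) fun i _ ↦ ?_
  · obtain ⟨M, hM⟩ := (hweight i).bounded
    exact hk.integrable_mul (hweight i).measurable hM (hweight i).hasCompactSupport
      (hB.continuous.const_mul t).measurable
  · obtain ⟨M, hM⟩ := (hweight i).bounded
    exact integrableOn_zeros_div_norm_fderiv hB (hweight i).measurable hM
      (hweight i).hasCompactSupport fun x hx ↦
        hd x (closure_mono (support_indicator.subset.trans inter_subset_left) hx)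

/-! ### Bulk and line energies -/

lemma isConcentrationKernel_extendedDensity_abs {g : ℝ → ℝ} (hg : IsLimitG g) :
    IsConcentrationKernel fun s ↦ extendedDensity g |s| where
  measurable := (measurable_extendedDensity hg).comp measurable_norm
  bounded := ⟨1 / 2, fun _ ↦ abs_extendedDensity_le hg _⟩
  eq_zero _ hs := extendedDensity_of_one_le hg hs
  ae_continuousAt := by
    filter_upwards [(countable_not_continuousAt_abs (extendedDensity_mono hg)).ae_notMem volume]
      with s hs
    exact ContinuousAt.comp (not_not.1 hs) continuous_abs.continuousAt

theorem IsLimitG.tendsto_mul_setIntegral {g : ℝ → ℝ} (hg : IsLimitG g) (hΩo : IsOpen Ω)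
    (hΩb : Bornology.IsBounded Ω) (hB : ContDiff ℝ 1 B)
    (hd : ∀ x ∈ closure Ω, B x = 0 → fderiv ℝ B x ≠ 0)
    (hbdry : μH[1] ({x | B x = 0} ∩ frontier Ω) = 0) :
    Tendsto (fun t ↦ t * ∫ x in Ω, g (t * |B x|)) atTop
      (𝓝 (lineDensity g * ∫ x in {x ∈ closure Ω | B x = 0}, ‖fderiv ℝ B x‖⁻¹ ∂μH[1])) := by
  have hfin := hausdorffMeasure_zeros_lt_top hΩb.isCompact_closure hB hd
  have hline : ∫ x in {x | B x = 0}, Ω.indicator 1 x / ‖fderiv ℝ B x‖ ∂μH[1] =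
      ∫ x in {x ∈ closure Ω | B x = 0}, ‖fderiv ℝ B x‖⁻¹ ∂μH[1] := by
    have hindicator : (fun x ↦ Ω.indicator 1 x / ‖fderiv ℝ B x‖) =
        Ω.indicator fun x ↦ ‖fderiv ℝ B x‖⁻¹ := by
      ext x
      by_cases hx : x ∈ Ω <;> simp [hx]
    rw [hindicator, setIntegral_indicator hΩo.measurableSet]
    refine setIntegral_congr_set ?_
    filter_upwards [measure_eq_zero_iff_ae_notMem.1 hbdry] with x hx
    refine propext ⟨fun h ↦ ⟨subset_closure h.2, h.1⟩, fun h ↦ ⟨h.2, ?_⟩⟩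
    by_contra hxΩ
    exact hx ⟨h.2, hΩo.frontier_eq ▸ ⟨h.1, hxΩ⟩⟩
  have hlim := hasCoareaLimit_indicator (isConcentrationKernel_extendedDensity_abs hg) hΩo hΩb hB
    hd hbdry
  rw [HasCoareaLimit, hline] at hlim
  refine hlim.congr' ?_
  filter_upwards [eventually_gt_atTop 0] with t ht
  rw [← integral_indicator hΩo.measurableSet]
  congr 1
  refine integral_congr_ae ?_
  filter_upwards [measure_eq_zero_iff_ae_notMem.1 (volume_eq_zero_of_hausdorffMeasure_lt_top hfin)]
    with x hx
  by_cases hxΩ : x ∈ Ω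
  · have hBx : B x ≠ 0 := fun h0 ↦ hx ⟨subset_closure hxΩ, h0⟩
    simp only [indicator_of_mem hxΩ, Pi.one_apply, one_mul]
    rw [extendedDensity_of_pos (abs_pos.2 (mul_ne_zero ht.ne' hBx)), abs_mul, abs_of_pos ht]
  · simp [hxΩ]

end Domain

lemma mul_rpow_one_third_mul (E : ℝ → ℝ) {β m : ℝ} (hβ : 0 < β) (hm : 0 < m) :
    β * ((β * m) ^ ((1 : ℝ) / 3) * E (β * m)) = ((β * m) ^ ((4 : ℝ) / 3) * E (β * m)) / m := by
  rw [show (4 : ℝ) / 3 = 1 / 3 + 1 by norm_num, Real.rpow_add_one (mul_pos hβ hm).ne']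
  field_simp

theorem IsLimitE.tendsto_mul_integral {X : Type*} [MeasurableSpace X] {μ : Measure X}
    [IsFiniteMeasure μ] {g E : ℝ → ℝ} (hE : IsLimitE E) (hg : IsLimitG g) {m : X → ℝ} {c C : ℝ}
    (hm : AEMeasurable m μ) (hc : 0 < c) (hmem : ∀ᵐ x ∂μ, m x ∈ Icc c C) :
    Tendsto (fun β ↦ β * ∫ x, (β * m x) ^ ((1 : ℝ) / 3) * E (β * m x) ∂μ) (𝓝[>] 0)
      (𝓝 (lineDensity g * ∫ x, (m x)⁻¹ ∂μ)) := by
  have hlim := hE.tendsto_rpow_mul hg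
  obtain ⟨δ, hδ : 0 < δ, hle⟩ := mem_nhdsGT_iff_exists_Ioo_subset.1
    (hlim.abs.eventually (eventually_le_nhds (lt_add_one |lineDensity g|)))
  simp only [← integral_const_mul]
  refine tendsto_integral_filter_of_dominated_convergence (fun _ ↦ (|lineDensity g| + 1) / c)
    ?_ ?_ (integrable_const _) ?_
  · filter_upwards [self_mem_nhdsWithin] with β (hβ : 0 < β)
    have hβm := hm.const_mul β
    have hpos : ∀ᵐ L ∂μ.map (fun x ↦ β * m x), 0 < L :=
      (ae_map_iff hβm measurableSet_Ioi).2
        (hmem.mono fun x hx ↦ mul_pos hβ (hc.trans_le hx.1))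
    exact (((hβm.pow_const _).mul ((hE.aemeasurable hg hpos).comp_aemeasurable hβm)).const_mul
      β).aestronglyMeasurable
  · filter_upwards [self_mem_nhdsWithin, Ioo_mem_nhdsGT (div_pos hδ (lt_max_of_lt_left hc))] with β
      (hβ : 0 < β) hβδ
    filter_upwards [hmem] with x hx
    have hmx : 0 < m x := hc.trans_le hx.1
    have hβmx : β * m x < δ := (mul_le_mul_of_nonneg_left (hx.2.trans (le_max_right c C))
      hβ.le).trans_lt ((lt_div_iff₀ (lt_max_of_lt_left hc)).1 hβδ.2)
    rw [mul_rpow_one_third_mul E hβ hmx, norm_div, Real.norm_of_nonneg hmx.le]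
    exact div_le_div₀ (by positivity) (hle ⟨mul_pos hβ hmx, hβmx⟩) hc hx.1
  · filter_upwards [hmem] with x hx
    have hmx : 0 < m x := hc.trans_le hx.1
    have hβm : Tendsto (fun β ↦ β * m x) (𝓝[>] 0) (𝓝[>] 0) :=
      tendsto_nhdsWithin_iff.2 ⟨tendsto_nhdsWithin_of_tendsto_nhds
        (by simpa using (tendsto_id (x := 𝓝 (0 : ℝ))).mul_const (m x)),
        eventually_nhdsWithin_of_forall fun β hβ ↦ mul_pos hβ hmx⟩
    rw [← div_eq_mul_inv]
    refine ((hlim.comp hβm).div_const (m x)).congr' ?_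
    filter_upwards [self_mem_nhdsWithin] with β (hβ : 0 < β)
    exact (mul_rpow_one_third_mul E hβ hmx).symm

theorem IsLimitE.tendsto_mul_setIntegral_zeros {g E : ℝ → ℝ} (hE : IsLimitE E) (hg : IsLimitG g)
    {B : E2 → ℝ} {K : Set E2} (hK : IsCompact K) (hB : ContDiff ℝ 1 B)
    (hd : ∀ x ∈ K, B x = 0 → fderiv ℝ B x ≠ 0) :
    Tendsto (fun β ↦ β * ∫ x in {x ∈ K | B x = 0}, (β * ‖fderiv ℝ B x‖) ^ ((1 : ℝ) / 3) *
      E (β * ‖fderiv ℝ B x‖) ∂μH[1]) (𝓝[>] 0)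
      (𝓝 (lineDensity g * ∫ x in {x ∈ K | B x = 0}, ‖fderiv ℝ B x‖⁻¹ ∂μH[1])) := by
  have hgrad : Continuous fun x ↦ ‖fderiv ℝ B x‖ := (hB.continuous_fderiv one_ne_zero).norm
  have hcompact : IsCompact {x ∈ K | B x = 0} :=
    hK.inter_right (isClosed_singleton.preimage hB.continuous)
  have : IsFiniteMeasure ((μH[1] : Measure E2).restrict {x ∈ K | B x = 0}) :=
    isFiniteMeasure_restrict.2 (hausdorffMeasure_zeros_lt_top hK hB hd).ne
  obtain ⟨c, hc, hle⟩ := hcompact.exists_forall_le' (a := 0) hgrad.continuousOn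
    fun x hx ↦ norm_pos_iff.2 (hd x hx.1 hx.2)
  obtain ⟨C, hC⟩ := hcompact.bddAbove_image hgrad.continuousOn
  refine hE.tendsto_mul_integral hg hgrad.measurable.aemeasurable hc (C := C) ?_
  filter_upwards [ae_restrict_mem hcompact.measurableSet] with x hx
  exact ⟨hle x hx, hC (mem_image_of_mem _ hx)⟩

namespace VanishingFieldAssumption

variable {Ω Γ : Set E2} {B₀ : E2 → ℝ}

lemma fderiv_ne_zero (h : VanishingFieldAssumption Ω B₀ Γ) :
    ∀ x ∈ closure Ω, B₀ x = 0 → fderiv ℝ B₀ x ≠ 0 := by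
  intro x hx hB hd
  obtain ⟨c, hc, hle⟩ := h.nondeg
  have hcx := hle x hx
  rw [hB, hd, abs_zero, norm_zero, add_zero] at hcx
  exact hc.not_ge hcx

lemma hausdorffMeasure_zeros_inter_frontier (h : VanishingFieldAssumption Ω B₀ Γ) :
    μH[1] ({x | B₀ x = 0} ∩ frontier Ω) = 0 := by
  have := Measure.nullSingletonClass_hausdorff E2 (d := 1) one_pos
  refine measure_mono_null (fun x hx ↦ ?_) (h.finiteBoundary.measure_zero μH[1])
  exact ⟨h.zeroSet ▸ ⟨frontier_subset_closure hx.2, hx.1⟩, hx.2⟩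

end VanishingFieldAssumption

theorem bulk_energy_eq_line_energy_general {Ω : Set E2} (hΩo : IsOpen Ω)
    (hΩb : Bornology.IsBounded Ω) {B₀ : E2 → ℝ} (hB : ContDiff ℝ 1 B₀)
    (hd : ∀ x ∈ closure Ω, B₀ x = 0 → fderiv ℝ B₀ x ≠ 0)
    (hbdry : μH[1] ({x | B₀ x = 0} ∩ frontier Ω) = 0) {b : ℝ → ℝ}
    (hbpos : ∀ᶠ κ in atTop, 0 < b κ) (hbκ : Tendsto (fun κ ↦ κ * b κ) atTop atTop)
    (hb0 : Tendsto b atTop (𝓝 0)) {g E : ℝ → ℝ} (hg : IsLimitG g) (hE : IsLimitE E) :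
    Tendsto (fun κ ↦ (b κ * κ) * ((∫ x in Ω, g (b κ * κ * |B₀ x|)) -
      κ⁻¹ * ∫ x in {x ∈ closure Ω | B₀ x = 0}, (b κ * ‖fderiv ℝ B₀ x‖) ^ ((1 : ℝ) / 3) *
        E (b κ * ‖fderiv ℝ B₀ x‖) ∂μH[1])) atTop (𝓝 0) := by
  have hκ : Tendsto (fun κ ↦ b κ * κ) atTop atTop := by simpa only [mul_comm] using hbκ
  have hbulk := (hg.tendsto_mul_setIntegral hΩo hΩb hB hd hbdry).comp hκ
  have hline := (hE.tendsto_mul_setIntegral_zeros hg hΩb.isCompact_closure hB hd).comp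
    (tendsto_nhdsWithin_iff.2 ⟨hb0, hbpos⟩)
  have hdiff := hbulk.sub hline
  rw [sub_self] at hdiff
  refine hdiff.congr' ?_
  filter_upwards [eventually_ne_atTop 0] with κ hκ₀
  rw [Function.comp_apply, Function.comp_apply, mul_sub, ← mul_assoc _ κ⁻¹,
    mul_inv_cancel_right₀ hκ₀]

/-- Comparison of the bulk and line energies via the co-area formula:
`∫_Ω g(b(κ)κ|B₀|) dx = κ⁻¹ ∫_Γ (b(κ)|∇B₀|)^{1/3} E(b(κ)|∇B₀|) ds + o(b(κ)⁻¹κ⁻¹)`. -/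
theorem bulk_energy_eq_line_energy
    (Ω : Set E2) (hΩo : IsOpen Ω) (hΩb : Bornology.IsBounded Ω) (hΩne : Ω.Nonempty)
    (hΩsc : SimplyConnectedSpace Ω)
    (B₀ : E2 → ℝ) (Γ : Set E2) (hB₀ : VanishingFieldAssumption Ω B₀ Γ)
    (b : ℝ → ℝ) (hbpos : ∀ κ > 0, 0 < b κ)
    (hbκ : Tendsto (fun κ => κ * b κ) atTop atTop)
    (hb0 : Tendsto b atTop (nhds 0))
    (g E : ℝ → ℝ) (hg : IsLimitG g) (hE : IsLimitE E) :
    Tendsto (fun κ => (b κ * κ) *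
        ((∫ x in Ω, g (b κ * κ * |B₀ x|)) -
          κ⁻¹ * ∫ x in Γ, (b κ * ‖fderiv ℝ B₀ x‖) ^ ((1:ℝ)/3) *
            E (b κ * ‖fderiv ℝ B₀ x‖) ∂μH[1]))
      atTop (nhds 0) := by
  rw [hB₀.zeroSet]
  exact bulk_energy_eq_line_energy_general hΩo hΩb (hB₀.smooth.of_le (by simp))
    hB₀.fderiv_ne_zero hB₀.hausdorffMeasure_zeros_inter_frontier
    ((eventually_gt_atTop 0).mono hbpos) hbκ hb0 hg hE

end
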